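/- arXiv:2003.08083 — 3 statements merged into one kernel-verified Lean document; each statement's English description precedes it below -/
import Mathlib

section
/- For every integer n ≥ 3, one has ∑_{p ≤ n, p ≡ n (mod 3)} μ²(n−p)·log p ≤ θ(n;3,n) − θ(n;9,n) − θ(n;12,n) − θ(n;75,n) + θ(n;36,n) + θ(n;225,n) + θ(n;300,n) − θ(n;900,n), where the left-hand sum runs over primes p ≤ n with p ≡ n (mod 3). -/
open Finset

/-- The Chebyshev theta function for the arithmetic progression `a mod q`:
`θ(x; q, a) = ∑_{p ≤ x, p ≡ a (mod q)} log p`, the sum running over primes. -/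
noncomputable def chebyshevThetaAP (x : ℝ) (q a : ℕ) : ℝ :=
  ∑ p ∈ (Finset.range (⌊x⌋₊ + 1)).filter (fun p => p.Prime ∧ p % q = a % q),
    Real.log p

/-!
If `n - p` is square-free, then none of `2²`, `3²`, `5²` divides it, so the left-hand sum is at most
the sum of `log p` over the primes `p ≡ n (mod 3)` for which none of these squares divides `n - p`.
Inclusion–exclusion evaluates the latter sum: each `T ⊆ {2, 3, 5}` contributes, with sign
`(-1) ^ #T`, the theta function to the modulus `lcm(3, lcm {t² | t ∈ T})`.
-/

theorem sum_filter_forall_not_eq_sum_powerset {α ι G : Type*} [AddCommGroup G] (A : Finset α)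
    (s : Finset ι) (P : ι → α → Prop) [∀ i, DecidablePred (P i)] (f : α → G) :
    ∑ a ∈ A with ∀ i ∈ s, ¬ P i a, f a =
      ∑ t ∈ s.powerset, (-1 : ℤ) ^ #t • ∑ a ∈ A with ∀ i ∈ t, P i a, f a := by
  classical
  have sum_filter_eq_sum_subtype (Q : α → Prop) [DecidablePred Q] :
      ∑ a ∈ A with Q a, f a = ∑ a ∈ univ.filter fun a : A ↦ Q a, f a := by
    rw [sum_filter, sum_filter, ← sum_coe_sort]
  have inf_compl_eq : (s.inf fun i ↦ (univ.filter fun a : A ↦ P i a)ᶜ) =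
      univ.filter fun a : A ↦ ∀ i ∈ s, ¬ P i a := by
    ext a
    simp [mem_inf]
  have inf_eq (t : Finset ι) : (t.inf fun i ↦ univ.filter fun a : A ↦ P i a) =
      univ.filter fun a : A ↦ ∀ i ∈ t, P i a := by
    ext a
    simp [mem_inf]
  simpa only [sum_filter_eq_sum_subtype, inf_compl_eq, inf_eq] using
    inclusion_exclusion_sum_inf_compl s (fun i ↦ univ.filter fun a : A ↦ P i a) fun a ↦ f a

theorem sum_filter_dvd_forall_not_dvd {α ι M G : Type*} [CommMonoidWithZero M]
    [NormalizedGCDMonoid M] [DecidableRel ((· ∣ ·) : M → M → Prop)] [AddCommGroup G]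
    (A : Finset α) (s : Finset ι) (q : M) (d : ι → M) (g : α → M) (f : α → G) :
    ∑ a ∈ A with q ∣ g a ∧ ∀ i ∈ s, ¬ d i ∣ g a, f a =
      ∑ t ∈ s.powerset, (-1 : ℤ) ^ #t • ∑ a ∈ A with lcm q (t.lcm d) ∣ g a, f a := by
  simp only [← filter_filter, sum_filter_forall_not_eq_sum_powerset, _root_.lcm_dvd_iff,
    Finset.lcm_dvd_iff]

theorem filter_prime_and_mod_eq_filter_dvd (n q : ℕ) :
    (range (n + 1)).filter (fun p ↦ p.Prime ∧ p % q = n % q) =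
      (n + 1).primesBelow.filter fun p ↦ q ∣ n - p := by
  rw [← filter_filter]
  refine filter_congr fun p hp ↦ Nat.modEq_iff_dvd' ?_
  exact Nat.lt_succ_iff.1 (Nat.lt_of_mem_primesBelow hp)

theorem chebyshevThetaAP_self (n q : ℕ) :
    chebyshevThetaAP n q n = ∑ p ∈ (n + 1).primesBelow with q ∣ n - p, Real.log p := by
  rw [chebyshevThetaAP, Nat.floor_natCast, filter_prime_and_mod_eq_filter_dvd]

theorem sum_squarefree_log_le_theta_combination_general (n q : ℕ) {S : Finset ℕ} (hS : 1 ∉ S) :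
    ∑ p ∈ (range (n + 1)).filter (fun p ↦ p.Prime ∧ p % q = n % q),
        (if Squarefree (n - p) then Real.log p else 0) ≤
      ∑ T ∈ S.powerset, (-1 : ℤ) ^ #T • chebyshevThetaAP n (lcm q (T.lcm (· ^ 2))) n := by
  have not_sq_dvd {m d : ℕ} (hm : Squarefree m) (hd : d ∈ S) : ¬ d ^ 2 ∣ m :=
    fun h ↦ hS (Nat.isUnit_iff.1 (hm d (sq d ▸ h)) ▸ hd)
  calc
    _ = ∑ p ∈ (n + 1).primesBelow with q ∣ n - p ∧ Squarefree (n - p), Real.log p := by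
      rw [filter_prime_and_mod_eq_filter_dvd, ← sum_filter, filter_filter]
    _ ≤ ∑ p ∈ (n + 1).primesBelow with q ∣ n - p ∧ ∀ d ∈ S, ¬ d ^ 2 ∣ n - p, Real.log p :=
      sum_le_sum_of_subset_of_nonneg
        (monotone_filter_right _ fun _ _ hp ↦ ⟨hp.1, fun _ ↦ not_sq_dvd hp.2⟩)
        fun p _ _ ↦ Real.log_natCast_nonneg p
    _ = _ := by simp only [sum_filter_dvd_forall_not_dvd, chebyshevThetaAP_self]

theorem sum_powerset_two_three_five_lcm_three_sq {G : Type*} [AddCommGroup G] (F : ℕ → G) :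
    ∑ T ∈ ({2, 3, 5} : Finset ℕ).powerset, (-1 : ℤ) ^ #T • F (lcm 3 (T.lcm (· ^ 2))) =
      F 3 - F 9 - F 12 - F 75 + F 36 + F 225 + F 300 - F 900 := by
  have powerset_eq : ({2, 3, 5} : Finset ℕ).powerset =
      {∅, {3}, {2}, {5}, {2, 3}, {3, 5}, {2, 5}, {2, 3, 5}} := by decide
  simp +decide only [powerset_eq, sum_insert, sum_singleton, mem_insert, mem_singleton,
    not_false_eq_true, card_empty, card_singleton, card_insert_of_notMem, lcm_empty, lcm_singleton,
    lcm_insert, lcm_eq_nat_lcm, normalize_eq, Nat.lcm, Nat.reducePow, Nat.reduceMul, Nat.reduceGcd,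
    Nat.reduceDiv]
  module

/-- For `n ≥ 3`, `∑_{p ≤ n, p ≡ n (3)} μ²(n−p) log p ≤ θ(n;3,n) − θ(n;9,n) − θ(n;12,n)
− θ(n;75,n) + θ(n;36,n) + θ(n;225,n) + θ(n;300,n) − θ(n;900,n)`. -/
theorem sum_squarefree_log_le_theta_combination (n : ℕ) (hn : 3 ≤ n) :
    ∑ p ∈ (Finset.range (n + 1)).filter (fun p => p.Prime ∧ p % 3 = n % 3),
        (if Squarefree (n - p) then Real.log p else 0) ≤
      chebyshevThetaAP n 3 n - chebyshevThetaAP n 9 n - chebyshevThetaAP n 12 n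
        - chebyshevThetaAP n 75 n + chebyshevThetaAP n 36 n + chebyshevThetaAP n 225 n
        + chebyshevThetaAP n 300 n - chebyshevThetaAP n 900 n := by
  exact (sum_squarefree_log_le_theta_combination_general n 3 (S := {2, 3, 5}) (by decide)).trans_eq
    (sum_powerset_two_three_five_lcm_three_sq fun q ↦ chebyshevThetaAP n q n)
end

section
/- For every real A with 0 < A < 1/2, every integer n ≥ 2, and every integer a with 316 < a ≤ n^A and gcd(a, n) = 1, one has |θ(n; a², n) − n/φ(a²)| ≤ ((1+2A)/(1−2A)) · n/φ(a²). -/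
open Finset

/-!
Since `θ(x; q, a) ≥ 0`, only an upper bound is needed, and it follows from the Brun–Titchmarsh
inequality `π(x; q, a) ≤ 2 x / (φ(q) log (x / q))`: if `q ≤ x ^ B`, it gives
`θ(x; q, a) ≤ (2 / (1 - B)) x / φ(q)`, and `2 / (1 - B) - 1 = (1 + B) / (1 - B)`.

The Brun–Titchmarsh inequality comes from Selberg's sieve. To reach the constant `2` without an
error term, the primes `2` and `3` are first removed by splitting the progression modulo `q` into
residue classes modulo `lcm 6 q`. Put `N = x / q`, and let `S` and `H` be the sums of `1 / φ(m)` and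
`σ(m) / φ(m)` over the squarefree `m ≤ D` coprime to `6`. A sieve of level `D` bounds each class by
a main term proportional to `N / (6 S)` plus `(H / S) ^ 2`. For `D = 6 j - 1` one has
`S ≥ (3.6 + log j) / 3` and `H ≤ 3.56 j`; taking `j` close to `√N / 20`, the constant `3.6` gains
more over `N / log N` than all error terms cost. For small `N` the levels `1`, `5` and `23` suffice.
-/

open UniqueFactorizationMonoid
open scoped ArithmeticFunction.Moebius ArithmeticFunction.sigma

/-! ### The Selberg sieve in an arithmetic progression -/

theorem totient_eq_mul_prod_primeFactors (n : ℕ) :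
    (n.totient : ℝ) = n * ∏ p ∈ n.primeFactors, (1 - (p : ℝ)⁻¹) := by
  have h := congrArg (Rat.cast : ℚ → ℝ) (Nat.totient_eq_mul_prod_factors n)
  push_cast at h
  exact h

theorem abs_card_Ioc_filter_modEq_sub_le {x : ℝ} (hx : 0 ≤ x) {m : ℕ} (hm : 0 < m) (v : ℕ) :
    |(#{k ∈ Ioc 0 ⌊x⌋₊ | k ≡ v [MOD m]} : ℝ) - x / m| ≤ 1 := by
  have hfloor : ⌊(((⌊x⌋₊ : ℕ) : ℚ) - v) / m⌋ = ⌊(x - v) / m⌋ := by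
    rw [Int.floor_div_natCast, Int.floor_div_natCast, Int.floor_sub_natCast, Int.floor_sub_natCast,
      Int.floor_natCast, Int.natCast_floor_eq_floor hx]
  have hfloor0 : ⌊(((0 : ℕ) : ℚ) - v) / m⌋ = ⌊(0 - v : ℝ) / m⌋ := by
    rw [Int.floor_div_natCast, Int.floor_div_natCast, Int.floor_sub_natCast, Int.floor_sub_natCast]
    simp
  have hcard : ((#{k ∈ Ioc 0 ⌊x⌋₊ | k ≡ v [MOD m]} : ℤ) : ℝ) =
      ⌊(x - v) / m⌋ - ⌊(0 - v : ℝ) / m⌋ := by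
    rw [Nat.Ioc_filter_modEq_card _ _ hm, hfloor, hfloor0, max_eq_left, Int.cast_sub]
    exact sub_nonneg.2 (Int.floor_mono (by gcongr))
  have hsplit : x / m = (x - v) / m - (0 - v) / m := by ring
  rw [← Int.cast_natCast, hcard, hsplit, abs_le]
  constructor <;> linarith [Int.floor_le ((x - v) / m), Int.lt_floor_add_one ((x - v) / m),
    Int.floor_le ((0 - v : ℝ) / m), Int.lt_floor_add_one ((0 - v : ℝ) / m)]

theorem abs_card_Ioc_filter_modEq_dvd_sub_le {x : ℝ} (hx : 0 ≤ x) {Q d : ℕ} (hQ : 0 < Q)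
    (hd : 0 < d) (hdQ : d.Coprime Q) (c : ℕ) :
    |(#{k ∈ Ioc 0 ⌊x⌋₊ | k ≡ c [MOD Q] ∧ d ∣ k} : ℝ) - x / (d * Q)| ≤ 1 := by
  obtain ⟨v, hvQ, hvd⟩ := Nat.chineseRemainder hdQ.symm c 0
  have hmod (k : ℕ) : (k ≡ c [MOD Q] ∧ d ∣ k) ↔ k ≡ v [MOD d * Q] := by
    rw [← Nat.modEq_and_modEq_iff_modEq_mul hdQ, ← Nat.modEq_zero_iff_dvd]
    exact ⟨fun h ↦ ⟨h.2.trans hvd.symm, h.1.trans hvQ.symm⟩,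
      fun h ↦ ⟨h.2.trans hvQ, h.1.trans hvd⟩⟩
  simp_rw [hmod]
  simpa only [Nat.cast_mul] using abs_card_Ioc_filter_modEq_sub_le hx (Nat.mul_pos hd hQ) v

/-- The sieve problem of removing from the integers `0 < k ≤ x` with `k ≡ c (mod Q)` those that
share a factor with the squarefree number `P`. -/
noncomputable def progressionSieve (x : ℝ) (Q c : ℕ) {P : ℕ} (hP : Squarefree P) :
    BoundingSieve where
  support := {k ∈ Ioc 0 ⌊x⌋₊ | k ≡ c [MOD Q]}
  prodPrimes := P
  prodPrimes_squarefree := hP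
  weights _ := 1
  weights_nonneg _ := zero_le_one
  totalMass := x / Q
  nu := ⟨fun d ↦ (d : ℝ)⁻¹, by simp⟩
  nu_mult := ⟨by simp, fun _ ↦ by simp [mul_comm]⟩
  nu_pos_of_prime p hp _ := by simpa using hp.pos
  nu_lt_one_of_prime p hp _ := inv_lt_one_of_one_lt₀ (by exact_mod_cast hp.one_lt)

section progressionSieve

variable {x : ℝ} {Q c P : ℕ} {hP : Squarefree P}

theorem siftedSum_progressionSieve :
    (progressionSieve x Q c hP).siftedSum =
      #{k ∈ Ioc 0 ⌊x⌋₊ | k ≡ c [MOD Q] ∧ P.Coprime k} := by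
  rw [← filter_filter, ← sum_boole]
  rfl

theorem abs_rem_progressionSieve_le (hx : 0 ≤ x) (hQ : 0 < Q) (hPQ : P.Coprime Q) {d : ℕ}
    (hd : d ∣ P) : |(progressionSieve x Q c hP).rem d| ≤ 1 := by
  have hdpos : 0 < d := Nat.pos_of_ne_zero (ne_zero_of_dvd_ne_zero hP.ne_zero hd)
  have hcount :=
    abs_card_Ioc_filter_modEq_dvd_sub_le hx hQ hdpos (hPQ.coprime_dvd_left hd) c
  have hmass : x / (d * Q : ℝ) = (d : ℝ)⁻¹ * (x / Q) := by ring
  simpa [progressionSieve, filter_filter, hmass] using hcount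

theorem selbergTerms_progressionSieve (d : ℕ) :
    (progressionSieve x Q c hP).selbergTerms d = (d.totient : ℝ)⁻¹ := by
  rw [BoundingSieve.selbergTerms_apply, totient_eq_mul_prod_primeFactors, mul_inv,
    ← prod_inv_distrib]
  rfl

end progressionSieve

theorem errSum_lambdaSquared_le {s : BoundingSieve}
    (hrem : ∀ d, d ∣ s.prodPrimes → |s.rem d| ≤ 1) (w : ℕ → ℝ) :
    s.errSum (BoundingSieve.lambdaSquared w) ≤ (∑ d ∈ s.prodPrimes.divisors, |w d|) ^ 2 := by
  set D := s.prodPrimes.divisors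
  have hle (d : ℕ) (hd : d ∈ D) : |BoundingSieve.lambdaSquared w d| * |s.rem d| ≤
      ∑ d₁ ∈ D, ∑ d₂ ∈ D, if d = d₁.lcm d₂ then |w d₁| * |w d₂| else 0 := by
    have hsub : d.divisors ⊆ D :=
      Nat.divisors_subset_of_dvd BoundingSieve.prodPrimes_ne_zero (Nat.dvd_of_mem_divisors hd)
    calc |BoundingSieve.lambdaSquared w d| * |s.rem d|
        ≤ |BoundingSieve.lambdaSquared w d| :=
          mul_le_of_le_one_right (abs_nonneg _) (hrem d (Nat.dvd_of_mem_divisors hd))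
      _ ≤ ∑ d₁ ∈ d.divisors, ∑ d₂ ∈ d.divisors,
          if d = d₁.lcm d₂ then |w d₁| * |w d₂| else 0 := by
        refine (abs_sum_le_sum_abs _ _).trans (sum_le_sum fun d₁ _ ↦ ?_)
        refine (abs_sum_le_sum_abs _ _).trans (sum_le_sum fun d₂ _ ↦ ?_)
        split_ifs <;> simp [abs_mul]
      _ ≤ ∑ d₁ ∈ D, ∑ d₂ ∈ D, if d = d₁.lcm d₂ then |w d₁| * |w d₂| else 0 := by
        have hnn (d₁ d₂ : ℕ) : 0 ≤ if d = d₁.lcm d₂ then |w d₁| * |w d₂| else 0 := by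
          split_ifs <;> positivity
        refine (sum_le_sum fun d₁ _ ↦ ?_).trans
          (sum_le_sum_of_subset_of_nonneg hsub fun d₁ _ _ ↦ sum_nonneg fun d₂ _ ↦ hnn d₁ d₂)
        exact sum_le_sum_of_subset_of_nonneg hsub fun d₂ _ _ ↦ hnn d₁ d₂
  calc s.errSum (BoundingSieve.lambdaSquared w)
      ≤ ∑ d ∈ D, ∑ d₁ ∈ D, ∑ d₂ ∈ D, if d = d₁.lcm d₂ then |w d₁| * |w d₂| else 0 :=
        sum_le_sum hle
    _ = ∑ d₁ ∈ D, ∑ d₂ ∈ D, ∑ d ∈ D, if d = d₁.lcm d₂ then |w d₁| * |w d₂| else 0 := by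
        rw [sum_comm]; exact sum_congr rfl fun _ _ ↦ sum_comm
    _ ≤ ∑ d₁ ∈ D, ∑ d₂ ∈ D, |w d₁| * |w d₂| := by
        refine sum_le_sum fun d₁ _ ↦ sum_le_sum fun d₂ _ ↦ ?_
        rw [sum_ite_eq']
        split_ifs
        exacts [le_rfl, by positivity]
    _ = (∑ d ∈ D, |w d|) ^ 2 := by rw [sq, sum_mul_sum]

theorem sum_divisors_filter_dvd_moebius {n : ℕ} (hn : Squarefree n) (r : ℕ) :
    ∑ d ∈ n.divisors with r ∣ d, μ d = if n = r then μ r else 0 := by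
  by_cases hr : r ∣ n
  · obtain ⟨e, rfl⟩ := hr
    obtain ⟨hr0, he0⟩ : r ≠ 0 ∧ e ≠ 0 := by simpa using hn.ne_zero
    have hfilter : {d ∈ (r * e).divisors | r ∣ d} = e.divisors.image (r * ·) := by
      ext d
      simp only [mem_filter, Nat.mem_divisors, mem_image]
      constructor
      · rintro ⟨⟨hd, _⟩, f, rfl⟩
        exact ⟨f, ⟨Nat.dvd_of_mul_dvd_mul_left (Nat.pos_of_ne_zero hr0) hd, he0⟩, rfl⟩
      · rintro ⟨f, ⟨hf, _⟩, rfl⟩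
        exact ⟨⟨mul_dvd_mul_left r hf, hn.ne_zero⟩, dvd_mul_right r f⟩
    have hmul (f : ℕ) (hf : f ∈ e.divisors) : μ (r * f) = μ r * μ f :=
      ArithmeticFunction.isMultiplicative_moebius.map_mul_of_coprime
        ((Nat.squarefree_mul_iff.1 hn).1.coprime_dvd_right (Nat.dvd_of_mem_divisors hf))
    rw [hfilter, sum_image fun _ _ _ _ h ↦ Nat.eq_of_mul_eq_mul_left (Nat.pos_of_ne_zero hr0) h,
      sum_congr rfl hmul, ← mul_sum, ← ArithmeticFunction.coe_mul_zeta_apply,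
      ArithmeticFunction.moebius_mul_coe_zeta, ArithmeticFunction.one_apply]
    simp [hr0]
  · rw [filter_false_of_mem fun d hd hrd ↦ hr (hrd.trans (Nat.dvd_of_mem_divisors hd)), sum_empty,
      if_neg fun h ↦ hr h.symm.dvd]

/-! ### Selberg's weights -/

section SelbergWeight

variable {M : Finset ℕ}

/-- The Selberg denominator `S = ∑_{m ∈ M} 1/φ(m)` attached to a set `M` of sieving moduli. -/
noncomputable def invTotientSum (M : Finset ℕ) : ℝ :=
  ∑ m ∈ M, (m.totient : ℝ)⁻¹

/-- The sum `H = ∑_{m ∈ M} σ(m)/φ(m)`, for which `H / S` bounds the `ℓ¹`-norm of the Selberg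
weights supported on `M`. -/
noncomputable def sigmaDivTotientSum (M : Finset ℕ) : ℝ :=
  ∑ m ∈ M, (σ 1 m : ℝ) / m.totient

/-- The Selberg weights `w(d) = μ(d) (d / S) ∑_{m ∈ M, d ∣ m} 1/φ(m)` supported on a set `M` of
moduli. -/
noncomputable def selbergWeight (M : Finset ℕ) (d : ℕ) : ℝ :=
  μ d * (d / invTotientSum M * ∑ m ∈ M with d ∣ m, (m.totient : ℝ)⁻¹)

theorem invTotientSum_nonneg (M : Finset ℕ) : 0 ≤ invTotientSum M :=
  sum_nonneg fun _ _ ↦ by positivity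

theorem selbergWeight_one (hS : 0 < invTotientSum M) : selbergWeight M 1 = 1 := by
  have hsum : ∑ m ∈ M with 1 ∣ m, (m.totient : ℝ)⁻¹ = invTotientSum M := by
    simp [invTotientSum]
  rw [selbergWeight, hsum]
  simp [hS.ne']

theorem sum_abs_selbergWeight_le (M N : Finset ℕ) :
    ∑ d ∈ N, |selbergWeight M d| ≤ sigmaDivTotientSum M / invTotientSum M := by
  have hS := invTotientSum_nonneg M
  have hterm (m : ℕ) : ∑ d ∈ N with d ∣ m, (d : ℝ) * (m.totient : ℝ)⁻¹ ≤ σ 1 m / m.totient := by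
    rcases eq_or_ne m 0 with rfl | hm
    · simp
    rw [← sum_mul, ArithmeticFunction.sigma_one_apply, div_eq_mul_inv, Nat.cast_sum]
    gcongr
    exact fun d hd ↦ Nat.mem_divisors.2 ⟨(mem_filter.1 hd).2, hm⟩
  calc ∑ d ∈ N, |selbergWeight M d|
      ≤ ∑ d ∈ N, d / invTotientSum M * ∑ m ∈ M with d ∣ m, (m.totient : ℝ)⁻¹ := by
        refine sum_le_sum fun d _ ↦ ?_
        have hnn : 0 ≤ d / invTotientSum M * ∑ m ∈ M with d ∣ m, (m.totient : ℝ)⁻¹ := by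
          positivity
        rw [selbergWeight, abs_mul, abs_of_nonneg hnn]
        exact mul_le_of_le_one_left hnn (by exact_mod_cast ArithmeticFunction.abs_moebius_le_one)
    _ = (∑ m ∈ M, ∑ d ∈ N with d ∣ m, (d : ℝ) * (m.totient : ℝ)⁻¹) / invTotientSum M := by
        simp_rw [sum_filter, sum_comm (s := M), sum_div, mul_sum]
        refine sum_congr rfl fun d _ ↦ sum_congr rfl fun m _ ↦ ?_
        split_ifs <;> ring
    _ ≤ sigmaDivTotientSum M / invTotientSum M := by
        gcongr
        exact sum_le_sum fun m _ ↦ hterm m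

theorem sum_divisors_inv_mul_selbergWeight {P : ℕ} (hP : Squarefree P) (M : Finset ℕ) (r : ℕ) :
    ∑ d ∈ P.divisors, (if r ∣ d then (d : ℝ)⁻¹ * selbergWeight M d else 0) =
      μ r * ((∑ m ∈ M with m.gcd P = r, (m.totient : ℝ)⁻¹) / invTotientSum M) := by
  have hmoebius (m : ℕ) : ∑ d ∈ P.divisors with d ∣ m, (if r ∣ d then (μ d : ℝ) else 0) =
      if m.gcd P = r then (μ r : ℝ) else 0 := by
    have hdiv : {d ∈ P.divisors | d ∣ m} = (m.gcd P).divisors := by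
      ext d
      simp [Nat.dvd_gcd_iff, hP.ne_zero, and_comm]
    rw [hdiv, ← sum_filter]
    exact_mod_cast sum_divisors_filter_dvd_moebius
      (hP.squarefree_of_dvd (Nat.gcd_dvd_right m P)) r
  calc ∑ d ∈ P.divisors, (if r ∣ d then (d : ℝ)⁻¹ * selbergWeight M d else 0)
      = (∑ m ∈ M, (m.totient : ℝ)⁻¹ *
          ∑ d ∈ P.divisors with d ∣ m, (if r ∣ d then (μ d : ℝ) else 0)) / invTotientSum M := by
        simp_rw [mul_sum, sum_filter, sum_comm (s := M), sum_div]
        refine sum_congr rfl fun d hd ↦ ?_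
        have hd0 : (d : ℝ) ≠ 0 := Nat.cast_ne_zero.2 (Nat.pos_of_mem_divisors hd).ne'
        split_ifs
        · rw [selbergWeight, sum_filter, ← sum_div]
          simp_rw [← ite_zero_mul, ← sum_mul]
          field_simp
        · simp
    _ = _ := by
        simp_rw [hmoebius, sum_filter, ← mul_div_assoc, mul_sum]
        congr 1
        refine sum_congr rfl fun m _ ↦ ?_
        split_ifs <;> ring

theorem sum_inv_totient_filter_gcd_eq_le (hsq : ∀ m ∈ M, Squarefree m)
    (hdvd : ∀ m ∈ M, ∀ d, d ∣ m → d ∈ M) (P r : ℕ) :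
    ∑ m ∈ M with m.gcd P = r, (m.totient : ℝ)⁻¹ ≤
      (r.totient : ℝ)⁻¹ * ∑ s ∈ M with s.Coprime P, (s.totient : ℝ)⁻¹ := by
  rw [mul_sum]
  have hr {m : ℕ} (hm : m ∈ {m ∈ M | m.gcd P = r}) : m ∈ M ∧ m.gcd P = r ∧ r * (m / r) = m := by
    obtain ⟨hmM, rfl⟩ := mem_filter.1 hm
    exact ⟨hmM, rfl, Nat.mul_div_cancel' (Nat.gcd_dvd_left m P)⟩
  have hcop {m : ℕ} (hm : m ∈ {m ∈ M | m.gcd P = r}) : r.Coprime (m / r) := by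
    obtain ⟨hmM, -, hmul⟩ := hr hm
    exact (Nat.squarefree_mul_iff.1 (hmul.symm ▸ hsq m hmM)).1
  have hinj : Set.InjOn (· / r) (({m ∈ M | m.gcd P = r} : Finset ℕ) : Set ℕ) := fun m hm n hn h ↦ by
    rw [← (hr hm).2.2, ← (hr hn).2.2]
    exact congrArg (r * ·) h
  have himage : {m ∈ M | m.gcd P = r}.image (· / r) ⊆ {s ∈ M | s.Coprime P} := by
    refine image_subset_iff.2 fun m hm ↦ mem_filter.2 ⟨?_, ?_⟩
    · exact hdvd m (hr hm).1 _ (Nat.div_dvd_of_dvd ⟨m / r, (hr hm).2.2.symm⟩)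
    · have hgcd : (m / r).gcd P ∣ r := by
        rw [← (hr hm).2.1]
        exact Nat.gcd_dvd_gcd_of_dvd_left P (Nat.div_dvd_of_dvd (Nat.gcd_dvd_left m P))
      exact Nat.eq_one_of_dvd_coprimes (hcop hm) hgcd (Nat.gcd_dvd_left _ _)
  calc ∑ m ∈ M with m.gcd P = r, (m.totient : ℝ)⁻¹
      = ∑ m ∈ M with m.gcd P = r, (r.totient : ℝ)⁻¹ * ((m / r).totient : ℝ)⁻¹ :=
        sum_congr rfl fun m hm ↦ by
          rw [← mul_inv, ← Nat.cast_mul, ← Nat.totient_mul (hcop hm), (hr hm).2.2]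
    _ = ∑ s ∈ {m ∈ M | m.gcd P = r}.image (· / r), (r.totient : ℝ)⁻¹ * (s.totient : ℝ)⁻¹ :=
        (sum_image (f := fun s ↦ (r.totient : ℝ)⁻¹ * (s.totient : ℝ)⁻¹) hinj).symm
    _ ≤ _ := sum_le_sum_of_subset_of_nonneg himage fun _ _ _ ↦ by positivity

theorem mainSum_selbergWeight_le (hsq : ∀ m ∈ M, Squarefree m)
    (hdvd : ∀ m ∈ M, ∀ d, d ∣ m → d ∈ M) (x : ℝ) (Q c : ℕ) {P : ℕ} (hP : Squarefree P) :
    (progressionSieve x Q c hP).mainSum (BoundingSieve.lambdaSquared (selbergWeight M)) ≤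
      (∑ s ∈ M with s.Coprime P, (s.totient : ℝ)⁻¹) / invTotientSum M := by
  set S := invTotientSum M
  set κ := ∑ s ∈ M with s.Coprime P, (s.totient : ℝ)⁻¹
  set T : ℕ → ℝ := fun r ↦ ∑ m ∈ M with m.gcd P = r, (m.totient : ℝ)⁻¹
  have hT (r : ℕ) : 0 ≤ T r := sum_nonneg fun _ _ ↦ by positivity
  have hTsum : ∑ r ∈ P.divisors, T r = S :=
    sum_fiberwise_of_maps_to
      (fun m _ ↦ Nat.mem_divisors.2 ⟨Nat.gcd_dvd_right m P, hP.ne_zero⟩) _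
  have hterm (r : ℕ) (hr : r ∈ P.divisors) :
      (r.totient : ℝ) * (μ r * (T r / S)) ^ 2 ≤ κ / S ^ 2 * T r := by
    have hφ : 0 < (r.totient : ℝ) :=
      Nat.cast_pos.2 (Nat.totient_pos.2 (Nat.pos_of_mem_divisors hr))
    have hμ : (μ r : ℝ) ^ 2 ≤ 1 := by
      exact_mod_cast (sq_le_one_iff_abs_le_one _).2 ArithmeticFunction.abs_moebius_le_one
    have hTr : r.totient * T r ≤ κ :=
      (le_inv_mul_iff₀ hφ).1 (sum_inv_totient_filter_gcd_eq_le hsq hdvd P r)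
    calc (r.totient : ℝ) * (μ r * (T r / S)) ^ 2
        = (μ r : ℝ) ^ 2 * ((r.totient * T r) * T r / S ^ 2) := by ring
      _ ≤ 1 * (κ * T r / S ^ 2) := by have := hT r; gcongr
      _ = κ / S ^ 2 * T r := by ring
  calc (progressionSieve x Q c hP).mainSum (BoundingSieve.lambdaSquared (selbergWeight M))
      = ∑ r ∈ P.divisors, (r.totient : ℝ) * (μ r * (T r / S)) ^ 2 := by
        rw [BoundingSieve.mainSum_lambdaSquared_eq_sum_mul_sum_sq]
        refine sum_congr rfl fun r _ ↦ ?_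
        rw [selbergTerms_progressionSieve, inv_inv, ← sum_divisors_inv_mul_selbergWeight hP M r]
        rfl
    _ ≤ ∑ r ∈ P.divisors, κ / S ^ 2 * T r := sum_le_sum hterm
    _ = κ / S := by
        rw [← mul_sum, hTsum]
        rcases eq_or_ne S 0 with hS | hS
        · simp [hS]
        · field_simp

theorem card_Ioc_filter_modEq_coprime_le (hM : 0 < invTotientSum M)
    (hsq : ∀ m ∈ M, Squarefree m) (hdvd : ∀ m ∈ M, ∀ d, d ∣ m → d ∈ M) {x : ℝ} (hx : 0 ≤ x)
    {Q P : ℕ} (hQ : 0 < Q) (hP : Squarefree P) (hPQ : P.Coprime Q) (c : ℕ) :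
    (#{k ∈ Ioc 0 ⌊x⌋₊ | k ≡ c [MOD Q] ∧ P.Coprime k} : ℝ) ≤
      x / Q * ((∑ s ∈ M with s.Coprime P, (s.totient : ℝ)⁻¹) / invTotientSum M) +
        (sigmaDivTotientSum M / invTotientSum M) ^ 2 := by
  set s := progressionSieve x Q c hP
  calc (#{k ∈ Ioc 0 ⌊x⌋₊ | k ≡ c [MOD Q] ∧ P.Coprime k} : ℝ)
      = s.siftedSum := siftedSum_progressionSieve.symm
    _ ≤ s.totalMass * s.mainSum (BoundingSieve.lambdaSquared (selbergWeight M)) +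
          s.errSum (BoundingSieve.lambdaSquared (selbergWeight M)) :=
        BoundingSieve.siftedSum_le_mainSum_errSum_of_upperMoebius _
          (BoundingSieve.upperMoebius_lambdaSquared _ (selbergWeight_one hM))
    _ ≤ _ := by
        refine add_le_add (mul_le_mul_of_nonneg_left (mainSum_selbergWeight_le hsq hdvd x Q c hP)
          (div_nonneg hx Q.cast_nonneg)) ?_
        exact (errSum_lambdaSquared_le
          (fun d hd ↦ abs_rem_progressionSieve_le hx hQ hPQ hd) _).trans <|
            pow_le_pow_left₀ (sum_nonneg fun _ _ ↦ abs_nonneg _) (sum_abs_selbergWeight_le M _) 2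

end SelbergWeight

/-! ### Primes in a progression -/

theorem totient_div_self {n : ℕ} (hn : n ≠ 0) :
    (n.totient : ℝ) / n = ∏ p ∈ n.primeFactors, (1 - (p : ℝ)⁻¹) := by
  rw [totient_eq_mul_prod_primeFactors, mul_div_cancel_left₀ _ (Nat.cast_ne_zero.2 hn)]

theorem inv_totient_of_squarefree {n : ℕ} (hn : Squarefree n) :
    (n.totient : ℝ)⁻¹ = ∏ p ∈ n.primeFactors, ((p : ℝ) - 1)⁻¹ := by
  have htotient : n.totient = ∏ p ∈ n.primeFactors, (p - 1) := by
    rw [Nat.totient_eq_div_primeFactors_mul, Nat.prod_primeFactors_of_squarefree hn,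
      Nat.div_self (Nat.pos_of_ne_zero hn.ne_zero), one_mul]
  rw [htotient, Nat.cast_prod, ← prod_inv_distrib]
  exact prod_congr rfl fun p hp ↦ by
    rw [Nat.cast_pred (Nat.prime_of_mem_primeFactors hp).pos]

theorem sum_prod_primeFactors_le {N U : Finset ℕ} {f : ℕ → ℝ} (hf : ∀ p ∈ U, 0 ≤ f p)
    (hsq : ∀ n ∈ N, Squarefree n) (hU : ∀ n ∈ N, n.primeFactors ⊆ U) :
    ∑ n ∈ N, ∏ p ∈ n.primeFactors, f p ≤ ∏ p ∈ U, (1 + f p) := by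
  have hinj : Set.InjOn Nat.primeFactors (N : Set ℕ) := fun m hm n hn h ↦ by
    rw [← Nat.prod_primeFactors_of_squarefree (hsq m hm), h,
      Nat.prod_primeFactors_of_squarefree (hsq n hn)]
  calc ∑ n ∈ N, ∏ p ∈ n.primeFactors, f p
      = ∑ t ∈ N.image Nat.primeFactors, ∏ p ∈ t, f p :=
        (sum_image (f := fun t ↦ ∏ p ∈ t, f p) hinj).symm
    _ ≤ ∑ t ∈ U.powerset, ∏ p ∈ t, f p :=
        sum_le_sum_of_subset_of_nonneg
          (image_subset_iff.2 fun n hn ↦ mem_powerset.2 (hU n hn))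
          fun t ht _ ↦ prod_nonneg fun p hp ↦ hf p (mem_powerset.1 ht hp)
    _ = ∏ p ∈ U, (1 + f p) := (prod_one_add U).symm

theorem sum_inv_le_div_totient {N : Finset ℕ} {m : ℕ} (hm : m ≠ 0)
    (hN : ∀ n ∈ N, n ≠ 0 ∧ n.primeFactors ⊆ m.primeFactors) :
    ∑ n ∈ N, (n : ℝ)⁻¹ ≤ m / m.totient := by
  let f : ℕ →* ℝ := ⟨⟨fun n ↦ (n : ℝ)⁻¹, by simp⟩, fun _ _ ↦ by simp [mul_comm]⟩
  have hf {p : ℕ} (hp : p.Prime) : ‖f p‖ < 1 := by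
    simpa [f] using inv_lt_one_of_one_lt₀ (Nat.one_lt_cast.2 hp.one_lt)
  have hsum := (EulerProduct.summable_and_hasSum_factoredNumbers_prod_filter_prime_geometric hf
    m.primeFactors).2
  have hfactored (n : ℕ) (hn : n ∈ N) : n ∈ Nat.factoredNumbers m.primeFactors :=
    Nat.mem_factoredNumbers_iff_primeFactors_subset.2 (hN n hn)
  calc ∑ n ∈ N, (n : ℝ)⁻¹
      = ∑ n ∈ N.subtype (· ∈ Nat.factoredNumbers m.primeFactors), f n :=
        (sum_subtype_of_mem f hfactored).symm
    _ ≤ ∏ p ∈ m.primeFactors with p.Prime, (1 - f p)⁻¹ :=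
        sum_le_hasSum _ (fun n _ ↦ by simp [f]) hsum
    _ = m / m.totient := by
        rw [filter_true_of_mem fun p ↦ Nat.prime_of_mem_primeFactors, prod_inv_distrib,
          ← inv_div, totient_div_self hm]
        rfl

theorem sum_inv_filter_radical_eq_le (D : ℕ) {m : ℕ} (hm : Squarefree m) :
    ∑ n ∈ Icc 1 D with radical n = m, (n : ℝ)⁻¹ ≤ (m.totient : ℝ)⁻¹ := by
  have hm0 : (m : ℝ) ≠ 0 := Nat.cast_ne_zero.2 hm.ne_zero
  have hfiber {n : ℕ} (hn : n ∈ {n ∈ Icc 1 D | radical n = m}) :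
      n ≠ 0 ∧ m * (n / m) = n ∧ n.primeFactors = m.primeFactors := by
    obtain ⟨hnD, rfl⟩ := mem_filter.1 hn
    refine ⟨Nat.one_le_iff_ne_zero.1 (mem_Icc.1 hnD).1, Nat.mul_div_cancel' radical_dvd_self, ?_⟩
    rw [Nat.radical_eq_prod_primeFactors,
      Nat.primeFactors_prod fun p ↦ Nat.prime_of_mem_primeFactors]
  have hinj : Set.InjOn (· / m) (({n ∈ Icc 1 D | radical n = m} : Finset ℕ) : Set ℕ) :=
    fun n hn n' hn' h ↦ by
      rw [← (hfiber hn).2.1, ← (hfiber hn').2.1]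
      exact congrArg (m * ·) h
  calc ∑ n ∈ Icc 1 D with radical n = m, (n : ℝ)⁻¹
      = ∑ n ∈ Icc 1 D with radical n = m, (m : ℝ)⁻¹ * ((n / m : ℕ) : ℝ)⁻¹ :=
        sum_congr rfl fun n hn ↦ by rw [← mul_inv, ← Nat.cast_mul, (hfiber hn).2.1]
    _ = (m : ℝ)⁻¹ * ∑ n ∈ {n ∈ Icc 1 D | radical n = m}.image (· / m), (n : ℝ)⁻¹ := by
        rw [sum_image (f := fun n : ℕ ↦ (n : ℝ)⁻¹) hinj, mul_sum]
    _ ≤ (m : ℝ)⁻¹ * (m / m.totient) := by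
        gcongr
        refine sum_inv_le_div_totient hm.ne_zero fun t ht ↦ ?_
        obtain ⟨n, hn, rfl⟩ := mem_image.1 ht
        obtain ⟨hn0, hmul, hpf⟩ := hfiber hn
        have hdvd : n / m ∣ n := Dvd.intro_left m hmul
        exact ⟨ne_zero_of_dvd_ne_zero hn0 hdvd, hpf ▸ Nat.primeFactors_mono hdvd hn0⟩
    _ = (m.totient : ℝ)⁻¹ := by field_simp

/-- The squarefree integers `1 ≤ m ≤ D` coprime to `k`: the support of the Selberg weights of
level `D` once the primes dividing `k` have been removed beforehand. -/
def squarefreeCoprime (k D : ℕ) : Finset ℕ :=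
  {m ∈ Icc 1 D | Squarefree m ∧ m.Coprime k}

theorem mem_squarefreeCoprime {k D m : ℕ} :
    m ∈ squarefreeCoprime k D ↔ (1 ≤ m ∧ m ≤ D) ∧ Squarefree m ∧ m.Coprime k := by
  rw [squarefreeCoprime, mem_filter, mem_Icc]

theorem squarefree_of_mem_squarefreeCoprime {k D m : ℕ} (hm : m ∈ squarefreeCoprime k D) :
    Squarefree m :=
  (mem_squarefreeCoprime.1 hm).2.1

theorem mem_squarefreeCoprime_of_dvd {k D m : ℕ} (hm : m ∈ squarefreeCoprime k D) (d : ℕ)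
    (hd : d ∣ m) : d ∈ squarefreeCoprime k D := by
  obtain ⟨⟨hm1, hmD⟩, hsq, hcop⟩ := mem_squarefreeCoprime.1 hm
  exact mem_squarefreeCoprime.2 ⟨⟨Nat.pos_of_dvd_of_pos hd hm1, (Nat.le_of_dvd hm1 hd).trans hmD⟩,
    hsq.squarefree_of_dvd hd, hcop.coprime_dvd_left hd⟩

theorem sum_inv_coprime_le_invTotientSum (k D : ℕ) :
    ∑ n ∈ Icc 1 D with n.Coprime k, (n : ℝ)⁻¹ ≤ invTotientSum (squarefreeCoprime k D) := by
  have hmaps (n : ℕ) (hn : n ∈ {n ∈ Icc 1 D | n.Coprime k}) :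
      radical n ∈ squarefreeCoprime k D := by
    obtain ⟨hnD, hcop⟩ := mem_filter.1 hn
    obtain ⟨hn1, hnD⟩ := mem_Icc.1 hnD
    exact mem_squarefreeCoprime.2 ⟨⟨Nat.pos_of_ne_zero radical_ne_zero,
      (Nat.radical_le_self_iff.2 (by lia)).trans hnD⟩, squarefree_radical,
      hcop.coprime_dvd_left radical_dvd_self⟩
  rw [← sum_fiberwise_of_maps_to hmaps, invTotientSum]
  refine sum_le_sum fun m hm ↦ le_trans ?_
    (sum_inv_filter_radical_eq_le D (squarefree_of_mem_squarefreeCoprime hm))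
  refine sum_le_sum_of_subset_of_nonneg (fun n hn ↦ ?_) fun _ _ _ ↦ by positivity
  simp only [mem_filter] at hn ⊢
  exact ⟨hn.1.1, hn.2⟩

theorem one_le_invTotientSum_squarefreeCoprime (k : ℕ) {D : ℕ} (hD : 1 ≤ D) :
    1 ≤ invTotientSum (squarefreeCoprime k D) := by
  have hmem : 1 ∈ squarefreeCoprime k D := by simp [mem_squarefreeCoprime, hD]
  simpa [invTotientSum] using
    single_le_sum (f := fun m : ℕ ↦ (m.totient : ℝ)⁻¹) (fun _ _ ↦ by positivity) hmem

/-- The product of the primes `p ≤ D` not dividing `Q`: the primes that a sieve of level `D` can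
remove from a progression modulo `Q`. -/
def siftingProduct (Q D : ℕ) : ℕ :=
  ∏ p ∈ Icc 1 D with p.Prime ∧ ¬p ∣ Q, p

theorem squarefree_siftingProduct (Q D : ℕ) : Squarefree (siftingProduct Q D) := by
  refine squarefree_prod_of_pairwise_isCoprime (fun p hp q hq hpq ↦ ?_) fun p hp ↦ ?_
  · exact Nat.coprime_iff_isRelPrime.1 <|
      (Nat.coprime_primes (mem_filter.1 hp).2.1 (mem_filter.1 hq).2.1).2 hpq
  · exact (mem_filter.1 hp).2.1.squarefree

theorem coprime_siftingProduct_iff {Q D n : ℕ} :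
    (siftingProduct Q D).Coprime n ↔ ∀ p, p.Prime → p ≤ D → ¬p ∣ Q → ¬p ∣ n := by
  simp only [siftingProduct, Nat.coprime_prod_left_iff, mem_filter, mem_Icc]
  exact ⟨fun h p hp hpD hpQ ↦ hp.coprime_iff_not_dvd.1 (h p ⟨⟨hp.one_le, hpD⟩, hp, hpQ⟩),
    fun h p ⟨⟨_, hpD⟩, hp, hpQ⟩ ↦ hp.coprime_iff_not_dvd.2 (h p hp hpD hpQ)⟩

theorem primeFactors_subset_of_coprime_siftingProduct {k Q D s : ℕ} (hQ : Q ≠ 0)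
    (hs : s ∈ squarefreeCoprime k D) (hsP : s.Coprime (siftingProduct Q D)) :
    s.primeFactors ⊆ Q.primeFactors \ k.primeFactors := fun p hp ↦ by
  obtain ⟨⟨hs1, hsD⟩, -, hsk⟩ := mem_squarefreeCoprime.1 hs
  obtain ⟨hp, hps, -⟩ := Nat.mem_primeFactors.1 hp
  have hpQ : p ∣ Q := by
    by_contra hpQ
    exact coprime_siftingProduct_iff.1 hsP.symm p hp ((Nat.le_of_dvd hs1 hps).trans hsD) hpQ hps
  refine mem_sdiff.2 ⟨Nat.mem_primeFactors.2 ⟨hp, hpQ, hQ⟩, fun hpk ↦ ?_⟩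
  exact Nat.not_coprime_of_dvd_of_dvd hp.one_lt hps (Nat.dvd_of_mem_primeFactors hpk) hsk

/-- The moduli coprime to all sifting primes are composed of primes dividing `Q`, so their
contribution is at most an Euler product over those primes. -/
theorem sum_inv_totient_coprime_siftingProduct_le {k Q : ℕ} (hQ : Q ≠ 0) (hkQ : k ∣ Q) (D : ℕ) :
    ∑ s ∈ squarefreeCoprime k D with s.Coprime (siftingProduct Q D), (s.totient : ℝ)⁻¹ ≤
      (k.totient : ℝ) / k * (Q / Q.totient) := by
  have hprime {p : ℕ} (hp : p ∈ Q.primeFactors) : 1 < (p : ℝ) :=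
    Nat.one_lt_cast.2 (Nat.prime_of_mem_primeFactors hp).one_lt
  have hk : k ≠ 0 := ne_zero_of_dvd_ne_zero hQ hkQ
  have hsplit : ((k.totient : ℝ) / k) *
      ∏ p ∈ Q.primeFactors \ k.primeFactors, (1 - (p : ℝ)⁻¹) = Q.totient / Q := by
    rw [totient_div_self hk, totient_div_self hQ, mul_comm,
      prod_sdiff (Nat.primeFactors_mono hkQ hQ)]
  calc ∑ s ∈ squarefreeCoprime k D with s.Coprime (siftingProduct Q D), (s.totient : ℝ)⁻¹
      = ∑ s ∈ squarefreeCoprime k D with s.Coprime (siftingProduct Q D),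
          ∏ p ∈ s.primeFactors, ((p : ℝ) - 1)⁻¹ :=
        sum_congr rfl fun s hs ↦ inv_totient_of_squarefree
          (squarefree_of_mem_squarefreeCoprime (mem_filter.1 hs).1)
    _ ≤ ∏ p ∈ Q.primeFactors \ k.primeFactors, (1 + ((p : ℝ) - 1)⁻¹) :=
        sum_prod_primeFactors_le
          (fun p hp ↦ inv_nonneg.2 (sub_nonneg.2 (hprime (mem_sdiff.1 hp).1).le))
          (fun s hs ↦ squarefree_of_mem_squarefreeCoprime (mem_filter.1 hs).1)
          fun s hs ↦ primeFactors_subset_of_coprime_siftingProduct hQ (mem_filter.1 hs).1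
            (mem_filter.1 hs).2
    _ = (∏ p ∈ Q.primeFactors \ k.primeFactors, (1 - (p : ℝ)⁻¹))⁻¹ := by
        rw [← prod_inv_distrib]
        refine prod_congr rfl fun p hp ↦ ?_
        have hp1 := hprime (mem_sdiff.1 hp).1
        have : (p : ℝ) - 1 ≠ 0 := by linarith
        have : (p : ℝ) ≠ 0 := by linarith
        field_simp
        ring
    _ = (k.totient : ℝ) / k * (Q / Q.totient) := by
        have hk0 : (k.totient : ℝ) / k ≠ 0 := by
          have := Nat.totient_pos.2 (Nat.pos_of_ne_zero hk)
          positivity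
        rw [← inv_div (Q.totient : ℝ), ← hsplit, mul_inv, mul_inv_cancel_left₀ hk0]

theorem totient_div_self_le_of_dvd {k Q : ℕ} (hQ : Q ≠ 0) (hkQ : k ∣ Q) :
    (Q.totient : ℝ) / Q ≤ k.totient / k := by
  have hfactor (p : ℕ) : 0 ≤ 1 - (p : ℝ)⁻¹ := sub_nonneg.2 (Nat.cast_inv_le_one p)
  rw [totient_div_self hQ, totient_div_self (ne_zero_of_dvd_ne_zero hQ hkQ),
    ← prod_sdiff (Nat.primeFactors_mono hkQ hQ)]
  exact mul_le_of_le_one_left (prod_nonneg fun p _ ↦ hfactor p) <|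
    prod_le_one (fun p _ ↦ hfactor p) fun p _ ↦ sub_le_self _ (by positivity)

/-- The primes `p ≤ x` in the residue class of `c` modulo `Q`, those counted by `π(x; Q, c)`. -/
noncomputable def primesModEq (x : ℝ) (Q c : ℕ) : Finset ℕ :=
  {p ∈ Ioc 0 ⌊x⌋₊ | p.Prime ∧ p ≡ c [MOD Q]}

theorem mem_primesModEq {x : ℝ} {Q c p : ℕ} :
    p ∈ primesModEq x Q c ↔ p ≤ ⌊x⌋₊ ∧ p.Prime ∧ p ≡ c [MOD Q] := by
  rw [primesModEq, mem_filter, mem_Ioc]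
  exact ⟨fun h ↦ ⟨h.1.2, h.2⟩, fun h ↦ ⟨⟨h.2.1.pos, h.1⟩, h.2⟩⟩

theorem card_primesModEq_filter_lt_le {k Q D : ℕ} (hQ : Q ≠ 0) (hkQ : k ∣ Q) (hD : 1 ≤ D) {x : ℝ}
    (hx : 0 ≤ x) (c : ℕ) :
    (#{p ∈ primesModEq x Q c | D < p} : ℝ) ≤
      (k.totient : ℝ) / k * (x / Q.totient) / invTotientSum (squarefreeCoprime k D) +
        (sigmaDivTotientSum (squarefreeCoprime k D) /
          invTotientSum (squarefreeCoprime k D)) ^ 2 := by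
  set M := squarefreeCoprime k D
  have hS : 0 < invTotientSum M :=
    zero_lt_one.trans_le (one_le_invTotientSum_squarefreeCoprime k hD)
  have hsub : {p ∈ primesModEq x Q c | D < p} ⊆
      {n ∈ Ioc 0 ⌊x⌋₊ | n ≡ c [MOD Q] ∧ (siftingProduct Q D).Coprime n} := by
    intro p hp
    obtain ⟨hp, hDp⟩ := mem_filter.1 hp
    obtain ⟨hpx, hp, hpc⟩ := mem_primesModEq.1 hp
    refine mem_filter.2 ⟨mem_Ioc.2 ⟨hp.pos, hpx⟩, hpc, ?_⟩
    refine coprime_siftingProduct_iff.2 fun q hq hqD _ hqp ↦ ?_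
    exact (hqD.trans_lt hDp).ne ((Nat.prime_dvd_prime_iff_eq hq hp).1 hqp)
  have hcopQ : (siftingProduct Q D).Coprime Q :=
    coprime_siftingProduct_iff.2 fun _ _ _ hpQ ↦ hpQ
  calc (#{p ∈ primesModEq x Q c | D < p} : ℝ)
      ≤ #{n ∈ Ioc 0 ⌊x⌋₊ | n ≡ c [MOD Q] ∧ (siftingProduct Q D).Coprime n} :=
        Nat.cast_le.2 (card_le_card hsub)
    _ ≤ x / Q * ((∑ s ∈ M with s.Coprime (siftingProduct Q D), (s.totient : ℝ)⁻¹) /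
          invTotientSum M) + (sigmaDivTotientSum M / invTotientSum M) ^ 2 :=
        card_Ioc_filter_modEq_coprime_le hS (fun _ ↦ squarefree_of_mem_squarefreeCoprime)
          (fun _ ↦ mem_squarefreeCoprime_of_dvd) hx (Nat.pos_of_ne_zero hQ)
          (squarefree_siftingProduct Q D) hcopQ c
    _ ≤ x / Q * ((k.totient : ℝ) / k * (Q / Q.totient) / invTotientSum M) +
          (sigmaDivTotientSum M / invTotientSum M) ^ 2 := by
        gcongr
        exact sum_inv_totient_coprime_siftingProduct_le hQ hkQ D
    _ = _ := by
        have hQ0 : (Q : ℝ) ≠ 0 := Nat.cast_ne_zero.2 hQ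
        field_simp

/-! ### Estimates for the level `6 j - 1` -/

theorem sigma_div_totient_of_squarefree {m : ℕ} (hm : Squarefree m) :
    (σ 1 m : ℝ) / m.totient = ∑ d ∈ m.divisors, ∏ p ∈ d.primeFactors, 2 / ((p : ℝ) - 1) := by
  let g : ArithmeticFunction ℝ := .prodPrimeFactors fun p ↦ 2 / ((p : ℝ) - 1)
  have hg {n : ℕ} (hn : n ≠ 0) : g n = ∏ p ∈ n.primeFactors, 2 / ((p : ℝ) - 1) :=
    ArithmeticFunction.prodPrimeFactors_apply hn
  have hsigma : (σ 1 m : ℝ) = ∏ p ∈ m.primeFactors, (1 + (p : ℝ)) := by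
    have h := ArithmeticFunction.isMultiplicative_id.prodPrimeFactors_one_add_of_squarefree hm
    simp only [ArithmeticFunction.id_apply] at h
    rw [ArithmeticFunction.sigma_one_apply, ← h, Nat.cast_prod]
    simp only [Nat.cast_add, Nat.cast_one]
  calc (σ 1 m : ℝ) / m.totient
      = ∏ p ∈ m.primeFactors, (1 + 2 / ((p : ℝ) - 1)) := by
        rw [hsigma, div_eq_mul_inv, inv_totient_of_squarefree hm, ← prod_mul_distrib]
        refine prod_congr rfl fun p hp ↦ ?_
        have hp1 : (1 : ℝ) < p := Nat.one_lt_cast.2 (Nat.prime_of_mem_primeFactors hp).one_lt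
        field_simp [(sub_pos.2 hp1).ne']
        ring
    _ = ∏ p ∈ m.primeFactors, (1 + g p) := prod_congr rfl fun p hp ↦ by
        have hp := Nat.prime_of_mem_primeFactors hp
        rw [hg hp.ne_zero, hp.primeFactors, prod_singleton]
    _ = ∑ d ∈ m.divisors, g d :=
        (ArithmeticFunction.IsMultiplicative.prodPrimeFactors
          fun p ↦ 2 / ((p : ℝ) - 1)).prodPrimeFactors_one_add_of_squarefree hm
    _ = _ := sum_congr rfl fun d hd ↦ hg (Nat.pos_of_mem_divisors hd).ne'

theorem card_squarefreeCoprime_filter_dvd_le (k D d : ℕ) :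
    (#{m ∈ squarefreeCoprime k D | d ∣ m} : ℝ) ≤ D / d := by
  have hsub : {m ∈ squarefreeCoprime k D | d ∣ m} ⊆ {m ∈ Ioc 0 D | d ∣ m} := fun m hm ↦ by
    obtain ⟨hm, hdm⟩ := mem_filter.1 hm
    exact mem_filter.2 ⟨mem_Ioc.2 (mem_squarefreeCoprime.1 hm).1, hdm⟩
  calc (#{m ∈ squarefreeCoprime k D | d ∣ m} : ℝ)
      ≤ (D / d : ℕ) := Nat.cast_le.2 (Nat.Ioc_filter_dvd_card_eq_div D d ▸ card_le_card hsub)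
    _ ≤ D / d := Nat.cast_div_le

theorem sum_squarefreeCoprime_prod_div_le (k D : ℕ) :
    ∑ d ∈ squarefreeCoprime k D, (∏ p ∈ d.primeFactors, 2 / ((p : ℝ) - 1)) / d ≤
      ∏ p ∈ Icc 2 D with p.Coprime k, (1 + 2 / ((p : ℝ) * (p - 1))) := by
  have hterm (d : ℕ) (hd : d ∈ squarefreeCoprime k D) :
      (∏ p ∈ d.primeFactors, 2 / ((p : ℝ) - 1)) / d =
        ∏ p ∈ d.primeFactors, 2 / ((p : ℝ) * (p - 1)) := by
    have hcast : (d : ℝ) = ∏ p ∈ d.primeFactors, (p : ℝ) := by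
      rw [← Nat.cast_prod,
        Nat.prod_primeFactors_of_squarefree (squarefree_of_mem_squarefreeCoprime hd)]
    rw [hcast, ← prod_div_distrib]
    exact prod_congr rfl fun p _ ↦ by rw [div_div, mul_comm]
  rw [sum_congr rfl hterm]
  refine sum_prod_primeFactors_le (fun p hp ↦ ?_)
    (fun d ↦ squarefree_of_mem_squarefreeCoprime) fun d hd p hp ↦ ?_
  · have : (2 : ℝ) ≤ p := by exact_mod_cast (mem_Icc.1 (mem_filter.1 hp).1).1
    exact div_nonneg zero_le_two (mul_nonneg (by linarith) (by linarith))
  · obtain ⟨⟨hd1, hdD⟩, -, hdk⟩ := mem_squarefreeCoprime.1 hd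
    obtain ⟨hp, hpd, -⟩ := Nat.mem_primeFactors.1 hp
    exact mem_filter.2 ⟨mem_Icc.2 ⟨hp.two_le, (Nat.le_of_dvd hd1 hpd).trans hdD⟩,
      hdk.coprime_dvd_left hpd⟩

theorem sigmaDivTotientSum_squarefreeCoprime_le (k : ℕ) {D : ℕ} (hD : 1 ≤ D) :
    sigmaDivTotientSum (squarefreeCoprime k D) ≤ #(squarefreeCoprime k D) +
      D * (∏ p ∈ Icc 2 D with p.Coprime k, (1 + 2 / ((p : ℝ) * (p - 1))) - 1) := by
  set M := squarefreeCoprime k D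
  set g : ℕ → ℝ := fun d ↦ ∏ p ∈ d.primeFactors, 2 / ((p : ℝ) - 1)
  have hg (d : ℕ) : 0 ≤ g d := prod_nonneg fun p hp ↦ by
    have := Nat.one_lt_cast (α := ℝ).2 (Nat.prime_of_mem_primeFactors hp).one_lt
    exact div_nonneg zero_le_two (by linarith)
  have h1 : 1 ∈ M := by simp [M, mem_squarefreeCoprime, hD]
  have hdiv (m : ℕ) (hm : m ∈ M) : m.divisors = {d ∈ M | d ∣ m} := by
    ext d
    have hm0 := (squarefree_of_mem_squarefreeCoprime hm).ne_zero
    simp only [Nat.mem_divisors, mem_filter]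
    exact ⟨fun h ↦ ⟨mem_squarefreeCoprime_of_dvd hm d h.1, h.1⟩, fun h ↦ ⟨h.2, hm0⟩⟩
  calc sigmaDivTotientSum M
      = ∑ m ∈ M, ∑ d ∈ M with d ∣ m, g d := sum_congr rfl fun m hm ↦ by
        rw [sigma_div_totient_of_squarefree (squarefree_of_mem_squarefreeCoprime hm), hdiv m hm]
    _ = ∑ d ∈ M, #{m ∈ M | d ∣ m} * g d := by
        simp_rw [sum_filter]
        rw [sum_comm]
        exact sum_congr rfl fun d _ ↦ by rw [← sum_filter, sum_const, nsmul_eq_mul]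
    _ = #M + ∑ d ∈ M.erase 1, #{m ∈ M | d ∣ m} * g d := by
        rw [← add_sum_erase M _ h1]
        simp [g]
    _ ≤ #M + ∑ d ∈ M.erase 1, D / d * g d := by
        gcongr with d
        exacts [hg d, card_squarefreeCoprime_filter_dvd_le k D d]
    _ = #M + D * (∑ d ∈ M, g d / d - 1) := by
        rw [← add_sum_erase M _ h1, mul_sub, mul_add, mul_sum]
        simp [g, mul_div_assoc, div_mul_eq_mul_div]
    _ ≤ _ := by gcongr; exact sum_squarefreeCoprime_prod_div_le k D

theorem coprime_six_iff {n : ℕ} : n.Coprime 6 ↔ n % 6 = 1 ∨ n % 6 = 5 := by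
  rw [Nat.coprime_comm, Nat.Coprime, Nat.gcd_rec]
  have := Nat.mod_lt n (by lia : 0 < 6)
  interval_cases n % 6 <;> simp

theorem filter_coprime_six_succ {a j : ℕ} (ha : a ≤ 6 * j + 1) :
    {n ∈ Icc a (6 * (j + 1) - 1) | n.Coprime 6} =
      insert (6 * j + 1) (insert (6 * j + 5) {n ∈ Icc a (6 * j - 1) | n.Coprime 6}) := by
  ext n
  simp only [mem_filter, mem_Icc, mem_insert, coprime_six_iff]
  lia

theorem half_log_div_le {t : ℝ} (ht : 0 ≤ t) (ht3 : t ≤ 1 / 3) :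
    1 / 2 * Real.log ((1 + t) / (1 - t)) ≤ 9 * t / (9 - 4 * t ^ 2) := by
  have hlog := Real.log_div_le_sum_range_add ht (by linarith) 2
  simp only [sum_range_succ, sum_range_zero] at hlog
  norm_num at hlog
  have hsq : t ^ 2 ≤ 1 / 9 := by nlinarith
  have hfactor : 1 / 3 + t ^ 2 / (1 - t ^ 2) ≤ 4 / (9 - 4 * t ^ 2) := by
    rw [div_add_div _ _ three_ne_zero (by linarith), div_le_div_iff₀ (by linarith) (by linarith)]
    nlinarith
  have hsplit : 9 * t / (9 - 4 * t ^ 2) = t + t ^ 3 * (4 / (9 - 4 * t ^ 2)) := by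
    have : 9 - 4 * t ^ 2 ≠ 0 := by linarith
    rw [div_eq_iff this, add_mul, mul_assoc, div_mul_cancel₀ _ this]
    ring
  calc 1 / 2 * Real.log ((1 + t) / (1 - t))
      ≤ t + t ^ 3 / 3 + t ^ 5 / (1 - t ^ 2) := hlog
    _ = t + t ^ 3 * (1 / 3 + t ^ 2 / (1 - t ^ 2)) := by ring
    _ ≤ t + t ^ 3 * (4 / (9 - 4 * t ^ 2)) := by gcongr
    _ = 9 * t / (9 - 4 * t ^ 2) := hsplit.symm

theorem log_add_one_sub_log_le {j : ℕ} (hj : 1 ≤ j) :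
    Real.log (j + 1) - Real.log j ≤ 3 * ((6 * j + 1 : ℝ)⁻¹ + (6 * j + 5 : ℝ)⁻¹) := by
  have hj1 : (1 : ℝ) ≤ j := by exact_mod_cast hj
  have h := half_log_div_le (t := (2 * j + 1 : ℝ)⁻¹) (by positivity)
    (by rw [one_div]; gcongr; linarith)
  have hratio : (1 + (2 * j + 1 : ℝ)⁻¹) / (1 - (2 * j + 1 : ℝ)⁻¹) = (j + 1) / j := by
    have : (2 * j + 1 : ℝ) - 1 ≠ 0 := by linarith
    field_simp
    ring
  rw [hratio, Real.log_div (by positivity) (by positivity)] at h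
  have hrhs : 9 * (2 * j + 1 : ℝ)⁻¹ / (9 - 4 * (2 * j + 1 : ℝ)⁻¹ ^ 2) =
      3 / 2 * ((6 * j + 1 : ℝ)⁻¹ + (6 * j + 5 : ℝ)⁻¹) := by
    have : 9 * (2 * j + 1 : ℝ) ^ 2 - 4 ≠ 0 := by nlinarith
    field_simp
    ring
  linarith

theorem log_le_invTotientSum_six {j : ℕ} (hj : 1 ≤ j) :
    (3.6 + Real.log j) / 3 ≤ invTotientSum (squarefreeCoprime 6 (6 * j - 1)) := by
  refine le_trans ?_ (sum_inv_coprime_le_invTotientSum 6 (6 * j - 1))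
  induction j, hj using Nat.le_induction with
  | base =>
    have : {n ∈ Icc 1 (6 * 1 - 1) | n.Coprime 6} = {1, 5} := by decide
    rw [this]
    norm_num
  | succ j hj ih =>
    rw [filter_coprime_six_succ (by lia), sum_insert (by simp), sum_insert (by simp; lia)]
    have hlog := log_add_one_sub_log_le hj
    push_cast
    linarith

theorem prod_coprime_six_le {j : ℕ} (hj : 1 ≤ j) :
    ∏ p ∈ Icc 2 (6 * j - 1) with p.Coprime 6, (1 + 2 / ((p : ℝ) * (p - 1))) ≤
      1.26 * (1 - 1 / (8 * j)) := by
  induction j, hj using Nat.le_induction with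
  | base =>
    have : {n ∈ Icc 2 (6 * 1 - 1) | n.Coprime 6} = {5} := by decide
    rw [this]
    norm_num
  | succ j hj ih =>
    have hj1 : (1 : ℝ) ≤ j := by exact_mod_cast hj
    rw [filter_coprime_six_succ (by lia), prod_insert (by simp), prod_insert (by simp; lia)]
    have hstep : (1 + 2 / ((6 * j + 1 : ℝ) * (6 * j))) * (1 + 2 / ((6 * j + 5 : ℝ) * (6 * j + 4))) *
        (1 - 1 / (8 * j)) ≤ 1 - 1 / (8 * (j + 1)) := by
      rw [← sub_nonneg]
      field_simp
      obtain ⟨t, ht, hjt⟩ : ∃ t : ℝ, 0 ≤ t ∧ (j : ℝ) = 1 + t := ⟨j - 1, by linarith, by ring⟩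
      rw [hjt]
      ring_nf
      positivity
    push_cast
    rw [add_sub_cancel_right, show (6 * j + 5 - 1 : ℝ) = 6 * j + 4 by ring, ← mul_assoc]
    calc _ ≤ (1 + 2 / ((6 * j + 1 : ℝ) * (6 * j))) * (1 + 2 / ((6 * j + 5 : ℝ) * (6 * j + 4))) *
          (1.26 * (1 - 1 / (8 * j))) := by gcongr
      _ = 1.26 * ((1 + 2 / ((6 * j + 1 : ℝ) * (6 * j))) *
          (1 + 2 / ((6 * j + 5 : ℝ) * (6 * j + 4))) * (1 - 1 / (8 * j))) := by ring
      _ ≤ 1.26 * (1 - 1 / (8 * (j + 1))) := by gcongr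

theorem sigmaDivTotientSum_six_le {j : ℕ} (hj : 1 ≤ j) :
    sigmaDivTotientSum (squarefreeCoprime 6 (6 * j - 1)) ≤ 3.56 * j := by
  have hj1 : (1 : ℝ) ≤ j := by exact_mod_cast hj
  have hcard : #(squarefreeCoprime 6 (6 * j - 1)) ≤ 2 * j := by
    have hcount := Nat.Ico_filter_coprime_le (a := 6) 1 (6 * j - 1) (by lia)
    rw [show Nat.totient 6 = 2 by decide, show (6 * j - 1) / 6 + 1 = j by lia] at hcount
    refine (card_le_card fun m hm ↦ ?_).trans hcount
    obtain ⟨hmD, -, hm6⟩ := mem_squarefreeCoprime.1 hm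
    exact mem_filter.2 ⟨mem_Ico.2 (by lia), hm6.symm⟩
  have hcard : (#(squarefreeCoprime 6 (6 * j - 1)) : ℝ) ≤ 2 * j := by exact_mod_cast hcard
  have hD : ((6 * j - 1 : ℕ) : ℝ) = 6 * j - 1 := by rw [Nat.cast_sub (by lia)]; push_cast; ring
  calc sigmaDivTotientSum (squarefreeCoprime 6 (6 * j - 1))
      ≤ _ := sigmaDivTotientSum_squarefreeCoprime_le 6 (by lia)
    _ ≤ 2 * j + (6 * j - 1) * (1.26 * (1 - 1 / (8 * j)) - 1) := by
        rw [hD]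
        gcongr
        exacts [by linarith, prod_coprime_six_le hj]
    _ = 3.56 * j - 1.205 + 0.1575 / j := by
        field_simp
        ring
    _ ≤ 3.56 * j := by
        have : 0.1575 / (j : ℝ) ≤ 0.1575 := div_le_self (by norm_num) hj1
        linarith

/-! ### Choice of the level -/

/-- The bound which the Selberg sieve of level `D`, applied after the primes `2` and `3` have been
removed, gives for the number of primes in a progression containing `N` integers, in units in which
the expected main term is `N / log N`. The last two summands account for the primes up to `D` and
for the prime `2` or `3`. -/
noncomputable def sieveBoundSix (D : ℕ) (N : ℝ) : ℝ :=
  N / (6 * invTotientSum (squarefreeCoprime 6 D)) +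
    (sigmaDivTotientSum (squarefreeCoprime 6 D) / invTotientSum (squarefreeCoprime 6 D)) ^ 2 +
    ((D + 1) / 6 : ℕ) + 1

/-- The tangent to `log` at `e ^ k`, with `e⁻¹` rounded up to `0.36788`. -/
theorem log_le_tangent {N : ℝ} (hN : 0 < N) (k : ℕ) :
    Real.log N ≤ k - 1 + N * 0.36788 ^ k := by
  have h := Real.log_le_sub_one_of_pos (mul_pos hN (Real.exp_pos (-k)))
  rw [Real.log_mul hN.ne' (Real.exp_ne_zero _), Real.log_exp] at h
  have hexp : Real.exp (-k) ≤ 0.36788 ^ k := by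
    rw [← mul_neg_one, Real.exp_nat_mul]
    gcongr
    exact Real.exp_neg_one_lt_d9.le.trans (by norm_num)
  linarith [mul_le_mul_of_nonneg_left hexp hN.le]

/-- With `log N` replaced by a tangent the claim is a convex quadratic inequality in `N`, so it
suffices to check it at the two endpoints. -/
theorem mul_add_le_div_log {a c lo hi N : ℝ} (ha : 0 ≤ a) (hc : 0 ≤ c) (hN : 1 < N)
    (hlo : lo ≤ N) (hhi : N ≤ hi) (k : ℕ)
    (hlo' : (a * lo + c) * (k - 1 + lo * 0.36788 ^ k) ≤ lo)
    (hhi' : (a * hi + c) * (k - 1 + hi * 0.36788 ^ k) ≤ hi) :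
    a * N + c ≤ N / Real.log N := by
  set u : ℝ := 0.36788 ^ k
  have hu : 0 ≤ u := by positivity
  have hconvex : ConvexOn ℝ Set.univ fun z ↦
      a * u * z ^ 2 + ((a * (k - 1) + c * u - 1) * z + c * (k - 1)) :=
    (even_two.convexOn_pow.smul (mul_nonneg ha hu)).add <|
      ((LinearMap.mul ℝ ℝ (a * (k - 1) + c * u - 1)).convexOn convex_univ).add_const _
  have hmax := hconvex.le_max_of_mem_Icc (Set.mem_univ lo) (Set.mem_univ hi) ⟨hlo, hhi⟩
  have hquad : (a * N + c) * (k - 1 + N * u) ≤ N := by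
    have := hmax.trans (max_le (by linarith : _ ≤ (0 : ℝ)) (by linarith))
    linarith
  rw [le_div_iff₀ (Real.log_pos hN)]
  exact le_trans (by gcongr; exact log_le_tangent (by linarith) k) hquad

theorem sigma_one_prime {p : ℕ} (hp : p.Prime) : σ 1 p = p + 1 := by
  simp [ArithmeticFunction.sigma_one_apply, hp.sum_divisors]

theorem sieveBoundSix_one (N : ℝ) : sieveBoundSix 1 N = 1 / 6 * N + 2 := by
  have hM : squarefreeCoprime 6 1 = {1} := by decide +kernel
  norm_num [sieveBoundSix, invTotientSum, sigmaDivTotientSum, hM]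
  ring

theorem sieveBoundSix_five (N : ℝ) : sieveBoundSix 5 N = 2 / 15 * N + 6 := by
  have hM : squarefreeCoprime 6 5 = {1, 5} := by decide +kernel
  have hS : invTotientSum (squarefreeCoprime 6 5) = 5 / 4 := by
    norm_num [invTotientSum, hM, Nat.totient_prime]
  have hH : sigmaDivTotientSum (squarefreeCoprime 6 5) = 5 / 2 := by
    norm_num [sigmaDivTotientSum, hM, Nat.totient_prime, sigma_one_prime]
  rw [sieveBoundSix, hS, hH]
  norm_num
  ring

theorem sieveBoundSix_twenty_three (N : ℝ) :
    sieveBoundSix 23 N = 1320 / 13967 * N + ((75454 / 13967) ^ 2 + 5) := by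
  have hM : squarefreeCoprime 6 23 = {1, 5, 7, 11, 13, 17, 19, 23} := by decide +kernel
  have hS : invTotientSum (squarefreeCoprime 6 23) = 13967 / 7920 := by
    norm_num [invTotientSum, hM, Nat.totient_prime]
  have hH : sigmaDivTotientSum (squarefreeCoprime 6 23) = 37727 / 3960 := by
    norm_num [sigmaDivTotientSum, hM, Nat.totient_prime, sigma_one_prime]
  rw [sieveBoundSix, hS, hH]
  norm_num
  ring

theorem exists_sieveBoundSix_le_of_le {N : ℝ} (hN : 1 < N) (hN' : N ≤ 25600) :
    ∃ D, 1 ≤ D ∧ sieveBoundSix D N ≤ N / Real.log N := by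
  rcases le_total N 300 with h300 | h300
  · refine ⟨1, le_rfl, ?_⟩
    rw [sieveBoundSix_one]
    have h {lo hi : ℝ} := mul_add_le_div_log (a := 1 / 6) (c := 2) (lo := lo) (hi := hi)
      (by norm_num) (by norm_num) hN
    rcases le_total N 4.3 with h4 | h4
    · exact h hN.le h4 1 (by norm_num) (by norm_num)
    rcases le_total N 20 with h20 | h20
    · exact h h4 h20 2 (by norm_num) (by norm_num)
    rcases le_total N 130 with h130 | h130
    · exact h h20 h130 4 (by norm_num) (by norm_num)
    · exact h h130 h300 6 (by norm_num) (by norm_num)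
  rcases le_total N 1300 with h1300 | h1300
  · refine ⟨5, by simp, ?_⟩
    rw [sieveBoundSix_five]
    exact mul_add_le_div_log (by norm_num) (by norm_num) hN h300 h1300 7 (by norm_num) (by norm_num)
  · refine ⟨23, by simp, ?_⟩
    rw [sieveBoundSix_twenty_three]
    have h {lo hi : ℝ} := mul_add_le_div_log (a := 1320 / 13967) (c := (75454 / 13967) ^ 2 + 5)
      (lo := lo) (hi := hi) (by norm_num) (by norm_num) hN
    rcases le_total N 9000 with h9000 | h9000
    · exact h h1300 h9000 8 (by norm_num) (by norm_num)
    · exact h h9000 hN' 10 (by norm_num) (by norm_num)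

theorem sieveBoundSix_six_mul_sub_one_le {j : ℕ} (hj : 1 ≤ j) {N : ℝ} (hN : 0 ≤ N) :
    sieveBoundSix (6 * j - 1) N ≤
      N / (2 * (3.6 + Real.log j)) + 114.07 * (j / (3.6 + Real.log j)) ^ 2 + (j + 1) := by
  have : 0 < 3.6 + Real.log j := by
    have := Real.log_natCast_nonneg j
    linarith
  have hS := log_le_invTotientSum_six hj
  have hH := sigmaDivTotientSum_six_le hj
  set S := invTotientSum (squarefreeCoprime 6 (6 * j - 1))
  set H := sigmaDivTotientSum (squarefreeCoprime 6 (6 * j - 1))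
  have hH0 : 0 ≤ H := sum_nonneg fun _ _ ↦ by positivity
  calc sieveBoundSix (6 * j - 1) N
      = N / (6 * S) + (H / S) ^ 2 + (j + 1) := by
        rw [sieveBoundSix, show (6 * j - 1 + 1) / 6 = j by lia, add_assoc _ (j : ℝ)]
    _ ≤ N / (6 * ((3.6 + Real.log j) / 3)) + (3.56 * j / ((3.6 + Real.log j) / 3)) ^ 2 +
          (j + 1) := by
        have : 0 ≤ H / S := div_nonneg hH0 (invTotientSum_nonneg _)
        gcongr
    _ = N / (2 * (3.6 + Real.log j)) + 10.68 ^ 2 * (j / (3.6 + Real.log j)) ^ 2 + (j + 1) := by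
        field_simp
        ring
    _ ≤ _ := by
        gcongr
        norm_num

theorem add_one_le_mul_sq_div_log {j : ℝ} (hj : 8 ≤ j) :
    j + 1 ≤ 5.9 * (j / (3.6 + Real.log j)) ^ 2 := by
  obtain ⟨t, ht, rfl⟩ : ∃ t, 2.8 ≤ t ∧ j = t ^ 2 :=
    ⟨√j, Real.le_sqrt_of_sq_le (by linarith), (Real.sq_sqrt (by linarith)).symm⟩
  have hlog : Real.log (t ^ 2) ≤ t - 0.613 := by
    have h := Real.log_le_sub_one_of_pos (show 0 < t / 2 by linarith)
    rw [Real.log_div (by linarith) two_ne_zero] at h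
    rw [Real.log_pow]
    push_cast
    linarith [Real.log_two_lt_d9]
  have hℓ : 0 < 3.6 + Real.log (t ^ 2) := by
    have := Real.log_nonneg (show 1 ≤ t ^ 2 by nlinarith)
    linarith
  have hpoly : (t ^ 2 + 1) * (2.987 + t) ^ 2 ≤ 5.9 * (t ^ 2) ^ 2 := by
    obtain ⟨s, hs, rfl⟩ : ∃ s, 0 ≤ s ∧ t = 2.8 + s := ⟨t - 2.8, by linarith, by ring⟩
    rw [← sub_nonneg]
    ring_nf
    positivity
  rw [div_pow, mul_div_assoc', le_div_iff₀ (by positivity)]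
  calc (t ^ 2 + 1) * (3.6 + Real.log (t ^ 2)) ^ 2 ≤ (t ^ 2 + 1) * (2.987 + t) ^ 2 := by
        gcongr ?_ * ?_ ^ 2
        linarith
    _ ≤ _ := hpoly

theorem mul_sq_le_mul_log_sub_log {j x : ℝ} (hj : 8 ≤ j) (hjx : j ≤ x) (hxj : x ≤ j + 1) :
    0.6 * j ^ 2 ≤ x ^ 2 * (3.6 + Real.log j - Real.log (20 * x)) := by
  obtain ⟨y, rfl⟩ : ∃ y, x = j * y := ⟨x / j, by field_simp⟩
  have hy1 : 1 ≤ y := by nlinarith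
  have hy2 : y ≤ 1.125 := by nlinarith
  have hgap : 1.6042 - y ≤ 3.6 + Real.log j - Real.log (20 * (j * y)) := by
    rw [Real.log_mul (by norm_num) (by positivity), Real.log_mul (by positivity) (by positivity)]
    have h20 := log_le_tangent (N := 20) (by norm_num) 3
    norm_num at h20
    linarith [Real.log_le_sub_one_of_pos (show 0 < y by linarith)]
  have hpoly : 0.6 ≤ y ^ 2 * (1.6042 - y) := by
    nlinarith [mul_nonneg (sub_nonneg.2 hy1) (sub_nonneg.2 hy2)]
  calc 0.6 * j ^ 2 ≤ y ^ 2 * (1.6042 - y) * j ^ 2 := by gcongr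
    _ = (j * y) ^ 2 * (1.6042 - y) := by ring
    _ ≤ _ := by gcongr

theorem exists_sieveBoundSix_le_of_ge {N : ℝ} (hN : 25600 ≤ N) :
    ∃ D, 1 ≤ D ∧ sieveBoundSix D N ≤ N / Real.log N := by
  obtain ⟨x, hx, rfl⟩ : ∃ x, 8 ≤ x ∧ N = (20 * x) ^ 2 :=
    ⟨√N / 20, by linarith [Real.le_sqrt_of_sq_le (show (160 : ℝ) ^ 2 ≤ N by linarith)],
      by rw [mul_div_cancel₀ _ (by norm_num), Real.sq_sqrt (by linarith)]⟩
  set j := ⌊x⌋₊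
  have hjx : (j : ℝ) ≤ x := Nat.floor_le (by linarith)
  have hj8 : 8 ≤ j := Nat.le_floor (by exact_mod_cast hx)
  have hj8' : (8 : ℝ) ≤ j := by exact_mod_cast hj8
  have hgap := mul_sq_le_mul_log_sub_log hj8' hjx (Nat.lt_floor_add_one x).le
  have hsmall := add_one_le_mul_sq_div_log hj8'
  have hL : 0 < Real.log (20 * x) := Real.log_pos (by linarith)
  set L := Real.log (20 * x)
  set ℓ := 3.6 + Real.log j
  have hLℓ : L ≤ ℓ := by
    by_contra! h
    nlinarith [mul_pos_of_neg_of_neg (sub_neg.2 h) (neg_one_lt_zero (R := ℝ)), sq_nonneg x]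
  have hℓ : 0 < ℓ := hL.trans_le hLℓ
  refine ⟨6 * j - 1, by lia, ?_⟩
  calc sieveBoundSix (6 * j - 1) ((20 * x) ^ 2)
      ≤ (20 * x) ^ 2 / (2 * ℓ) + 114.07 * (j / ℓ) ^ 2 + (j + 1) :=
        sieveBoundSix_six_mul_sub_one_le (by lia) (by positivity)
    _ ≤ (20 * x) ^ 2 / (2 * ℓ) + 120 * (j / ℓ) ^ 2 := by
        linarith [sq_nonneg (j / ℓ)]
    _ = (20 * x) ^ 2 / (2 * ℓ) + 200 * (0.6 * j ^ 2) / (ℓ * ℓ) := by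
        field_simp
        ring
    _ ≤ (20 * x) ^ 2 / (2 * ℓ) + 200 * (x ^ 2 * (ℓ - L)) / (L * ℓ) := by
        gcongr
    _ = (20 * x) ^ 2 / (2 * L) := by
        field_simp
        ring
    _ = (20 * x) ^ 2 / Real.log ((20 * x) ^ 2) := by
        rw [Real.log_pow]
        rfl

theorem exists_sieveBoundSix_le {N : ℝ} (hN : 1 < N) :
    ∃ D, 1 ≤ D ∧ sieveBoundSix D N ≤ N / Real.log N :=
  (le_total N 25600).elim (exists_sieveBoundSix_le_of_le hN) exists_sieveBoundSix_le_of_ge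

/-! ### The Brun–Titchmarsh inequality -/

theorem mod_six_of_prime {p : ℕ} (hp : p.Prime) (h3 : 3 < p) : p % 6 = 1 ∨ p % 6 = 5 :=
  coprime_six_iff.1 <| Nat.Coprime.mul_right (n := 3)
    ((Nat.coprime_primes hp Nat.prime_two).2 (by lia))
    ((Nat.coprime_primes hp Nat.prime_three).2 (by lia))

theorem card_primesModEq_filter_three_lt_filter_le {Q : ℕ} (h6 : 6 ∣ Q) (x : ℝ) (c D : ℕ) :
    #{p ∈ primesModEq x Q c | 3 < p ∧ p ≤ D} ≤ (D + 1) / 6 := by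
  have hmem {p : ℕ} (hp : p ∈ {p ∈ primesModEq x Q c | 3 < p ∧ p ≤ D}) :
      p ≤ D ∧ 3 < p ∧ (p % 6 = 1 ∨ p % 6 = 5) ∧ p % 6 = c % 6 := by
    obtain ⟨hp, h3, hpD⟩ := mem_filter.1 hp
    obtain ⟨-, hp, hpc⟩ := mem_primesModEq.1 hp
    exact ⟨hpD, h3, mod_six_of_prime hp h3, hpc.of_dvd h6⟩
  calc #{p ∈ primesModEq x Q c | 3 < p ∧ p ≤ D} ≤ #(Ioc 0 ((D + 1) / 6)) :=
        card_le_card_of_injOn (fun p ↦ (p + 1) / 6)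
          (fun p hp ↦ by have := hmem hp; simp only [coe_Ioc, Set.mem_Ioc]; lia)
          fun p hp p' hp' h ↦ by have := hmem hp; have := hmem hp'; simp only at h; lia
    _ = (D + 1) / 6 := by simp

theorem card_primesModEq_filter_three_lt_le {Q : ℕ} (h6 : 6 ∣ Q) (x : ℝ) (c D : ℕ) :
    #{p ∈ primesModEq x Q c | 3 < p} ≤ (D + 1) / 6 + #{p ∈ primesModEq x Q c | D < p} := by
  have hsub : {p ∈ primesModEq x Q c | 3 < p} ⊆
      {p ∈ primesModEq x Q c | 3 < p ∧ p ≤ D} ∪ {p ∈ primesModEq x Q c | D < p} := fun p hp ↦ by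
    simp only [mem_union, mem_filter] at hp ⊢
    lia
  calc #{p ∈ primesModEq x Q c | 3 < p}
      ≤ #{p ∈ primesModEq x Q c | 3 < p ∧ p ≤ D} + #{p ∈ primesModEq x Q c | D < p} :=
        (card_le_card hsub).trans (card_union_le _ _)
    _ ≤ _ := Nat.add_le_add_right (card_primesModEq_filter_three_lt_filter_le h6 x c D) _

theorem card_primesModEq_filter_three_lt_add_one_le {Q : ℕ} (hQ : Q ≠ 0) (h6 : 6 ∣ Q) {x N : ℝ}
    (hN : 1 < N) (hNQ : N ≤ 2 * (x / Q.totient)) (c : ℕ) :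
    (#{p ∈ primesModEq x Q c | 3 < p} : ℝ) + 1 ≤ 2 * (x / Q.totient) / Real.log N := by
  obtain ⟨D, hD, hbound⟩ := exists_sieveBoundSix_le hN
  have hx : 0 ≤ x := by
    by_contra! hx
    linarith [div_nonpos_of_nonpos_of_nonneg hx.le (Nat.cast_nonneg (α := ℝ) Q.totient)]
  have hlarge := card_primesModEq_filter_lt_le hQ h6 hD hx c
  have hcard : (#{p ∈ primesModEq x Q c | 3 < p} : ℝ) ≤
      ((D + 1) / 6 : ℕ) + #{p ∈ primesModEq x Q c | D < p} := by
    exact_mod_cast card_primesModEq_filter_three_lt_le h6 x c D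
  rw [sieveBoundSix] at hbound
  have hS := one_le_invTotientSum_squarefreeCoprime 6 hD
  set S := invTotientSum (squarefreeCoprime 6 D)
  set H := sigmaDivTotientSum (squarefreeCoprime 6 D)
  set X := x / (Q.totient : ℝ)
  set t := (((D + 1) / 6 : ℕ) : ℝ)
  have : 0 ≤ t := Nat.cast_nonneg _
  have hrest : (H / S) ^ 2 + t + 1 ≤ N * (1 / Real.log N - 1 / (6 * S)) := by
    rw [mul_sub, mul_one_div, mul_one_div]
    linarith
  have hgap : 0 ≤ 1 / Real.log N - 1 / (6 * S) :=
    (mul_nonneg_iff_of_pos_left (by linarith)).1 (le_trans (by positivity) hrest)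
  have hmain : ((Nat.totient 6 : ℕ) : ℝ) / (6 : ℕ) * X / S = 2 * X * (1 / (6 * S)) := by
    rw [show Nat.totient 6 = 2 by decide]
    push_cast
    field_simp
  calc (#{p ∈ primesModEq x Q c | 3 < p} : ℝ) + 1
      ≤ 2 * X * (1 / (6 * S)) + ((H / S) ^ 2 + t + 1) := by linarith
    _ ≤ 2 * X * (1 / (6 * S)) + 2 * X * (1 / Real.log N - 1 / (6 * S)) := by
        gcongr
        exact hrest.trans (mul_le_mul_of_nonneg_right hNQ hgap)
    _ = 2 * X / Real.log N := by ring

theorem exists_forall_modEq_lcm (m q s r : ℕ) :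
    ∃ c, ∀ n, n ≡ s [MOD m] → n ≡ r [MOD q] → n ≡ c [MOD m.lcm q] := by
  by_cases h : ∃ c, c ≡ s [MOD m] ∧ c ≡ r [MOD q]
  · obtain ⟨c, hcs, hcr⟩ := h
    refine ⟨c, fun n hns hnr ↦ Nat.modEq_iff_dvd.2 (Int.natCast_dvd.2 (Nat.lcm_dvd ?_ ?_))⟩
    · exact Int.natCast_dvd.1 (Nat.modEq_iff_dvd.1 (hns.trans hcs.symm))
    · exact Int.natCast_dvd.1 (Nat.modEq_iff_dvd.1 (hnr.trans hcr.symm))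
  · exact ⟨0, fun n hns hnr ↦ (h ⟨n, hns, hnr⟩).elim⟩

theorem totient_lcm_six_le {q : ℕ} (hq : 0 < q) : ((Nat.lcm 6 q).totient : ℝ) ≤ 2 * q := by
  have hQ : 0 < Nat.lcm 6 q := Nat.lcm_pos (by simp) hq
  have hQ' : (0 : ℝ) < Nat.lcm 6 q := Nat.cast_pos.2 hQ
  have hle : ((Nat.lcm 6 q : ℕ) : ℝ) ≤ 6 * q := by
    exact_mod_cast Nat.le_of_dvd (by lia) (Nat.lcm_dvd_mul 6 q)
  have h := totient_div_self_le_of_dvd hQ.ne' (Nat.dvd_lcm_left 6 q)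
  rw [show Nat.totient 6 = 2 by decide, div_le_iff₀ hQ'] at h
  push_cast at h
  linarith

theorem two_mul_totient_le_totient_lcm_six {q : ℕ} (hq : 0 < q) (h3 : ¬3 ∣ q) :
    2 * q.totient ≤ (Nat.lcm 6 q).totient := by
  have hcop : Nat.Coprime 3 q := Nat.prime_three.coprime_iff_not_dvd.2 h3
  have hdvd : 3 * q ∣ Nat.lcm 6 q :=
    hcop.mul_dvd_of_dvd_of_dvd ((by decide : 3 ∣ 6).trans (Nat.dvd_lcm_left 6 q))
      (Nat.dvd_lcm_right 6 q)
  calc 2 * q.totient = (3 * q).totient := by rw [Nat.totient_mul hcop]; rfl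
    _ ≤ (Nat.lcm 6 q).totient :=
      Nat.le_of_dvd (Nat.totient_pos.2 (Nat.lcm_pos (by simp) hq)) (Nat.totient_dvd_of_dvd hdvd)

theorem card_primesModEq_filter_modEq_six_add_one_le {q : ℕ} (hq : 0 < q) {x : ℝ} (hqx : q < x)
    (r s : ℕ) :
    (#{p ∈ primesModEq x q r | 3 < p ∧ p ≡ s [MOD 6]} : ℝ) + 1 ≤
      2 * (x / (Nat.lcm 6 q).totient) / Real.log (x / q) := by
  have hq0 : (0 : ℝ) < q := Nat.cast_pos.2 hq
  have hQ : 0 < Nat.lcm 6 q := Nat.lcm_pos (by simp) hq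
  have hφQ : (0 : ℝ) < (Nat.lcm 6 q).totient := Nat.cast_pos.2 (Nat.totient_pos.2 hQ)
  obtain ⟨c, hc⟩ := exists_forall_modEq_lcm 6 q s r
  have hsub : {p ∈ primesModEq x q r | 3 < p ∧ p ≡ s [MOD 6]} ⊆
      {p ∈ primesModEq x (Nat.lcm 6 q) c | 3 < p} := fun p hp ↦ by
    obtain ⟨hp, h3, hps⟩ := mem_filter.1 hp
    obtain ⟨hpx, hp, hpr⟩ := mem_primesModEq.1 hp
    exact mem_filter.2 ⟨mem_primesModEq.2 ⟨hpx, hp, hc p hps hpr⟩, h3⟩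
  have hNQ : x / q ≤ 2 * (x / (Nat.lcm 6 q).totient) := by
    rw [mul_div_assoc', div_le_div_iff₀ hq0 hφQ, mul_right_comm, mul_comm x]
    exact mul_le_mul_of_nonneg_right (totient_lcm_six_le hq) (hq0.trans hqx).le
  calc _ ≤ (#{p ∈ primesModEq x (Nat.lcm 6 q) c | 3 < p} : ℝ) + 1 := by gcongr
    _ ≤ _ := card_primesModEq_filter_three_lt_add_one_le hQ.ne' (Nat.dvd_lcm_left 6 q)
      ((one_lt_div hq0).2 hqx) hNQ c

theorem exists_forall_prime_modEq_of_three_dvd {q : ℕ} (h3 : 3 ∣ q) (r : ℕ) :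
    ∃ u s, ∀ p : ℕ, p.Prime → p ≡ r [MOD q] → p = u ∨ 3 < p ∧ p ≡ s [MOD 6] := by
  have hmod {p : ℕ} (hp : p.Prime) (hpr : p ≡ r [MOD q]) :
      p % 3 = r % 3 ∧ (p = 2 ∨ p = 3 ∨ 3 < p ∧ (p % 6 = 1 ∨ p % 6 = 5)) := by
    refine ⟨hpr.of_dvd h3, ?_⟩
    have := hp.two_le
    have := mod_six_of_prime hp
    lia
  by_cases hr : r % 3 = 2
  · refine ⟨2, 5, fun p hp hpr ↦ ?_⟩
    have := hmod hp hpr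
    simp only [Nat.ModEq]
    lia
  · refine ⟨3, 1, fun p hp hpr ↦ ?_⟩
    have := hmod hp hpr
    have hp3 : p % 3 = 0 → p = 3 := fun h ↦
      ((Nat.prime_dvd_prime_iff_eq Nat.prime_three hp).1 (Nat.dvd_of_mod_eq_zero h)).symm
    simp only [Nat.ModEq]
    lia

theorem card_primesModEq_le_of_three_dvd {q : ℕ} (hq : 0 < q) {x : ℝ} (hqx : q < x) (h3 : 3 ∣ q)
    (r : ℕ) : (#(primesModEq x q r) : ℝ) ≤ 2 * (x / q.totient) / Real.log (x / q) := by
  have hq0 : (0 : ℝ) < q := Nat.cast_pos.2 hq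
  have hx : 0 < x := hq0.trans hqx
  have hlog : 0 < Real.log (x / q) := Real.log_pos ((one_lt_div hq0).2 hqx)
  have : 0 < q.totient := Nat.totient_pos.2 hq
  obtain ⟨u, s, hus⟩ := exists_forall_prime_modEq_of_three_dvd h3 r
  have hsub : primesModEq x q r ⊆ insert u {p ∈ primesModEq x q r | 3 < p ∧ p ≡ s [MOD 6]} :=
    fun p hp ↦ by
      obtain ⟨-, hprime, hpr⟩ := mem_primesModEq.1 hp
      exact mem_insert.2 ((hus p hprime hpr).imp_right fun h ↦ mem_filter.2 ⟨hp, h⟩)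
  have hφ : q.totient ≤ (Nat.lcm 6 q).totient :=
    Nat.le_of_dvd (Nat.totient_pos.2 (Nat.lcm_pos (by simp) hq))
      (Nat.totient_dvd_of_dvd (Nat.dvd_lcm_right 6 q))
  calc (#(primesModEq x q r) : ℝ)
      ≤ #{p ∈ primesModEq x q r | 3 < p ∧ p ≡ s [MOD 6]} + 1 := by
        exact_mod_cast (card_le_card hsub).trans (card_insert_le _ _)
    _ ≤ 2 * (x / (Nat.lcm 6 q).totient) / Real.log (x / q) :=
        card_primesModEq_filter_modEq_six_add_one_le hq hqx r s
    _ ≤ _ := by gcongr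

theorem card_primesModEq_le_of_not_three_dvd {q : ℕ} (hq : 0 < q) {x : ℝ} (hqx : q < x)
    (h3 : ¬3 ∣ q) (r : ℕ) :
    (#(primesModEq x q r) : ℝ) ≤ 2 * (x / q.totient) / Real.log (x / q) := by
  have hq0 : (0 : ℝ) < q := Nat.cast_pos.2 hq
  have hx : 0 < x := hq0.trans hqx
  have hlog : 0 < Real.log (x / q) := Real.log_pos ((one_lt_div hq0).2 hqx)
  have : 0 < q.totient := Nat.totient_pos.2 hq
  have hclass := card_primesModEq_filter_modEq_six_add_one_le hq hqx r
  set C : ℕ → Finset ℕ := fun s ↦ {p ∈ primesModEq x q r | 3 < p ∧ p ≡ s [MOD 6]}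
  have hsub : primesModEq x q r ⊆ {2, 3} ∪ (C 1 ∪ C 5) := fun p hp ↦ by
    have hprime := (mem_primesModEq.1 hp).2.1
    have hsmall : p = 2 ∨ p = 3 ∨ 3 < p := by
      have := hprime.two_le
      lia
    simp only [mem_union, mem_insert, mem_singleton, C, mem_filter, hp, true_and]
    rcases hsmall with h | h | h
    · exact .inl (.inl h)
    · exact .inl (.inr h)
    · exact .inr ((mod_six_of_prime hprime h).imp (⟨h, ·⟩) (⟨h, ·⟩))
  have hcard : #(primesModEq x q r) ≤ (#(C 1) + 1) + (#(C 5) + 1) :=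
    calc #(primesModEq x q r) ≤ #{2, 3} + #(C 1 ∪ C 5) :=
          (card_le_card hsub).trans (card_union_le _ _)
      _ ≤ 2 + (#(C 1) + #(C 5)) := by gcongr; exacts [le_rfl, card_union_le _ _]
      _ = _ := by ring
  have hφ : 2 * (q.totient : ℝ) ≤ (Nat.lcm 6 q).totient := by
    exact_mod_cast two_mul_totient_le_totient_lcm_six hq h3
  calc (#(primesModEq x q r) : ℝ) ≤ (#(C 1) + 1) + (#(C 5) + 1) := by exact_mod_cast hcard
    _ ≤ 2 * (x / (Nat.lcm 6 q).totient) / Real.log (x / q) +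
          2 * (x / (Nat.lcm 6 q).totient) / Real.log (x / q) := add_le_add (hclass 1) (hclass 5)
    _ = 2 * (2 * (x / (Nat.lcm 6 q).totient)) / Real.log (x / q) := by ring
    _ ≤ 2 * (2 * (x / (2 * q.totient))) / Real.log (x / q) := by gcongr
    _ = _ := by field_simp

theorem brun_titchmarsh {q : ℕ} (hq : 0 < q) {x : ℝ} (hqx : q < x) (r : ℕ) :
    (#(primesModEq x q r) : ℝ) ≤ 2 * (x / q.totient) / Real.log (x / q) := by
  by_cases h3 : 3 ∣ q
  · exact card_primesModEq_le_of_three_dvd hq hqx h3 r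
  · exact card_primesModEq_le_of_not_three_dvd hq hqx h3 r

theorem chebyshevThetaAP_nonneg (x : ℝ) (q a : ℕ) : 0 ≤ chebyshevThetaAP x q a :=
  sum_nonneg fun p _ ↦ Real.log_natCast_nonneg p

theorem chebyshevThetaAP_le {q : ℕ} (hq : 0 < q) {x : ℝ} (hqx : q < x) (a : ℕ) :
    chebyshevThetaAP x q a ≤ 2 * (x / q.totient) / Real.log (x / q) * Real.log x := by
  have hq1 : (1 : ℝ) ≤ q := Nat.one_le_cast.2 hq
  have hx : 1 < x := hq1.trans_lt hqx
  have hprimes : {p ∈ range (⌊x⌋₊ + 1) | p.Prime ∧ p % q = a % q} = primesModEq x q a := by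
    ext p
    rw [mem_filter, mem_range, Nat.lt_succ_iff, mem_primesModEq, Nat.ModEq]
  rw [chebyshevThetaAP, hprimes]
  calc ∑ p ∈ primesModEq x q a, Real.log p ≤ #(primesModEq x q a) * Real.log x := by
        rw [← nsmul_eq_mul]
        refine sum_le_card_nsmul _ _ _ fun p hp ↦ ?_
        obtain ⟨hpx, hp, -⟩ := mem_primesModEq.1 hp
        exact Real.log_le_log (Nat.cast_pos.2 hp.pos) ((Nat.le_floor_iff (by linarith)).1 hpx)
    _ ≤ _ := mul_le_mul_of_nonneg_right (brun_titchmarsh hq hqx a) (Real.log_nonneg hx.le)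

theorem abs_chebyshevThetaAP_sub_le_general {B : ℝ} (hB : B < 1) {x : ℝ} (hx : 1 < x) {q : ℕ}
    (hq : 0 < q) (hqx : (q : ℝ) ≤ x ^ B) (a : ℕ) :
    |chebyshevThetaAP x q a - x / q.totient| ≤ (1 + B) / (1 - B) * (x / q.totient) := by
  have hq1 : (1 : ℝ) ≤ q := Nat.one_le_cast.2 hq
  have hlogx : 0 < Real.log x := Real.log_pos hx
  have hB0 : 0 ≤ B := by
    by_contra! h
    exact (hq1.trans hqx).not_gt (Real.rpow_lt_one_of_one_lt_of_neg hx h)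
  have hlog : (1 - B) * Real.log x ≤ Real.log (x / q) := by
    have h := Real.log_le_log (by linarith) hqx
    rw [Real.log_rpow (by linarith)] at h
    rw [Real.log_div (by linarith) (by linarith)]
    linarith
  have hupper : chebyshevThetaAP x q a ≤ 2 / (1 - B) * (x / q.totient) :=
    calc chebyshevThetaAP x q a
        ≤ 2 * (x / q.totient) / Real.log (x / q) * Real.log x :=
          chebyshevThetaAP_le hq (hqx.trans_lt (Real.rpow_lt_self_of_one_lt hx hB)) a
      _ ≤ 2 * (x / q.totient) / ((1 - B) * Real.log x) * Real.log x := by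
          have : 0 < (1 - B) * Real.log x := mul_pos (sub_pos.2 hB) hlogx
          gcongr
      _ = 2 / (1 - B) * (x / q.totient) := by field_simp
  have hY : 0 ≤ x / q.totient := by positivity
  have hone : 1 ≤ (1 + B) / (1 - B) := by rw [le_div_iff₀ (sub_pos.2 hB)]; linarith
  have hsplit : 2 / (1 - B) = (1 + B) / (1 - B) + 1 := by
    have := (sub_pos.2 hB).ne'
    field_simp
    ring
  rw [hsplit] at hupper
  rw [abs_le]
  constructor <;> nlinarith [chebyshevThetaAP_nonneg x q a]

/-- For `0 < A < 1/2`, integers `n ≥ 2` and integers `a` with `316 < a ≤ n^A` and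
`gcd(a, n) = 1`, one has `|θ(n; a², n) − n/φ(a²)| ≤ ((1+2A)/(1−2A)) n/φ(a²)`. -/
theorem abs_chebyshevThetaAP_sub_le (A : ℝ) (hA0 : 0 < A) (hA : A < 1 / 2)
    (n : ℕ) (hn : 2 ≤ n) (a : ℕ) (ha : 316 < a) (haA : (a : ℝ) ≤ (n : ℝ) ^ A)
    (han : Nat.gcd a n = 1) :
    |chebyshevThetaAP n (a ^ 2) n - (n : ℝ) / (Nat.totient (a ^ 2))| ≤
      ((1 + 2 * A) / (1 - 2 * A)) * ((n : ℝ) / (Nat.totient (a ^ 2))) := by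
  have hsq : ((a ^ 2 : ℕ) : ℝ) ≤ (n : ℝ) ^ (2 * A) := by
    rw [mul_comm, Real.rpow_mul n.cast_nonneg, Real.rpow_two, Nat.cast_pow]
    gcongr
  exact abs_chebyshevThetaAP_sub_le_general (by linarith) (by exact_mod_cast hn)
    (by positivity) hsq n
end

section
/- For each integer a with 2 ≤ a ≤ 316, there exist real constants c > 0 and x₀ with x₀ ≤ 4.81·10^9 such that for every integer n co-prime to a and every real x ≥ x₀, one has |θ(x; a², n) − x/φ(a²)| < c · x / log x. -/
open Finset

/-!
The classical 3-4-1 inequality bounds `1 / L(s, χ)` by `|im s| ^ ε` just to the right of the line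
`re s = 1`; since `L` itself is `O(|im s| ^ δ)` for every `δ > 0` in a small strip around that line,
Cauchy's estimates give the same bound for every derivative of `L`, hence for the second derivative
of its logarithmic derivative. Differentiating twice weights the coefficients by `log² n`, and
character orthogonality then controls the Dirichlet series of `(Λ(n) 1_{n ≡ b} - 1 / φ(q)) log² n`
up to the line `re s = 1`, the pole at `s = 1` having cancelled. On the abscissa `1 + 1 / log x` the
Perron formula with the Fejér weight bounds the Riesz mean of these coefficients by `O(x ^ 2)`, with
no loss of logarithms. A one-sided Tauberian argument turns this into `O(x log x)` for their partial
sums, and removing the weights leaves `ψ(x; q, b) - x / φ(q) = O(x / log x)`. Prime powers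
contribute only `O(√x)`.
-/

namespace PrimesInAP

open Complex Filter Topology Asymptotics

section EulerMaclaurin

/-- The Euler–Maclaurin correction `w ^ (-s) - ∫ u in w..w + 1, u ^ (-s)` to the term `w ^ (-s)` of
the Hurwitz zeta series, with the integral evaluated so that it is visibly analytic in `s ≠ 1`. -/
noncomputable def eulerMaclaurinTerm (w : ℝ) (s : ℂ) : ℂ :=
  (w : ℂ) ^ (-s) - (((w + 1 : ℝ) : ℂ) ^ (1 - s) - (w : ℂ) ^ (1 - s)) / (1 - s)

variable {w : ℝ} {s : ℂ}

lemma eulerMaclaurinTerm_eq_integral (hw : 0 < w) (hs : s ≠ 1) :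
    eulerMaclaurinTerm w s = ∫ u : ℝ in w..w + 1, ((w : ℂ) ^ (-s) - (u : ℂ) ^ (-s)) := by
  have h0 : (0 : ℝ) ∉ Set.uIcc w (w + 1) := by
    rw [Set.uIcc_of_le (by linarith)]
    exact fun h => hw.not_ge h.1
  rw [intervalIntegral.integral_sub intervalIntegrable_const
      (intervalIntegral.intervalIntegrable_cpow (Or.inr h0)),
    intervalIntegral.integral_const, integral_cpow (Or.inr ⟨by simpa [neg_inj] using hs, h0⟩),
    eulerMaclaurinTerm, neg_add_eq_sub]
  simp

lemma differentiableAt_eulerMaclaurinTerm (hw : 0 < w) (hs : s ≠ 1) :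
    DifferentiableAt ℂ (eulerMaclaurinTerm w) s := by
  have hw₀ : (w : ℂ) ≠ 0 := ofReal_ne_zero.2 hw.ne'
  have hw₁ : ((w + 1 : ℝ) : ℂ) ≠ 0 := ofReal_ne_zero.2 (by positivity)
  have hsub : DifferentiableAt ℂ (fun z : ℂ => 1 - z) s := by fun_prop
  exact (differentiableAt_id.neg.const_cpow (Or.inl hw₀)).sub
    (((hsub.const_cpow (Or.inl hw₁)).sub (hsub.const_cpow (Or.inl hw₀))).div hsub
      (sub_ne_zero.2 hs.symm))

lemma norm_ofReal_cpow_neg_le {u : ℝ} (hw : 0 < w) (hu : w ≤ u) (hs : 0 ≤ s.re) :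
    ‖(u : ℂ) ^ (-s)‖ ≤ w ^ (-s.re) := by
  rw [norm_cpow_eq_rpow_re_of_pos (hw.trans_le hu), neg_re]
  exact Real.rpow_le_rpow_of_nonpos hw hu (neg_nonpos.2 hs)

lemma norm_ofReal_cpow_neg_sub_le {u : ℝ} (hw : 0 < w) (hu : w ≤ u) (hs : 0 ≤ s.re) :
    ‖(w : ℂ) ^ (-s) - (u : ℂ) ^ (-s)‖ ≤ ‖s‖ * w ^ (-s.re - 1) * (u - w) := by
  rcases eq_or_ne s 0 with rfl | hs₀
  · simp
  have hderiv : ∀ v ∈ Set.Icc w u, HasDerivWithinAt (fun v : ℝ => (v : ℂ) ^ (-s))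
      (-s * (v : ℂ) ^ (-s - 1)) (Set.Icc w u) v := fun v hv =>
    (hasDerivAt_ofReal_cpow_const (hw.trans_le hv.1).ne' (neg_ne_zero.2 hs₀)).hasDerivWithinAt
  have hbound : ∀ v ∈ Set.Icc w u, ‖-s * (v : ℂ) ^ (-s - 1)‖ ≤ ‖s‖ * w ^ (-s.re - 1) := by
    intro v hv
    rw [norm_mul, norm_neg, ← neg_add', ← neg_add', ← one_re, ← add_re]
    gcongr
    exact norm_ofReal_cpow_neg_le hw hv.1 (by simp only [add_re, one_re]; linarith)
  rw [norm_sub_rev, ← Real.norm_of_nonneg (sub_nonneg.2 hu)]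
  exact (convex_Icc w u).norm_image_sub_le_of_norm_hasDerivWithin_le hderiv hbound
    (Set.left_mem_Icc.2 hu) (Set.right_mem_Icc.2 hu)

lemma norm_eulerMaclaurinTerm_le_two_mul (hw : 0 < w) (hs : 0 ≤ s.re) (hs₁ : s ≠ 1) :
    ‖eulerMaclaurinTerm w s‖ ≤ 2 * w ^ (-s.re) := by
  rw [eulerMaclaurinTerm_eq_integral hw hs₁]
  refine (intervalIntegral.norm_integral_le_of_norm_le_const (C := 2 * w ^ (-s.re))
    fun u hu => ?_).trans (by simp)
  rw [Set.uIoc_of_le (by linarith)] at hu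
  rw [two_mul]
  exact norm_sub_le_of_le (norm_ofReal_cpow_neg_le hw le_rfl hs)
    (norm_ofReal_cpow_neg_le hw hu.1.le hs)

lemma norm_eulerMaclaurinTerm_le_norm_mul (hw : 0 < w) (hs : 0 ≤ s.re) (hs₁ : s ≠ 1) :
    ‖eulerMaclaurinTerm w s‖ ≤ ‖s‖ * w ^ (-s.re - 1) := by
  rw [eulerMaclaurinTerm_eq_integral hw hs₁]
  refine (intervalIntegral.norm_integral_le_of_norm_le_const (C := ‖s‖ * w ^ (-s.re - 1))
    fun u hu => ?_).trans (by simp)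
  rw [Set.uIoc_of_le (by linarith)] at hu
  exact (norm_ofReal_cpow_neg_sub_le hw hu.1.le hs).trans
    (mul_le_of_le_one_right (by positivity) (by linarith [hu.2]))

lemma norm_eulerMaclaurinTerm_le_interpolated {δ : ℝ} (hδ₀ : 0 ≤ δ) (hδ₁ : δ ≤ 1) (hw : 0 < w)
    (hs : 0 ≤ s.re) (hs₁ : s ≠ 1) :
    ‖eulerMaclaurinTerm w s‖ ≤ 2 * ‖s‖ ^ δ * w ^ (-s.re - δ) := by
  have hsplit : ‖eulerMaclaurinTerm w s‖ =
      ‖eulerMaclaurinTerm w s‖ ^ (1 - δ) * ‖eulerMaclaurinTerm w s‖ ^ δ := by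
    rw [← Real.rpow_add_of_nonneg (norm_nonneg _) (by linarith) hδ₀, sub_add_cancel, Real.rpow_one]
  calc ‖eulerMaclaurinTerm w s‖
      ≤ (2 * w ^ (-s.re)) ^ (1 - δ) * (‖s‖ * w ^ (-s.re - 1)) ^ δ := by
        rw [hsplit]
        have : 0 ≤ 1 - δ := by linarith
        gcongr
        · exact norm_eulerMaclaurinTerm_le_two_mul hw hs hs₁
        · exact norm_eulerMaclaurinTerm_le_norm_mul hw hs hs₁
    _ = 2 ^ (1 - δ) * ‖s‖ ^ δ * w ^ (-s.re - δ) := by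
        rw [Real.mul_rpow zero_le_two (by positivity),
          Real.mul_rpow (norm_nonneg s) (by positivity),
          ← Real.rpow_mul hw.le, ← Real.rpow_mul hw.le,
          show -s.re - δ = -s.re * (1 - δ) + (-s.re - 1) * δ by ring, Real.rpow_add hw]
        ring
    _ ≤ 2 * ‖s‖ ^ δ * w ^ (-s.re - δ) := by
        gcongr
        exact (Real.rpow_le_rpow_of_exponent_le one_le_two (by linarith)).trans_eq (Real.rpow_one 2)

end EulerMaclaurin

section HurwitzZeta

lemma ne_one_of_one_lt_re {s : ℂ} (hs : 1 < s.re) : s ≠ 1 := by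
  rintro rfl
  exact lt_irrefl _ hs

variable {α : ℝ}

lemma rpow_le_rpow_add_rpow {t p x r : ℝ} (ht : 0 < t) (hpx : p ≤ x) (hxr : x ≤ r) :
    t ^ x ≤ t ^ p + t ^ r := by
  rcases le_total t 1 with h | h
  · exact (Real.rpow_le_rpow_of_exponent_ge ht h hpx).trans (le_add_of_nonneg_right (by positivity))
  · exact (Real.rpow_le_rpow_of_exponent_le h hxr).trans (le_add_of_nonneg_left (by positivity))

lemma summable_nat_add_rpow {p : ℝ} (hα : 0 < α) (hp : p < -1) :
    Summable fun m : ℕ => ((m : ℝ) + α) ^ p := by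
  refine ((Real.summable_one_div_nat_add_rpow α (-p)).2 (by linarith)).congr fun m => ?_
  rw [abs_of_pos (by positivity), Real.rpow_neg (by positivity), one_div, inv_inv]

lemma summable_eulerMaclaurinTerm (hα : 0 < α) {s : ℂ} (hs : 0 < s.re) (hs₁ : s ≠ 1) :
    Summable fun m : ℕ => eulerMaclaurinTerm (m + α) s :=
  .of_norm_bounded ((summable_nat_add_rpow hα (by linarith)).mul_left ‖s‖) fun _ =>
    norm_eulerMaclaurinTerm_le_norm_mul (by positivity) hs.le hs₁

lemma differentiableOn_tsum_eulerMaclaurinTerm (hα : 0 < α) :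
    DifferentiableOn ℂ (fun s => ∑' m : ℕ, eulerMaclaurinTerm (m + α) s)
      {s | 0 < s.re ∧ s ≠ 1} := by
  intro s hs
  set U : Set ℂ := {z | s.re / 2 < z.re ∧ z ≠ 1} ∩ Metric.ball 0 (‖s‖ + 1)
  have hU : IsOpen U := ((isOpen_lt continuous_const continuous_re).inter isOpen_ne).inter
    Metric.isOpen_ball
  have hbound : ∀ m : ℕ, ∀ z ∈ U, ‖eulerMaclaurinTerm (m + α) z‖ ≤
      (‖s‖ + 1) * ((m + α) ^ (-(‖s‖ + 1) - 1) + (m + α) ^ (-(s.re / 2) - 1)) := by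
    rintro m z ⟨⟨hre, hz₁⟩, hz⟩
    rw [mem_ball_zero_iff] at hz
    refine (norm_eulerMaclaurinTerm_le_norm_mul (by positivity) (by linarith [hs.1]) hz₁).trans ?_
    gcongr
    exact rpow_le_rpow_add_rpow (by positivity) (by linarith [re_le_norm z]) (by linarith)
  have hsum := ((summable_nat_add_rpow hα (p := -(‖s‖ + 1) - 1)
    (by linarith [norm_nonneg s])).add (summable_nat_add_rpow hα (p := -(s.re / 2) - 1)
    (by linarith [hs.1]))).mul_left (‖s‖ + 1)
  have hdiff := differentiableOn_tsum_of_summable_norm hsum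
    (fun m z hz => (differentiableAt_eulerMaclaurinTerm (by positivity)
      hz.1.2).differentiableWithinAt) hU hbound
  exact (hdiff.differentiableAt (hU.mem_nhds ⟨⟨half_lt_self hs.1, hs.2⟩,
    by simp⟩)).differentiableWithinAt

lemma sum_range_eulerMaclaurinTerm (α : ℝ) (s : ℂ) (M : ℕ) :
    ∑ m ∈ range M, eulerMaclaurinTerm (m + α) s = ∑ m ∈ range M, 1 / ((m : ℂ) + α) ^ s
      - (((M + α : ℝ) : ℂ) ^ (1 - s) - (α : ℂ) ^ (1 - s)) / (1 - s) := by
  induction M with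
  | zero => simp
  | succ M ih =>
    rw [sum_range_succ, ih, sum_range_succ, eulerMaclaurinTerm, cpow_neg, one_div]
    push_cast
    rw [add_right_comm (M : ℂ) 1 (α : ℂ)]
    ring

lemma tendsto_nat_add_cpow_one_sub (hα : 0 < α) {s : ℂ} (hs : 1 < s.re) :
    Tendsto (fun M : ℕ => ((M + α : ℝ) : ℂ) ^ (1 - s)) atTop (𝓝 0) := by
  have hnorm (M : ℕ) : ‖((M + α : ℝ) : ℂ) ^ (1 - s)‖ = ((M : ℝ) + α) ^ (-(s.re - 1)) := by
    rw [norm_cpow_eq_rpow_re_of_pos (by positivity), sub_re, one_re, neg_sub]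
  rw [tendsto_zero_iff_norm_tendsto_zero]
  simp only [hnorm]
  exact (tendsto_rpow_neg_atTop (by linarith)).comp
    (tendsto_atTop_add_const_right _ _ tendsto_natCast_atTop_atTop)

lemma hurwitzZeta_eq_tsum_of_one_lt_re (hα : α ∈ Set.Ioc 0 1) {s : ℂ} (hs : 1 < s.re) :
    HurwitzZeta.hurwitzZeta α s =
      ∑' m : ℕ, eulerMaclaurinTerm (m + α) s - (α : ℂ) ^ (1 - s) / (1 - s) := by
  have hterm := (summable_eulerMaclaurinTerm hα.1 (by linarith)
    (ne_one_of_one_lt_re hs)).hasSum.tendsto_sum_nat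
  have hzeta := (HurwitzZeta.hasSum_hurwitzZeta_of_one_lt_re
    (Set.Ioc_subset_Icc_self hα) hs).tendsto_sum_nat
  have hlim := hzeta.sub (((tendsto_nat_add_cpow_one_sub hα.1 hs).sub_const
    ((α : ℂ) ^ (1 - s))).div_const (1 - s))
  rw [tendsto_nhds_unique hterm
    (hlim.congr fun M => (sum_range_eulerMaclaurinTerm α s M).symm)]
  ring

lemma hurwitzZeta_eq_tsum (hα : α ∈ Set.Ioc 0 1) {s : ℂ} (hs : 0 < s.re) (him : s.im ≠ 0) :
    HurwitzZeta.hurwitzZeta α s =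
      ∑' m : ℕ, eulerMaclaurinTerm (m + α) s - (α : ℂ) ^ (1 - s) / (1 - s) := by
  -- Continue from `1 < re` within the quadrant containing `s`, which is convex and avoids the pole.
  set U : Set ℂ := {z | 0 < z.re} ∩ {z | 0 < s.im * z.im}
  have hne {z : ℂ} (hz : z ∈ U) : z ≠ 1 := by rintro rfl; simpa using hz.2
  have hopen : IsOpen U := (isOpen_lt continuous_const continuous_re).inter
    (isOpen_lt continuous_const (continuous_const.mul continuous_im))
  have hconvex : Convex ℝ U := (convex_halfSpace_re_gt 0).inter
    ((convex_Ioi (0 : ℝ)).linear_preimage (s.im • imLm))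
  have hleft : AnalyticOnNhd ℂ (HurwitzZeta.hurwitzZeta α) U := DifferentiableOn.analyticOnNhd
    (fun z hz => (HurwitzZeta.differentiableAt_hurwitzZeta α
      (hne hz)).differentiableWithinAt) hopen
  have hright : AnalyticOnNhd ℂ (fun z => ∑' m : ℕ, eulerMaclaurinTerm (m + α) z -
      (α : ℂ) ^ (1 - z) / (1 - z)) U := by
    refine DifferentiableOn.analyticOnNhd (((differentiableOn_tsum_eulerMaclaurinTerm hα.1).mono
      fun z hz => ⟨hz.1, hne hz⟩).sub fun z hz => ?_) hopen
    have hsub : DifferentiableAt ℂ (fun z : ℂ => 1 - z) z := by fun_prop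
    exact ((hsub.const_cpow (Or.inl (ofReal_ne_zero.2 hα.1.ne'))).div hsub
      (sub_ne_zero.2 (hne hz).symm)).differentiableWithinAt
  have hbase : (⟨2, s.im⟩ : ℂ) ∈ U := ⟨two_pos (α := ℝ), mul_self_pos.2 him⟩
  refine hleft.eqOn_of_preconnected_of_eventuallyEq hright hconvex.isPreconnected hbase ?_
    ⟨hs, mul_self_pos.2 him⟩
  filter_upwards [(isOpen_lt continuous_const continuous_re).mem_nhds
    (show (1 : ℝ) < (⟨2, s.im⟩ : ℂ).re from one_lt_two)] with z hz
  exact hurwitzZeta_eq_tsum_of_one_lt_re hα hz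

/-- A strip about the line `re s = 1`, away from the real axis, in which zeta and `L`-functions
are `O((1 + |im s|) ^ δ)`. -/
def growthStrip (δ : ℝ) : Set ℂ := {s | 1 - δ / 2 ≤ s.re ∧ s.re ≤ 3 ∧ 1 / 2 ≤ |s.im|}

variable {δ : ℝ}

lemma im_ne_zero_of_mem_growthStrip {s : ℂ} (hs : s ∈ growthStrip δ) : s.im ≠ 0 :=
  abs_pos.1 (one_half_pos.trans_le hs.2.2)

lemma norm_tsum_eulerMaclaurinTerm_le (hα : 0 < α) (hδ₀ : 0 < δ) (hδ₁ : δ ≤ 1) {s : ℂ}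
    (hs : s ∈ growthStrip δ) :
    ‖∑' m : ℕ, eulerMaclaurinTerm (m + α) s‖ ≤
      ((∑' m : ℕ, ((m + α) ^ (-3 - δ) + (m + α) ^ (-1 - δ / 2))) * 6) * (1 + |s.im|) ^ δ := by
  have hre : 0 ≤ s.re := by linarith [hs.1]
  have hs₁ : s ≠ 1 := fun h => im_ne_zero_of_mem_growthStrip hs (by simp [h])
  have hnorm : ‖s‖ ^ δ ≤ 3 * (1 + |s.im|) ^ δ := calc
    ‖s‖ ^ δ ≤ (3 * (1 + |s.im|)) ^ δ := by
      gcongr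
      linarith [norm_le_abs_re_add_abs_im s, abs_of_nonneg hre, abs_nonneg s.im, hs.2.1]
    _ = 3 ^ δ * (1 + |s.im|) ^ δ := Real.mul_rpow (by norm_num) (by positivity)
    _ ≤ 3 * (1 + |s.im|) ^ δ := by
      gcongr
      exact Real.rpow_le_self_of_one_le (by norm_num) hδ₁
  have hsum := ((summable_nat_add_rpow hα (p := -3 - δ) (by linarith)).add
    (summable_nat_add_rpow hα (p := -1 - δ / 2) (by linarith))).mul_right
      (6 * (1 + |s.im|) ^ δ)
  rw [mul_assoc, ← tsum_mul_right]
  refine tsum_of_norm_bounded hsum.hasSum fun m => ?_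
  calc ‖eulerMaclaurinTerm (m + α) s‖ ≤ 2 * ‖s‖ ^ δ * (m + α) ^ (-s.re - δ) :=
        norm_eulerMaclaurinTerm_le_interpolated hδ₀.le hδ₁ (by positivity) hre hs₁
    _ ≤ 2 * (3 * (1 + |s.im|) ^ δ) * ((m + α) ^ (-3 - δ) + (m + α) ^ (-1 - δ / 2)) := by
        gcongr
        exact rpow_le_rpow_add_rpow (by positivity) (by linarith [hs.2.1]) (by linarith [hs.1])
    _ = _ := by ring

lemma hurwitzZeta_isBigO_growthStrip (hα : α ∈ Set.Ioc 0 1) (hδ₀ : 0 < δ) (hδ₁ : δ ≤ 1) :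
    HurwitzZeta.hurwitzZeta α =O[𝓟 (growthStrip δ)] fun s => (1 + |s.im|) ^ δ := by
  refine isBigO_principal.2 ⟨(∑' m : ℕ, ((m + α) ^ (-3 - δ) + (m + α) ^ (-1 - δ / 2))) * 6 +
    α ^ (-2 : ℝ) / (1 / 2), fun s hs => ?_⟩
  have hpole : ‖(α : ℂ) ^ (1 - s) / (1 - s)‖ ≤
      α ^ (-2 : ℝ) / (1 / 2) * (1 + |s.im|) ^ δ := by
    rw [norm_div, norm_cpow_eq_rpow_re_of_pos hα.1]
    have him : |s.im| ≤ ‖1 - s‖ := by simpa using abs_im_le_norm (1 - s)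
    have hpow : α ^ (1 - s).re ≤ α ^ (-2 : ℝ) := Real.rpow_le_rpow_of_exponent_ge hα.1 hα.2
      (by rw [sub_re, one_re]; linarith [hs.2.1])
    have hα₀ := hα.1
    refine (div_le_div₀ (by positivity) hpow one_half_pos (hs.2.2.trans him)).trans ?_
    exact le_mul_of_one_le_right (by positivity)
      (Real.one_le_rpow (le_add_of_nonneg_right (abs_nonneg _)) hδ₀.le)
  rw [hurwitzZeta_eq_tsum hα (by linarith [hs.1]) (im_ne_zero_of_mem_growthStrip hs),
    Real.norm_of_nonneg (by positivity), add_mul]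
  exact norm_sub_le_of_le (norm_tsum_eulerMaclaurinTerm_le hα.1 hδ₀ hδ₁ hs) hpole

lemma hurwitzZeta_toAddCircle_isBigO_growthStrip {N : ℕ} [NeZero N] (j : ZMod N) (hδ₀ : 0 < δ)
    (hδ₁ : δ ≤ 1) :
    HurwitzZeta.hurwitzZeta (ZMod.toAddCircle j) =O[𝓟 (growthStrip δ)]
      fun s => (1 + |s.im|) ^ δ := by
  have hN : (0 : ℝ) < N := Nat.cast_pos.2 (NeZero.pos N)
  rw [ZMod.toAddCircle_apply]
  rcases Nat.eq_zero_or_pos j.val with h | h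
  · simpa [h, AddCircle.coe_period] using
      hurwitzZeta_isBigO_growthStrip (α := 1) ⟨one_pos, le_rfl⟩ hδ₀ hδ₁
  · exact hurwitzZeta_isBigO_growthStrip ⟨by positivity,
      (div_le_one hN).2 (by exact_mod_cast (ZMod.val_lt j).le)⟩ hδ₀ hδ₁

lemma LFunction_isBigO_growthStrip {N : ℕ} [NeZero N] (χ : DirichletCharacter ℂ N) (hδ₀ : 0 < δ)
    (hδ₁ : δ ≤ 1) :
    χ.LFunction =O[𝓟 (growthStrip δ)] fun s => (1 + |s.im|) ^ δ := by
  have hsum : (fun s => ∑ j : ZMod N, χ j * HurwitzZeta.hurwitzZeta (ZMod.toAddCircle j) s)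
      =O[𝓟 (growthStrip δ)] fun s => (1 + |s.im|) ^ δ :=
    .fun_sum fun j _ => (hurwitzZeta_toAddCircle_isBigO_growthStrip j hδ₀ hδ₁).const_mul_left _
  have hpow : (fun s : ℂ => (N : ℂ) ^ (-s)) =O[𝓟 (growthStrip δ)] fun _ => (1 : ℝ) := by
    refine isBigO_principal.2 ⟨1, fun s hs => ?_⟩
    have hN : (1 : ℝ) ≤ N := Nat.one_le_cast.2 NeZero.one_le
    have := norm_ofReal_cpow_neg_le one_pos hN (s := s) (by linarith [hs.1])
    simpa using this
  exact (hpow.mul hsum).congr_right fun _ => one_mul _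

end HurwitzZeta

section Subpolynomial

/-- Approach to the line `re s = 1` from the right, uniformly in the imaginary part, away from the
pole at `s = 1`. -/
def rightEdge : Filter ℂ := comap re (𝓝[>] 1) ⊓ 𝓟 {s | 1 ≤ |s.im|}

/-- Growth `O((1 + |im s|) ^ ε)` for every `ε > 0`, uniformly up to the line `re s = 1`. -/
def Subpolynomial (f : ℂ → ℂ) : Prop :=
  ∀ ε : ℝ, 0 < ε → f =O[rightEdge] fun s => (1 + |s.im|) ^ ε

lemma hasBasis_rightEdge :
    rightEdge.HasBasis (0 < ·) fun r : ℝ => {s | 1 < s.re ∧ s.re < 1 + r ∧ 1 ≤ |s.im|} := by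
  refine (((nhdsGT_basis (1 : ℝ)).comap re).inf_principal {s : ℂ | 1 ≤ |s.im|}).to_hasBasis
    (fun b hb => ⟨b - 1, sub_pos.2 hb, ?_⟩) fun r hr => ⟨1 + r, by linarith, ?_⟩
  · rintro s ⟨h₁, h₂, h₃⟩
    exact ⟨⟨h₁, by linarith⟩, h₃⟩
  · rintro s ⟨⟨h₁, h₂⟩, h₃⟩
    exact ⟨h₁, h₂, h₃⟩

variable {f g : ℂ → ℂ}

lemma exists_bound_of_isBigO_rightEdge {φ : ℂ → ℝ} (hφ : ∀ s, 0 ≤ φ s) (h : f =O[rightEdge] φ) :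
    ∃ C > 0, ∃ r > 0, ∀ s : ℂ, 1 < s.re → s.re < 1 + r → 1 ≤ |s.im| → ‖f s‖ ≤ C * φ s := by
  obtain ⟨C, hC, h⟩ := h.exists_pos
  obtain ⟨r, hr, h⟩ := hasBasis_rightEdge.eventually_iff.1 h.bound
  exact ⟨C, hC, r, hr, fun s h₁ h₂ h₃ =>
    (h ⟨h₁, h₂, h₃⟩).trans_eq (by rw [Real.norm_of_nonneg (hφ s)])⟩

lemma Subpolynomial.mul (hf : Subpolynomial f) (hg : Subpolynomial g) :
    Subpolynomial fun s => f s * g s := fun ε hε =>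
  ((hf _ (half_pos hε)).mul (hg _ (half_pos hε))).congr_right fun s => by
    rw [← Real.rpow_add (by positivity), add_halves]

lemma Subpolynomial.add (hf : Subpolynomial f) (hg : Subpolynomial g) :
    Subpolynomial fun s => f s + g s := fun ε hε => (hf ε hε).add (hg ε hε)

lemma Subpolynomial.const_mul (hf : Subpolynomial f) (c : ℂ) : Subpolynomial fun s => c * f s :=
  fun ε hε => (hf ε hε).const_mul_left c

lemma Subpolynomial.sum {ι : Type*} {A : Finset ι} {f : ι → ℂ → ℂ}
    (hf : ∀ i ∈ A, Subpolynomial (f i)) : Subpolynomial fun s => ∑ i ∈ A, f i s :=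
  fun ε hε => .fun_sum fun i hi => hf i hi ε hε

lemma Subpolynomial.congr (hf : Subpolynomial f) (h : f =ᶠ[rightEdge] g) : Subpolynomial g :=
  fun ε hε => (hf ε hε).congr' h .rfl

lemma one_add_abs_rpow_le_two_rpow_mul {δ t u : ℝ} (hδ : 0 ≤ δ) (h : |u| ≤ 1 + 2 * |t|) :
    (1 + |u|) ^ δ ≤ 2 ^ δ * (1 + |t|) ^ δ := by
  rw [← Real.mul_rpow zero_le_two (by positivity)]
  gcongr
  linarith

lemma iteratedDeriv_isBigO_rightEdge {δ : ℝ} (hδ₀ : 0 < δ) (hδ₁ : δ ≤ 1)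
    (hf : DifferentiableOn ℂ f (growthStrip δ))
    (hO : f =O[𝓟 (growthStrip δ)] fun s => (1 + |s.im|) ^ δ) (k : ℕ) :
    iteratedDeriv k f =O[rightEdge] fun s => (1 + |s.im|) ^ δ := by
  obtain ⟨C, hC, hbound⟩ := hO.exists_pos
  rw [isBigOWith_principal] at hbound
  refine IsBigO.of_bound (k.factorial * (C * 2 ^ δ) / (δ / 4) ^ k)
    (hasBasis_rightEdge.eventually_iff.2 ⟨1, one_pos, fun s ⟨h₁, h₂, h₃⟩ => ?_⟩)
  have hclose {z : ℂ} (hz : z ∈ Metric.closedBall s (δ / 4)) :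
      |z.re - s.re| ≤ δ / 4 ∧ |z.im - s.im| ≤ δ / 4 := by
    rw [mem_closedBall_iff_norm] at hz
    exact ⟨(abs_re_le_norm (z - s)).trans hz, (abs_im_le_norm (z - s)).trans hz⟩
  have hball : Metric.closedBall s (δ / 4) ⊆ growthStrip δ := fun z hz => by
    obtain ⟨hre, him⟩ := hclose hz
    rw [abs_le] at hre
    have := (abs_sub_abs_le_abs_sub s.im z.im).trans_eq (abs_sub_comm _ _)
    exact ⟨by linarith, by linarith, by linarith⟩
  have hsphere : ∀ z ∈ Metric.sphere s (δ / 4), ‖f z‖ ≤ C * 2 ^ δ * (1 + |s.im|) ^ δ := by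
    intro z hz
    have hz' := Metric.sphere_subset_closedBall hz
    refine (hbound z (hball hz')).trans ?_
    rw [Real.norm_of_nonneg (by positivity), mul_assoc]
    gcongr
    exact one_add_abs_rpow_le_two_rpow_mul hδ₀.le
      (by linarith [(abs_sub_abs_le_abs_sub z.im s.im).trans (hclose hz').2])
  have hcauchy := norm_iteratedDeriv_le_of_forall_mem_sphere_norm_le k (by positivity)
    (hf.diffContOnCl_ball hball) hsphere
  rw [Real.norm_of_nonneg (by positivity)]
  exact hcauchy.trans_eq (by ring)

variable {N : ℕ} [NeZero N] (χ : DirichletCharacter ℂ N)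

lemma subpolynomial_iteratedDeriv_LFunction (k : ℕ) :
    Subpolynomial (iteratedDeriv k χ.LFunction) := by
  intro ε hε
  have hmin : 0 < min ε 1 := lt_min hε one_pos
  refine (iteratedDeriv_isBigO_rightEdge hmin (min_le_right _ _) (fun s hs => ?_)
    (LFunction_isBigO_growthStrip χ hmin (min_le_right _ _)) k).trans
    (IsBigO.of_norm_le fun s => ?_)
  · exact (χ.differentiableAt_LFunction s (Or.inl fun h =>
      im_ne_zero_of_mem_growthStrip hs (by simp [h]))).differentiableWithinAt
  · rw [Real.norm_of_nonneg (by positivity)]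
    exact Real.rpow_le_rpow_of_exponent_le (le_add_of_nonneg_right (abs_nonneg _))
      (min_le_left _ _)

end Subpolynomial

section ThreeFourOne

lemma inv_le_of_three_four_one {A B κ₀ ℓ : ℝ} (hA : 0 < A) (hB : 1 ≤ B) (hκ₀ : 0 < κ₀)
    (hℓ : 0 ≤ ℓ) (h : ∀ κ ∈ Set.Ioo 0 κ₀, 1 ≤ (A / κ) ^ 3 * (ℓ + B * κ) ^ 4 * B) :
    ℓ⁻¹ ≤ (κ₀⁻¹ + 16 * A ^ 3) * B ^ 4 := by
  -- If `ℓ ≤ B * κ`, the hypothesis reads `1 ≤ 16 * A ^ 3 * B ^ 5 * κ`, so take `κ` of order `B⁻⁵`.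
  set D : ℝ := κ₀⁻¹ + 16 * A ^ 3
  have : 0 < B := one_pos.trans_le hB
  have hD : 0 < D := by positivity
  set κ : ℝ := (D * B ^ 5)⁻¹
  have hκ : 0 < κ := by positivity
  have hDκ : D * B ^ 5 * κ = 1 := mul_inv_cancel₀ (by positivity)
  have hκ_lt : κ < κ₀ := inv_lt_of_inv_lt₀ hκ₀ <| calc
    κ₀⁻¹ < D := lt_add_of_pos_right _ (by positivity)
    _ ≤ D * B ^ 5 := le_mul_of_one_le_right hD.le (one_le_pow₀ hB)
  have hlower : B * κ < ℓ := by
    by_contra! hle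
    refine (h κ ⟨hκ, hκ_lt⟩).not_gt ?_
    calc (A / κ) ^ 3 * (ℓ + B * κ) ^ 4 * B ≤ (A / κ) ^ 3 * (B * κ + B * κ) ^ 4 * B := by gcongr
      _ = 16 * A ^ 3 * (D * B ^ 5 * κ) / D := by field_simp; ring
      _ = 16 * A ^ 3 / D := by rw [hDκ, mul_one]
      _ < 1 := (div_lt_one hD).2 (lt_add_of_pos_left _ (by positivity))
  calc ℓ⁻¹ ≤ (B * κ)⁻¹ := inv_anti₀ (by positivity) hlower.le
    _ = D * B ^ 5 * κ * (B * κ)⁻¹ := by rw [hDκ, one_mul]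
    _ = D * B ^ 4 := by field_simp

lemma norm_sub_le_of_norm_deriv_le_horizontal {f : ℂ → ℂ} {B κ : ℝ} {s : ℂ} (hκ : 0 ≤ κ)
    (hdiff : ∀ z : ℂ, s.re ≤ z.re → DifferentiableAt ℂ f z)
    (hderiv : ∀ z : ℂ, s.re ≤ z.re → z.re ≤ s.re + κ → z.im = s.im → ‖deriv f z‖ ≤ B) :
    ‖f (s + κ) - f s‖ ≤ B * κ := by
  have hconvex : Convex ℝ ((reLm ⁻¹' Set.Icc s.re (s.re + κ)) ∩ (imLm ⁻¹' {s.im})) :=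
    ((convex_Icc _ _).linear_preimage _).inter ((convex_singleton _).linear_preimage _)
  simpa [abs_of_nonneg hκ] using hconvex.norm_image_sub_le_of_norm_deriv_le (x := s) (y := s + κ)
    (fun z hz => hdiff z hz.1.1) (fun z hz => hderiv z hz.1.1 hz.1.2 hz.2)
    (by simp [hκ]) (by simp [hκ])

lemma LFunction_ne_zero_of_one_lt_re {N : ℕ} [NeZero N] (χ : DirichletCharacter ℂ N) {s : ℂ}
    (hs : 1 < s.re) : χ.LFunction s ≠ 0 :=
  χ.LFunction_ne_zero_of_one_le_re (Or.inr (ne_one_of_one_lt_re hs)) hs.le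

lemma isOpen_one_lt_re : IsOpen {s : ℂ | 1 < s.re} := isOpen_lt continuous_const continuous_re

lemma analyticAt_LFunction_of_one_lt_re {N : ℕ} [NeZero N] (χ : DirichletCharacter ℂ N) {s : ℂ}
    (hs : 1 < s.re) : AnalyticAt ℂ χ.LFunction s :=
  DifferentiableOn.analyticAt (s := {z | 1 < z.re}) (fun z hz =>
    (χ.differentiableAt_LFunction z (Or.inl (ne_one_of_one_lt_re hz))).differentiableWithinAt)
    (isOpen_one_lt_re.mem_nhds hs)

lemma exists_norm_LFunctionTrivChar_le (N : ℕ) [NeZero N] : ∃ A > 0, ∃ r > 0, ∀ x : ℝ, 0 < x →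
    x < r → ‖DirichletCharacter.LFunctionTrivChar N (1 + x)‖ ≤ A / x := by
  obtain ⟨A, hA, h⟩ :=
    (DirichletCharacter.LFunctionTrivChar_isBigO_near_one_horizontal (N := N)).exists_pos
  obtain ⟨r, hr, h⟩ := (nhdsGT_basis (0 : ℝ)).eventually_iff.1 h.bound
  refine ⟨A, hA, r, hr, fun x hx hxr => (h ⟨hx, hxr⟩).trans_eq ?_⟩
  rw [norm_div, norm_one, norm_real, Real.norm_of_nonneg hx.le, mul_one_div]

lemma exists_three_four_one_bound {N : ℕ} [NeZero N] (χ : DirichletCharacter ℂ N) :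
    ∃ A > 0, ∃ r > 0, ∀ κ₀ ≤ r, ∀ s : ℂ, 1 < s.re → s.re < 1 + κ₀ → ∀ B : ℝ,
      (∀ z : ℂ, 1 < z.re → z.re < 1 + 2 * κ₀ → z.im = s.im → ‖deriv χ.LFunction z‖ ≤ B) →
      (∀ z : ℂ, 1 < z.re → z.re < 1 + 2 * κ₀ → z.im = 2 * s.im → ‖(χ ^ 2).LFunction z‖ ≤ B) →
      ∀ κ ∈ Set.Ioo 0 κ₀, 1 ≤ (A / κ) ^ 3 * (‖χ.LFunction s‖ + B * κ) ^ 4 * B := by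
  obtain ⟨A, hA, r, hr, htriv⟩ := exists_norm_LFunctionTrivChar_le N
  refine ⟨A, hA, r / 2, half_pos hr, fun κ₀ hκ₀r s hs₁ hs₂ B hderiv hsq κ ⟨hκ, hκ_lt⟩ => ?_⟩
  set x : ℝ := s.re - 1 + κ
  have hx : κ ≤ x := le_add_of_nonneg_left (by linarith)
  have hpoint : (1 + x + I * s.im : ℂ) = s + κ :=
    Complex.ext (by simp [x]; ring) (by simp [x])
  have htriv_x : ‖DirichletCharacter.LFunctionTrivChar N (1 + x)‖ ≤ A / κ :=
    (htriv x (hκ.trans_le hx) (by linarith)).trans (by gcongr)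
  have hchi : ‖χ.LFunction (s + κ)‖ ≤ ‖χ.LFunction s‖ + B * κ := by
    refine norm_le_norm_add_norm_sub' _ _ |>.trans (add_le_add_right ?_ _)
    exact norm_sub_le_of_norm_deriv_le_horizontal hκ.le
      (fun z hz => χ.differentiableAt_LFunction z (Or.inl (ne_one_of_one_lt_re (hs₁.trans_le hz))))
      fun z hz₁ hz₂ hz₃ => hderiv z (hs₁.trans_le hz₁) (by linarith) hz₃
  have hchi_sq : ‖(χ ^ 2).LFunction (1 + x + 2 * I * s.im)‖ ≤ B :=
    hsq _ (by simp; linarith) (by simp; linarith) (by simp)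
  calc 1 ≤ ‖DirichletCharacter.LFunctionTrivChar N (1 + x) ^ 3 * χ.LFunction (s + κ) ^ 4 *
        (χ ^ 2).LFunction (1 + x + 2 * I * s.im)‖ :=
        hpoint ▸ χ.norm_LFunction_product_ge_one (hκ.trans_le hx) s.im
    _ ≤ (A / κ) ^ 3 * (‖χ.LFunction s‖ + B * κ) ^ 4 * B := by
        rw [norm_mul, norm_mul, norm_pow, norm_pow]
        gcongr

lemma subpolynomial_inv_LFunction {N : ℕ} [NeZero N] (χ : DirichletCharacter ℂ N) :
    Subpolynomial fun s => (χ.LFunction s)⁻¹ := by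
  intro ε hε
  set δ : ℝ := ε / 4 with hδ
  obtain ⟨A, hA, r, hr, h341⟩ := exists_three_four_one_bound χ
  obtain ⟨C₁, hC₁, r₁, hr₁, hderiv⟩ := exists_bound_of_isBigO_rightEdge (fun _ => by positivity)
    (subpolynomial_iteratedDeriv_LFunction χ 1 δ (by positivity))
  obtain ⟨C₂, hC₂, r₂, hr₂, hsq⟩ := exists_bound_of_isBigO_rightEdge (fun _ => by positivity)
    (subpolynomial_iteratedDeriv_LFunction (χ ^ 2) 0 δ (by positivity))
  simp only [iteratedDeriv_one, iteratedDeriv_zero] at hderiv hsq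
  set κ₀ : ℝ := min r (min (r₁ / 2) (r₂ / 2))
  have hκ₀ : 0 < κ₀ := by positivity
  have hκ₀₁ : κ₀ ≤ r₁ / 2 := (min_le_right _ _).trans (min_le_left _ _)
  have hκ₀₂ : κ₀ ≤ r₂ / 2 := (min_le_right _ _).trans (min_le_right _ _)
  set C : ℝ := C₁ + 2 ^ δ * C₂ + 1
  have : 0 < C := by positivity
  refine IsBigO.of_bound ((κ₀⁻¹ + 16 * A ^ 3) * C ^ 4)
    (hasBasis_rightEdge.eventually_iff.2 ⟨κ₀, hκ₀, fun s ⟨hs₁, hs₂, hs₃⟩ => ?_⟩)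
  have hT : 1 ≤ (1 + |s.im|) ^ δ :=
    Real.one_le_rpow (le_add_of_nonneg_right (abs_nonneg _)) (by positivity)
  have hinv := inv_le_of_three_four_one hA
    (one_le_mul_of_one_le_of_one_le (le_add_of_nonneg_left (by positivity)) hT) hκ₀ (norm_nonneg _)
    (h341 κ₀ (min_le_left _ _) s hs₁ hs₂ (C * (1 + |s.im|) ^ δ)
      (fun z hz₁ hz₂ hz₃ => (hderiv z hz₁ (by linarith) (hz₃ ▸ hs₃)).trans ?_)
      fun z hz₁ hz₂ hz₃ => (hsq z hz₁ (by linarith) ?_).trans ?_)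
  · rw [norm_inv, Real.norm_of_nonneg (by positivity)]
    refine hinv.trans_eq ?_
    rw [mul_pow, ← mul_assoc, ← Real.rpow_mul_natCast (by positivity), hδ, Nat.cast_ofNat,
      div_mul_cancel₀ ε four_ne_zero]
  · rw [hz₃]
    gcongr
    linarith [show 0 < 2 ^ δ * C₂ by positivity]
  · rw [hz₃, abs_mul, abs_two]
    linarith
  · calc C₂ * (1 + |z.im|) ^ δ ≤ C₂ * (2 ^ δ * (1 + |s.im|) ^ δ) := by
          gcongr
          exact one_add_abs_rpow_le_two_rpow_mul (by positivity) (by simp [hz₃, abs_mul])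
      _ = 2 ^ δ * C₂ * (1 + |s.im|) ^ δ := by ring
      _ ≤ C * (1 + |s.im|) ^ δ := by gcongr; linarith

end ThreeFourOne

section LogDeriv

lemma iteratedDeriv_two_logDeriv {f : ℂ → ℂ} {s : ℂ} (hf : AnalyticAt ℂ f s) (hs : f s ≠ 0) :
    iteratedDeriv 2 (logDeriv f) s =
      iteratedDeriv 3 f s * (f s)⁻¹
        + (-3) * ((iteratedDeriv 2 f s * (f s)⁻¹) * (iteratedDeriv 1 f s * (f s)⁻¹))
        + 2 * ((iteratedDeriv 1 f s * (f s)⁻¹) *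
          ((iteratedDeriv 1 f s * (f s)⁻¹) * (iteratedDeriv 1 f s * (f s)⁻¹))) := by
  have hderiv : deriv (logDeriv f) =ᶠ[𝓝 s]
      fun z => (deriv (deriv f) z * f z - deriv f z * deriv f z) / f z ^ 2 := by
    filter_upwards [hf.eventually_analyticAt, hf.continuousAt.eventually_ne hs] with z hz hz₀
    exact (hz.deriv.differentiableAt.hasDerivAt.div hz.differentiableAt.hasDerivAt hz₀).deriv
  have h₀ := hf.differentiableAt.hasDerivAt
  have h₁ := hf.deriv.differentiableAt.hasDerivAt
  have h₂ := hf.deriv.deriv.differentiableAt.hasDerivAt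
  have hquot := (((h₂.mul h₀).sub (h₁.mul h₁)).div (h₀.pow 2) (pow_ne_zero 2 hs)).deriv
  simp only [iteratedDeriv_succ, iteratedDeriv_zero]
  rw [hderiv.deriv_eq]
  refine hquot.trans ?_
  simp only [Pi.mul_apply, Pi.sub_apply, Pi.pow_apply]
  field_simp
  push_cast
  ring

lemma subpolynomial_iteratedDeriv_two_logDeriv_LFunction {N : ℕ} [NeZero N]
    (χ : DirichletCharacter ℂ N) : Subpolynomial (iteratedDeriv 2 (logDeriv χ.LFunction)) := by
  have hquot (k : ℕ) : Subpolynomial fun s => iteratedDeriv k χ.LFunction s * (χ.LFunction s)⁻¹ :=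
    (subpolynomial_iteratedDeriv_LFunction χ k).mul (subpolynomial_inv_LFunction χ)
  refine (((hquot 3).add (((hquot 2).mul (hquot 1)).const_mul (-3))).add
    (((hquot 1).mul ((hquot 1).mul (hquot 1))).const_mul 2)).congr ?_
  filter_upwards [hasBasis_rightEdge.mem_of_mem one_pos] with s hs
  exact (iteratedDeriv_two_logDeriv (analyticAt_LFunction_of_one_lt_re χ hs.1)
    (LFunction_ne_zero_of_one_lt_re χ hs.1)).symm

end LogDeriv

section Discrepancy

open ArithmeticFunction.vonMangoldt (residueClass LFunctionResidueClassAux)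

/-- The von Mangoldt function restricted to the residue class `b` modulo `q`, minus its expected
mean value `1 / φ(q)`. -/
noncomputable def discrepancy {q : ℕ} (b : ZMod q) (n : ℕ) : ℝ :=
  residueClass b n - (q.totient : ℝ)⁻¹

variable {q : ℕ} {b : ZMod q} {s : ℂ}

lemma LSeriesHasSum_discrepancy (hs : 1 < s.re) :
    LSeriesHasSum (fun n => (discrepancy b n : ℂ)) s
      (LSeries (fun n => (residueClass b n : ℂ)) s - (q.totient : ℂ)⁻¹ * riemannZeta s) := by
  have hΛ : LSeriesSummable (fun n => (residueClass b n : ℂ)) s :=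
    LSeriesSummable_of_abscissaOfAbsConv_lt_re <|
      (ArithmeticFunction.vonMangoldt.abscissaOfAbsConv_residueClass_le_one b).trans_lt
        (by exact_mod_cast hs)
  convert hΛ.LSeriesHasSum.sub ((LSeriesHasSum_one hs).smul (q.totient : ℂ)⁻¹) using 1
  ext n
  simp [discrepancy]

lemma abscissaOfAbsConv_discrepancy_le_one :
    LSeries.abscissaOfAbsConv (fun n => (discrepancy b n : ℂ)) ≤ 1 :=
  LSeries.abscissaOfAbsConv_le_of_forall_lt_LSeriesSummable fun _ hy =>
    (LSeriesHasSum_discrepancy (by simpa using hy)).LSeriesSummable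

lemma logMul_logMul_discrepancy :
    LSeries.logMul^[2] (fun n => (discrepancy b n : ℂ)) =
      fun n => ((discrepancy b n * Real.log n ^ 2 : ℝ) : ℂ) := by
  ext n
  simp [LSeries.logMul]
  ring

lemma LSeriesSummable_discrepancy_mul_log_sq (hs : 1 < s.re) :
    LSeriesSummable (fun n => ((discrepancy b n * Real.log n ^ 2 : ℝ) : ℂ)) s := by
  rw [← logMul_logMul_discrepancy]
  refine LSeriesSummable_of_abscissaOfAbsConv_lt_re ?_
  rw [LSeries.absicssaOfAbsConv_logPowMul]
  exact abscissaOfAbsConv_discrepancy_le_one.trans_lt (by exact_mod_cast hs)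

lemma LSeries_discrepancy_mul_log_sq (hs : 1 < s.re) :
    LSeries (fun n => ((discrepancy b n * Real.log n ^ 2 : ℝ) : ℂ)) s =
      iteratedDeriv 2 (LSeries fun n => (discrepancy b n : ℂ)) s := by
  rw [LSeries_iteratedDeriv 2 (abscissaOfAbsConv_discrepancy_le_one.trans_lt
    (by exact_mod_cast hs)), logMul_logMul_discrepancy]
  norm_num

variable [NeZero q]

lemma analyticAt_LFunctionResidueClassAux (b : ZMod q) (hs : 1 ≤ s.re) :
    AnalyticAt ℂ (LFunctionResidueClassAux b) s := by
  classical
  have hχ₁ := (DirichletCharacter.differentiable_LFunctionTrivChar₁ q).analyticAt s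
  refine analyticAt_const.mul ((hχ₁.deriv.neg.div hχ₁ ?_).sub ?_)
  · rcases eq_or_ne s 1 with rfl | h₁
    · exact DirichletCharacter.LFunctionTrivChar₁_apply_one_ne_zero q
    · rw [DirichletCharacter.LFunctionTrivChar₁, Function.update_of_ne h₁]
      exact mul_ne_zero (sub_ne_zero.2 h₁)
        (DirichletCharacter.LFunction_ne_zero_of_one_le_re _ (Or.inr h₁) hs)
  · refine Finset.analyticAt_fun_sum _ fun χ hχ => ?_
    replace hχ : χ ≠ 1 := by simpa using hχ
    have hd := (DirichletCharacter.differentiable_LFunction hχ).analyticAt s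
    exact (analyticAt_const.mul hd.deriv).div hd
      (DirichletCharacter.LFunction_ne_zero_of_one_le_re χ (Or.inl hχ) hs)

lemma exists_analyticOnNhd_eqOn_riemannZeta_sub :
    ∃ G : ℂ → ℂ, AnalyticOnNhd ℂ G Set.univ ∧ ∀ s ≠ 1, G s = riemannZeta s - 1 / (s - 1) := by
  refine ⟨dslope (DirichletCharacter.LFunctionTrivChar₁ 1) 1, ?_, fun s hs => ?_⟩
  · exact DifferentiableOn.analyticOnNhd ((differentiableOn_dslope univ_mem).2
      (DirichletCharacter.differentiable_LFunctionTrivChar₁ 1).differentiableOn) isOpen_univ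
  · have : s - 1 ≠ 0 := sub_ne_zero.2 hs
    rw [dslope_of_ne _ hs, slope_def_field, DirichletCharacter.LFunctionTrivChar₁,
      Function.update_of_ne hs, Function.update_self, DirichletCharacter.LFunctionTrivChar,
      DirichletCharacter.LFunction_modOne_eq]
    simp
    field_simp

/-- The poles of the two series at `s = 1` cancel. -/
lemma exists_analyticOnNhd_eqOn_LSeries_discrepancy (hb : IsUnit b) :
    ∃ G : ℂ → ℂ, AnalyticOnNhd ℂ G {s | 1 ≤ s.re} ∧
      Set.EqOn (LSeries fun n => (discrepancy b n : ℂ)) G {s | 1 < s.re} := by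
  obtain ⟨Z, hZ, hZ_eq⟩ := exists_analyticOnNhd_eqOn_riemannZeta_sub
  refine ⟨fun s => LFunctionResidueClassAux b s - (q.totient : ℂ)⁻¹ * Z s, fun s hs =>
    (analyticAt_LFunctionResidueClassAux b hs).sub (analyticAt_const.mul (hZ s trivial)),
    fun s hs => ?_⟩
  dsimp only
  rw [(LSeriesHasSum_discrepancy hs).LSeries_eq, hZ_eq s (ne_one_of_one_lt_re hs),
    ArithmeticFunction.vonMangoldt.eqOn_LFunctionResidueClassAux hb hs]
  ring

lemma iteratedDeriv_LSeries_discrepancy_isBigO_one (hb : IsUnit b) (k : ℕ) :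
    iteratedDeriv k (LSeries fun n => (discrepancy b n : ℂ))
      =O[comap re (𝓝[>] 1) ⊓ 𝓟 {s | |s.im| ≤ 1}] (fun _ => (1 : ℝ)) := by
  obtain ⟨G, hG, hG_eq⟩ := exists_analyticOnNhd_eqOn_LSeries_discrepancy hb
  have hcont : ContinuousOn (iteratedDeriv k G) (Set.Icc 1 2 ×ℂ Set.Icc (-1) 1) := fun s hs => by
    rw [iteratedDeriv_eq_iterate]
    exact ((hG s hs.1.1).iterated_deriv k).continuousAt.continuousWithinAt
  obtain ⟨C, hC⟩ := (isCompact_Icc.reProdIm isCompact_Icc).exists_bound_of_continuousOn hcont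
  refine IsBigO.of_bound C ?_
  rw [eventually_inf_principal]
  filter_upwards [preimage_mem_comap (Ioo_mem_nhdsGT one_lt_two)] with s hs him
  rw [(hG_eq.eventuallyEq_of_mem (isOpen_one_lt_re.mem_nhds hs.1)).iteratedDeriv_eq, norm_one,
    mul_one]
  exact hC s ⟨⟨hs.1.le, hs.2.le⟩, abs_le.1 him⟩

lemma subpolynomial_iteratedDeriv_two_LSeries_discrepancy (hb : IsUnit b) :
    Subpolynomial (iteratedDeriv 2 (LSeries fun n => (discrepancy b n : ℂ))) := by
  refine (((Subpolynomial.sum fun χ (_ : χ ∈ (univ : Finset (DirichletCharacter ℂ q))) =>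
    (subpolynomial_iteratedDeriv_two_logDeriv_LFunction χ).const_mul (χ b⁻¹)).const_mul
      (-(q.totient : ℂ)⁻¹)).add ((subpolynomial_iteratedDeriv_LFunction
        (1 : DirichletCharacter ℂ 1) 2).const_mul (-(q.totient : ℂ)⁻¹))).congr ?_
  filter_upwards [hasBasis_rightEdge.mem_of_mem one_pos] with s hs
  have hlog (χ : DirichletCharacter ℂ q) : ContDiffAt ℂ 2 (logDeriv χ.LFunction) s :=
    ((analyticAt_LFunction_of_one_lt_re χ hs.1).deriv.div (analyticAt_LFunction_of_one_lt_re χ hs.1)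
      (LFunction_ne_zero_of_one_lt_re χ hs.1)).contDiffAt
  have hζ : ContDiffAt ℂ 2 (1 : DirichletCharacter ℂ 1).LFunction s :=
    (analyticAt_LFunction_of_one_lt_re 1 hs.1).contDiffAt
  have heq : LSeries (fun n => (discrepancy b n : ℂ)) =ᶠ[𝓝 s] fun z =>
      -(q.totient : ℂ)⁻¹ * ∑ χ : DirichletCharacter ℂ q, χ b⁻¹ * logDeriv χ.LFunction z
        + -(q.totient : ℂ)⁻¹ * (1 : DirichletCharacter ℂ 1).LFunction z := by
    filter_upwards [isOpen_one_lt_re.mem_nhds hs.1] with z hz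
    rw [(LSeriesHasSum_discrepancy hz).LSeries_eq,
      ArithmeticFunction.vonMangoldt.LSeries_residueClass_eq hb hz,
      DirichletCharacter.LFunction_modOne_eq, neg_mul _ (riemannZeta z), ← sub_eq_add_neg]
    rfl
  rw [heq.iteratedDeriv_eq, iteratedDeriv_fun_add
    (contDiffAt_const.mul (ContDiffAt.sum fun χ _ => contDiffAt_const.mul (hlog χ)))
    (contDiffAt_const.mul hζ), iteratedDeriv_const_mul_field, iteratedDeriv_const_mul_field,
    iteratedDeriv_fun_sum fun χ _ => contDiffAt_const.mul (hlog χ)]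
  simp only [iteratedDeriv_const_mul_field]

lemma LSeries_discrepancy_mul_log_sq_isBigO (hb : IsUnit b) {ε : ℝ} (hε : 0 < ε) :
    (LSeries fun n => ((discrepancy b n * Real.log n ^ 2 : ℝ) : ℂ))
      =O[comap re (𝓝[>] 1)] fun s => (1 + |s.im|) ^ ε := by
  have hlow : iteratedDeriv 2 (LSeries fun n => (discrepancy b n : ℂ))
      =O[comap re (𝓝[>] 1) ⊓ 𝓟 {s | |s.im| ≤ 1}] fun s => (1 + |s.im|) ^ ε :=
    (iteratedDeriv_LSeries_discrepancy_isBigO_one hb 2).trans <| .of_norm_le fun s => by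
      simpa using Real.one_le_rpow (le_add_of_nonneg_right (abs_nonneg s.im)) hε.le
  have hall := hlow.sup (subpolynomial_iteratedDeriv_two_LSeries_discrepancy hb ε hε)
  have hcover : ({s | |s.im| ≤ 1} ∪ {s | 1 ≤ |s.im|} : Set ℂ) = Set.univ :=
    Set.eq_univ_of_forall fun s => le_total |s.im| 1
  rw [rightEdge, ← inf_sup_left, sup_principal, hcover, principal_univ, inf_top_eq] at hall
  refine hall.congr' ?_ .rfl
  filter_upwards [preimage_mem_comap self_mem_nhdsWithin] with s hs
  exact (LSeries_discrepancy_mul_log_sq hs).symm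

end Discrepancy

section PartialSums

/-- The partial sum `∑ a n` over `1 ≤ n ≤ x`. -/
noncomputable def partialSum (a : ℕ → ℝ) (x : ℝ) : ℝ := ∑ n ∈ Ioc 0 ⌊x⌋₊, a n

/-- The first-order Riesz mean of `a`, unnormalised: the integral of `partialSum a` over
`[0, x]`. -/
noncomputable def rieszSum (a : ℕ → ℝ) (x : ℝ) : ℝ := ∑ n ∈ Ioc 0 ⌊x⌋₊, a n * (x - n)

end PartialSums

section FejerPerron

open MeasureTheory

/-- The Fejér weight `(1 - u)⁺`, complex-valued so that its Mellin transform can be taken. -/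
noncomputable def fejer (u : ℝ) : ℂ := ((max (1 - u) 0 : ℝ) : ℂ)

/-- The Mellin transform of `fejer`. -/
noncomputable def fejerMellin (s : ℂ) : ℂ := 1 / (s * (s + 1))

lemma fejer_of_le_one {u : ℝ} (hu : u ≤ 1) : fejer u = 1 - u := by
  simp [fejer, hu]

lemma fejer_of_one_le {u : ℝ} (hu : 1 ≤ u) : fejer u = 0 := by
  simp [fejer, hu]

lemma hasMellin_fejer {s : ℂ} (hs : 0 < s.re) : HasMellin fejer s (fejerMellin s) := by
  have hone := hasMellin_one_Ioc hs
  have hid := hasMellin_cpow_Ioc 1 (s := s) (by simp; linarith)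
  have hsub := hasMellin_sub hone.1 hid.1
  have heq : Set.EqOn (fun t : ℝ => (t : ℂ) ^ (s - 1) •
      ((Set.Ioc (0 : ℝ) 1).indicator (fun _ => (1 : ℂ)) t -
        (Set.Ioc (0 : ℝ) 1).indicator (fun t : ℝ => (t : ℂ) ^ (1 : ℂ)) t))
      (fun t : ℝ => (t : ℂ) ^ (s - 1) • fejer t) (Set.Ioi 0) := by
    intro t ht
    rcases le_or_gt t 1 with h | h
    · simp [Set.indicator_of_mem (show t ∈ Set.Ioc (0 : ℝ) 1 from ⟨ht, h⟩), fejer_of_le_one h]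
    · simp [h.not_ge, fejer_of_one_le h.le]
  refine ⟨(integrableOn_congr_fun heq measurableSet_Ioi).1 hsub.1, ?_⟩
  have hs₀ : s ≠ 0 := fun h => by simp [h] at hs
  have hs₁ : s + 1 ≠ 0 := fun h => by
    have := congrArg re h
    simp only [add_re, one_re, zero_re] at this
    linarith
  calc mellin fejer s = 1 / s - 1 / (s + 1) := by
        rw [← hone.2, ← hid.2, ← hsub.2]
        exact (setIntegral_congr_fun measurableSet_Ioi heq).symm
    _ = fejerMellin s := by
        rw [fejerMellin]
        field_simp
        ring

lemma norm_fejerMellin_le {s : ℂ} (hs : 1 ≤ s.re) :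
    ‖fejerMellin s‖ ≤ 2 * (1 + |s.im|) ^ (-2 : ℝ) := by
  have hsq : ‖s‖ ^ 2 = s.re ^ 2 + s.im ^ 2 := by rw [Complex.sq_norm, normSq_apply]; ring
  have hle : ‖s‖ ≤ ‖s + 1‖ := by
    refine le_of_sq_le_sq ?_ (norm_nonneg _)
    rw [hsq, Complex.sq_norm, normSq_apply]
    simp only [add_re, one_re, add_im, one_im]
    nlinarith
  have hlower : (1 + |s.im|) ^ 2 / 2 ≤ ‖s‖ * ‖s + 1‖ := by
    calc (1 + |s.im|) ^ 2 / 2 ≤ ‖s‖ ^ 2 := by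
          rw [hsq]
          nlinarith [sq_abs s.im, sq_nonneg (1 - |s.im|)]
      _ ≤ ‖s‖ * ‖s + 1‖ := by rw [sq]; gcongr
  calc ‖fejerMellin s‖ = 1 / (‖s‖ * ‖s + 1‖) := by rw [fejerMellin, norm_div, norm_one, norm_mul]
    _ ≤ 1 / ((1 + |s.im|) ^ 2 / 2) := by gcongr
    _ = 2 * (1 + |s.im|) ^ (-2 : ℝ) := by
        rw [Real.rpow_neg (by positivity), Real.rpow_two, one_div_div, div_eq_mul_inv]

lemma integrable_one_add_abs_rpow {r : ℝ} (hr : r < -1) :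
    Integrable fun t : ℝ => (1 + |t|) ^ r := by
  simpa using integrable_one_add_norm (E := ℝ) (μ := volume) (r := -r) (by simpa using lt_neg.2 hr)

variable {σ : ℝ}

lemma verticalIntegrable_fejerMellin (hσ : 1 ≤ σ) : VerticalIntegrable fejerMellin σ := by
  have hne (t : ℝ) : ((σ : ℂ) + t * I) * ((σ : ℂ) + t * I + 1) ≠ 0 := by
    refine mul_ne_zero ?_ ?_ <;>
    · intro h
      have := congrArg re h
      simp at this
      linarith
  refine ((integrable_one_add_abs_rpow (r := -2) (by norm_num)).const_mul 2).mono'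
    (continuous_const.div (by fun_prop) hne).aestronglyMeasurable (.of_forall fun t => ?_)
  simpa using norm_fejerMellin_le (s := σ + t * I) (by simpa using hσ)

lemma mellinInv_fejerMellin (hσ : 1 ≤ σ) {u : ℝ} (hu : 0 < u) :
    mellinInv σ fejerMellin u = fejer u := by
  have hline (t : ℝ) : mellin fejer (σ + t * I) = fejerMellin (σ + t * I) :=
    (hasMellin_fejer (by simp; linarith)).2
  rw [← mellinInv_mellin_eq σ fejer hu (hasMellin_fejer (by simp; linarith)).1
    (by simpa only [VerticalIntegrable, hline] using verticalIntegrable_fejerMellin hσ)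
    (by unfold fejer; fun_prop)]
  simp only [mellinInv, hline]

lemma mellinInv_zero (hσ : σ ≠ 0) (f : ℂ → ℂ) : mellinInv σ f 0 = 0 := by
  have hne (t : ℝ) : -((σ : ℂ) + t * I) ≠ 0 := fun h => hσ (by simpa using congrArg re h)
  simp [mellinInv, -neg_add_rev, zero_cpow (hne _)]

lemma continuous_LSeries_term_vertical (a : ℕ → ℂ) (σ : ℝ) (n : ℕ) :
    Continuous fun t : ℝ => LSeries.term a (σ + t * I) n := by
  rcases eq_or_ne n 0 with rfl | hn
  · simpa only [LSeries.term_zero] using continuous_const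
  · have hn' : (n : ℂ) ≠ 0 := by exact_mod_cast hn
    simp only [LSeries.term_of_ne_zero hn]
    exact continuous_const.div ((by fun_prop : Continuous fun t : ℝ => (σ + t * I : ℂ)).const_cpow
      (Or.inl hn')) fun t => cpow_ne_zero_iff.2 (Or.inl hn')

lemma norm_ofReal_cpow_neg_vertical {u : ℝ} (hu : 0 < u) (σ t : ℝ) :
    ‖(u : ℂ) ^ (-(σ + t * I : ℂ))‖ = u ^ (-σ) := by
  rw [norm_cpow_eq_rpow_re_of_pos hu]
  simp

lemma hasSum_mul_mellinInv {a : ℕ → ℂ} {K : ℂ → ℂ} {u : ℝ} (hσ : σ ≠ 0)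
    (ha : LSeriesSummable a σ) (hK : VerticalIntegrable K σ) (hu : 0 < u) :
    HasSum (fun n => a n * mellinInv σ K (n * u)) (mellinInv σ (fun s => LSeries a s * K s) u) := by
  set F : ℕ → ℝ → ℂ := fun n t =>
    LSeries.term a (σ + t * I) n * ((u : ℂ) ^ (-(σ + t * I : ℂ)) * K (σ + t * I)) with hF
  have hnorm_term (n : ℕ) (t : ℝ) :
      ‖LSeries.term a (σ + t * I) n‖ = ‖LSeries.term a (σ : ℂ) n‖ := by
    simp [LSeries.norm_term_eq]
  have hF_norm (n : ℕ) (t : ℝ) :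
      ‖F n t‖ = ‖LSeries.term a (σ : ℂ) n‖ * (u ^ (-σ) * ‖K (σ + t * I)‖) := by
    rw [norm_mul, norm_mul, hnorm_term, norm_ofReal_cpow_neg_vertical hu]
  have hF_int (n : ℕ) : Integrable (F n) :=
    (hK.bdd_mul (((by fun_prop : Continuous fun t : ℝ => -(σ + t * I : ℂ)).const_cpow
      (Or.inl (by exact_mod_cast hu.ne'))).aestronglyMeasurable)
      (.of_forall fun t => (norm_ofReal_cpow_neg_vertical hu σ t).le)).bdd_mul
      (continuous_LSeries_term_vertical a σ n).aestronglyMeasurable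
      (.of_forall fun t => (hnorm_term n t).le)
  have hterm (n : ℕ) : a n * mellinInv σ K (n * u) = (1 / (2 * Real.pi)) • ∫ t, F n t := by
    rcases eq_or_ne n 0 with rfl | hn
    · simp [hF, mellinInv_zero hσ]
    · rw [mellinInv, mul_smul_comm, ← integral_const_mul]
      congr 2
      ext t
      simp only [hF, LSeries.term_of_ne_zero hn, smul_eq_mul]
      rw [ofReal_mul, mul_cpow_ofReal_nonneg n.cast_nonneg hu.le, ofReal_natCast, cpow_neg (n : ℂ)]
      ring
  have hval : mellinInv σ (fun s => LSeries a s * K s) u =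
      (1 / (2 * Real.pi)) • ∫ t, ∑' n, F n t := by
    simp only [hF, tsum_mul_right, mellinInv, smul_eq_mul, LSeries]
    congr 2
    ext t
    ring
  simp only [hterm, hval]
  exact (hasSum_integral_of_summable_integral_norm hF_int (by
    simpa only [hF_norm, integral_const_mul] using ha.norm.mul_right _)).const_smul _

lemma sum_mul_one_sub_div_eq_mellinInv {a : ℕ → ℂ} {X : ℝ} (hσ : 1 ≤ σ) (hX : 0 < X)
    (ha : LSeriesSummable a σ) :
    ∑ n ∈ Ioc 0 ⌊X⌋₊, a n * (1 - n / X) =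
      mellinInv σ (fun s => LSeries a s * fejerMellin s) X⁻¹ := by
  have hσ₀ : σ ≠ 0 := by linarith
  rw [← (hasSum_mul_mellinInv hσ₀ ha (verticalIntegrable_fejerMellin hσ)
    (inv_pos.2 hX)).tsum_eq, tsum_eq_sum (s := Ioc 0 ⌊X⌋₊)]
  · refine sum_congr rfl fun n hn => ?_
    obtain ⟨hn₀, hnX⟩ := mem_Ioc.1 hn
    rw [mellinInv_fejerMellin hσ (by positivity), ← div_eq_mul_inv,
      fejer_of_le_one ((div_le_one hX).2 ((Nat.le_floor_iff hX.le).1 hnX))]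
    push_cast
    rfl
  · intro n hn
    rcases n.eq_zero_or_pos with rfl | hn₀
    · simp [mellinInv_zero hσ₀]
    · have hXn : X < n := (Nat.floor_lt hX.le).1 (by simpa [hn₀] using hn)
      rw [mellinInv_fejerMellin hσ (by positivity), ← div_eq_mul_inv,
        fejer_of_one_le ((one_le_div hX).2 hXn.le), mul_zero]

lemma norm_mellinInv_mul_fejerMellin_le {f : ℂ → ℂ} {r K u : ℝ} (hr : r < 1) (hσ : 1 ≤ σ)
    (hu : 0 < u) (hf : ∀ t : ℝ, ‖f (σ + t * I)‖ ≤ K * (1 + |t|) ^ r) :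
    ‖mellinInv σ (fun s => f s * fejerMellin s) u‖ ≤
      K * u ^ (-σ) * ∫ t : ℝ, (1 + |t|) ^ (r - 2) := by
  have hK : 0 ≤ K := by simpa using (norm_nonneg _).trans (hf 0)
  have : 0 ≤ ∫ t : ℝ, (1 + |t|) ^ (r - 2) := integral_nonneg fun t => by positivity
  rw [mellinInv, norm_smul, Real.norm_of_nonneg (by positivity)]
  calc 1 / (2 * Real.pi) * ‖∫ t : ℝ, (u : ℂ) ^ (-(σ + t * I : ℂ)) •
        (f (σ + t * I) * fejerMellin (σ + t * I))‖
      ≤ 1 / 2 * ∫ t : ℝ, 2 * (K * u ^ (-σ)) * (1 + |t|) ^ (r - 2) := by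
        gcongr
        · linarith [Real.pi_gt_three]
        refine norm_integral_le_of_norm_le
          ((integrable_one_add_abs_rpow (by linarith)).const_mul _) (.of_forall fun t => ?_)
        have hfejer := norm_fejerMellin_le (s := σ + t * I) (by simpa using hσ)
        rw [show (σ + t * I : ℂ).im = t by simp] at hfejer
        rw [norm_smul, norm_mul, norm_ofReal_cpow_neg_vertical hu]
        calc u ^ (-σ) * (‖f (σ + t * I)‖ * ‖fejerMellin (σ + t * I)‖)
            ≤ u ^ (-σ) * (K * (1 + |t|) ^ r * (2 * (1 + |t|) ^ (-2 : ℝ))) := by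
              gcongr
              exact hf t
          _ = 2 * (K * u ^ (-σ)) * (1 + |t|) ^ (r - 2) := by
              rw [sub_eq_add_neg, Real.rpow_add (by positivity)]
              ring
    _ = K * u ^ (-σ) * ∫ t : ℝ, (1 + |t|) ^ (r - 2) := by
        rw [integral_const_mul]
        ring

lemma rpow_one_add_inv_log {X : ℝ} (hX : 1 < X) : X ^ (1 + (Real.log X)⁻¹) = Real.exp 1 * X := by
  have hlog := (Real.log_pos hX).ne'
  rw [Real.rpow_add (by linarith), Real.rpow_one, Real.rpow_def_of_pos (by linarith),
    mul_inv_cancel₀ hlog, mul_comm]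

lemma rieszSum_isBigO_sq {a : ℕ → ℝ} {r : ℝ} (hr : r < 1)
    (ha : ∀ s : ℂ, 1 < s.re → LSeriesSummable (fun n => (a n : ℂ)) s)
    (hL : (LSeries fun n => (a n : ℂ)) =O[comap re (𝓝[>] 1)] fun s => (1 + |s.im|) ^ r) :
    rieszSum a =O[atTop] fun X => X ^ 2 := by
  obtain ⟨K, hK⟩ := hL.bound
  have hσ : Tendsto (fun X : ℝ => 1 + (Real.log X)⁻¹) atTop (𝓝[>] 1) := by
    refine tendsto_nhdsWithin_iff.2 ⟨?_, ?_⟩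
    · simpa using (tendsto_inv_atTop_zero.comp Real.tendsto_log_atTop).const_add 1
    · filter_upwards [eventually_gt_atTop 1] with X hX
      exact lt_add_of_pos_right _ (inv_pos.2 (Real.log_pos hX))
  refine IsBigO.of_bound (K * Real.exp 1 * ∫ t : ℝ, (1 + |t|) ^ (r - 2)) ?_
  filter_upwards [hσ.eventually (eventually_comap.1 hK), eventually_gt_atTop 1] with X hX_bound hX
  have hX₀ : 0 < X := by linarith
  have hσ₁ : 1 < 1 + (Real.log X)⁻¹ := lt_add_of_pos_right _ (inv_pos.2 (Real.log_pos hX))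
  have hbound := norm_mellinInv_mul_fejerMellin_le hr hσ₁.le (inv_pos.2 hX₀) fun t => by
    simpa [abs_of_nonneg (Real.rpow_nonneg (add_nonneg zero_le_one (abs_nonneg t)) r)]
      using hX_bound ((1 + (Real.log X)⁻¹ : ℝ) + t * I) (by simp)
  rw [← sum_mul_one_sub_div_eq_mellinInv hσ₁.le hX₀ (ha _ (by simpa using hσ₁)),
    Real.rpow_neg (inv_nonneg.2 hX₀.le), Real.inv_rpow hX₀.le, inv_inv,
    rpow_one_add_inv_log hX] at hbound
  have hscale : (rieszSum a X : ℂ) =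
      X * ∑ n ∈ Ioc 0 ⌊X⌋₊, (a n : ℂ) * (1 - n / X) := by
    have hX_ne : (X : ℂ) ≠ 0 := by exact_mod_cast hX₀.ne'
    rw [rieszSum, mul_sum, ofReal_sum]
    refine sum_congr rfl fun n _ => ?_
    push_cast
    field_simp
  rw [← norm_real, hscale, norm_mul, norm_real, Real.norm_of_nonneg hX₀.le,
    Real.norm_of_nonneg (sq_nonneg X)]
  calc X * ‖∑ n ∈ Ioc 0 ⌊X⌋₊, (a n : ℂ) * (1 - n / X)‖
      ≤ X * (K * (Real.exp 1 * X) * ∫ t : ℝ, (1 + |t|) ^ (r - 2)) := by gcongr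
    _ = K * Real.exp 1 * (∫ t : ℝ, (1 + |t|) ^ (r - 2)) * X ^ 2 := by ring

end FejerPerron

section Tauberian

variable {a : ℕ → ℝ} {x y : ℝ}

lemma sum_Ioc_floor_add_sum_Ioc_floor (f : ℕ → ℝ) (hxy : x ≤ y) :
    ∑ n ∈ Ioc 0 ⌊x⌋₊, f n + ∑ n ∈ Ioc ⌊x⌋₊ ⌊y⌋₊, f n = ∑ n ∈ Ioc 0 ⌊y⌋₊, f n :=
  sum_Ioc_consecutive f (Nat.zero_le _) (Nat.floor_mono hxy)

lemma sub_mul_partialSum_left (a : ℕ → ℝ) (hxy : x ≤ y) :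
    (y - x) * partialSum a x =
      rieszSum a y - rieszSum a x - ∑ n ∈ Ioc ⌊x⌋₊ ⌊y⌋₊, a n * (y - n) := by
  rw [partialSum, rieszSum, rieszSum, ← sum_Ioc_floor_add_sum_Ioc_floor _ hxy, add_sub_right_comm,
    add_sub_cancel_right, ← sum_sub_distrib, mul_sum]
  exact sum_congr rfl fun n _ => by ring

lemma sub_mul_partialSum_right (a : ℕ → ℝ) (hxy : x ≤ y) :
    (y - x) * partialSum a y =
      rieszSum a y - rieszSum a x + ∑ n ∈ Ioc ⌊x⌋₊ ⌊y⌋₊, a n * (n - x) := by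
  have hsplit : partialSum a y = partialSum a x + ∑ n ∈ Ioc ⌊x⌋₊ ⌊y⌋₊, a n :=
    (sum_Ioc_floor_add_sum_Ioc_floor a hxy).symm
  rw [hsplit, mul_add, sub_mul_partialSum_left a hxy, sub_add, mul_sum, ← sum_sub_distrib,
    sub_eq_add_neg (_ - _), ← sum_neg_distrib]
  congr 1
  exact sum_congr rfl fun n _ => by ring

lemma mem_Ioc_floor_iff (hx : 0 ≤ x) (hy : 0 ≤ y) {n : ℕ} :
    n ∈ Ioc ⌊x⌋₊ ⌊y⌋₊ ↔ x < n ∧ (n : ℝ) ≤ y := by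
  rw [mem_Ioc, Nat.floor_lt hx, Nat.le_floor_iff hy]

lemma neg_le_sum_mul_of_neg_le {w : ℕ → ℝ} {L : ℝ} (hx : 0 ≤ x) (hxy : x ≤ y) (hL : 0 ≤ L)
    (ha : ∀ n ∈ Ioc ⌊x⌋₊ ⌊y⌋₊, -L ≤ a n)
    (hw : ∀ n ∈ Ioc ⌊x⌋₊ ⌊y⌋₊, 0 ≤ w n ∧ w n ≤ y - x) :
    -((y - x) * (y - x + 1) * L) ≤ ∑ n ∈ Ioc ⌊x⌋₊ ⌊y⌋₊, a n * w n := by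
  have : 0 ≤ y - x := sub_nonneg.2 hxy
  have hcard : (#(Ioc ⌊x⌋₊ ⌊y⌋₊) : ℝ) ≤ y - x + 1 := by
    rw [Nat.card_Ioc, Nat.cast_sub (Nat.floor_mono hxy)]
    linarith [Nat.floor_le (hx.trans hxy), Nat.lt_floor_add_one x]
  calc -((y - x) * (y - x + 1) * L) = -((y - x + 1) * (L * (y - x))) := by ring
    _ ≤ -(#(Ioc ⌊x⌋₊ ⌊y⌋₊) * (L * (y - x))) := by gcongr
    _ = ∑ _n ∈ Ioc ⌊x⌋₊ ⌊y⌋₊, -L * (y - x) := by rw [sum_const, nsmul_eq_mul]; ring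
    _ ≤ ∑ n ∈ Ioc ⌊x⌋₊ ⌊y⌋₊, a n * w n := by
        refine sum_le_sum fun n hn => ?_
        obtain ⟨hw₀, hw₁⟩ := hw n hn
        nlinarith [ha n hn]

lemma mul_abs_partialSum_le {h B L : ℝ} (hh : 0 ≤ h) (hhx : h ≤ x) (hL : 0 ≤ L)
    (ha : ∀ n : ℕ, 0 < n → (n : ℝ) ≤ x + h → -L ≤ a n)
    (hB : ∀ z, x - h ≤ z → z ≤ x + h → |rieszSum a z| ≤ B) :
    h * |partialSum a x| ≤ 2 * B + h * (h + 1) * L := by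
  have hright := sub_mul_partialSum_left a (le_add_of_nonneg_right hh : x ≤ x + h)
  have hleft := sub_mul_partialSum_right a (sub_le_self x hh)
  have hsum_right := neg_le_sum_mul_of_neg_le (x := x) (y := x + h) (a := a)
    (w := fun n => x + h - n) (hh.trans hhx) (by linarith) hL
    (fun n hn => ha n (by grind) ((mem_Ioc_floor_iff (by linarith) (by linarith)).1 hn).2)
    fun n hn => by grind [(mem_Ioc_floor_iff (hh.trans hhx) (by linarith)).1 hn]
  have hsum_left := neg_le_sum_mul_of_neg_le (x := x - h) (y := x) (a := a)
    (w := fun n => n - (x - h)) (by linarith) (by linarith) hL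
    (fun n hn => ha n (by grind)
      (by linarith [((mem_Ioc_floor_iff (by linarith) (by linarith)).1 hn).2]))
    fun n hn => by
      grind [(mem_Ioc_floor_iff (x := x - h) (y := x) (by linarith) (by linarith)).1 hn]
  rw [add_sub_cancel_left] at hright hsum_right
  rw [sub_sub_cancel] at hleft hsum_left
  have hB₀ := abs_le.1 (hB (x - h) le_rfl (by linarith))
  have hB₁ := abs_le.1 (hB x (by linarith) (by linarith))
  have hB₂ := abs_le.1 (hB (x + h) (by linarith) le_rfl)
  rw [← abs_of_nonneg hh, ← abs_mul, abs_of_nonneg hh]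
  exact abs_le.2 ⟨by linarith, by linarith⟩

/-- The one-sided bound on `a` costs `O(h ^ 2 log² x)` over a window of length `h`; the choice
`h = x / log x` balances this against the error `O(x ^ 2)` of the Riesz mean. -/
lemma partialSum_isBigO_mul_log (ha : ∀ n : ℕ, -(Real.log n ^ 2) ≤ a n)
    (hR : rieszSum a =O[atTop] fun x => x ^ 2) :
    partialSum a =O[atTop] fun x => x * Real.log x := by
  obtain ⟨C, hC, hbound⟩ := hR.exists_pos
  have hnear := (tendsto_id.atTop_div_const two_pos).eventually
    (eventually_forall_ge_atTop.2 hbound.bound)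
  refine IsBigO.of_bound (8 * C + 8) ?_
  filter_upwards [hnear, Real.tendsto_log_atTop.eventually_ge_atTop 2, eventually_ge_atTop 2]
    with x hnear hlog hx
  set l := Real.log x with hl
  have hlx : l ≤ x := (Real.log_le_sub_one_of_pos (by linarith)).trans (by linarith)
  set h := x / l
  have hhl : h * l = x := div_mul_cancel₀ x (by linarith)
  have hh₁ : 1 ≤ h := (one_le_div (by linarith)).2 hlx
  have hh₂ : h ≤ x / 2 := div_le_div_of_nonneg_left (by linarith) two_pos hlog
  have hneg (n : ℕ) (hn : 0 < n) (hnx : (n : ℝ) ≤ x + h) : -(4 * l ^ 2) ≤ a n := by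
    refine le_trans ?_ (ha n)
    have hlogn : Real.log n ≤ 2 * l := by
      rw [hl, ← Real.log_rpow (by linarith), Real.rpow_two]
      exact Real.log_le_log (by exact_mod_cast hn) (by nlinarith)
    nlinarith [Real.log_natCast_nonneg n]
  have hriesz (z : ℝ) (hz₀ : x - h ≤ z) (hz₁ : z ≤ x + h) : |rieszSum a z| ≤ 4 * C * x ^ 2 := by
    have hz := hnear z (by simp only [id]; linarith)
    rw [Real.norm_eq_abs, Real.norm_of_nonneg (sq_nonneg z)] at hz
    calc |rieszSum a z| ≤ C * z ^ 2 := hz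
      _ ≤ C * (2 * x) ^ 2 := by gcongr <;> linarith
      _ = 4 * C * x ^ 2 := by ring
  rw [Real.norm_eq_abs, Real.norm_of_nonneg (by positivity)]
  refine le_of_mul_le_mul_left ?_ (by linarith : 0 < h)
  calc h * |partialSum a x| ≤ 2 * (4 * C * x ^ 2) + h * (h + 1) * (4 * l ^ 2) :=
        mul_abs_partialSum_le (by linarith) (by linarith) (by positivity) hneg hriesz
    _ ≤ 2 * (4 * C * x ^ 2) + h * (h + h) * (4 * l ^ 2) := by gcongr
    _ = 8 * C * x ^ 2 + 8 * (h * l) ^ 2 := by ring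
    _ = (8 * C + 8) * (x * (h * l)) := by rw [hhl]; ring
    _ = h * ((8 * C + 8) * (x * l)) := by ring

end Tauberian

section RemoveLogWeights

variable {a f : ℕ → ℝ} {M x : ℝ}

lemma log_le_sum_inv (hx : 0 ≤ x) : Real.log x ≤ ∑ k ∈ Ioc 0 ⌊x⌋₊, (k : ℝ)⁻¹ := by
  have h := log_le_harmonic_floor x hx
  rw [harmonic_eq_sum_Icc] at h
  push_cast at h
  exact h

lemma sum_Ioc_floor_div_comm (f : ℕ → ℕ → ℝ) (x : ℝ) :
    ∑ n ∈ Ioc 0 ⌊x⌋₊, ∑ k ∈ Ioc 0 ⌊x / n⌋₊, f n k =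
      ∑ k ∈ Ioc 0 ⌊x⌋₊, ∑ n ∈ Ioc 0 ⌊x / k⌋₊, f n k := by
  have hswap {n k : ℕ} (h : (0 < n ∧ n ≤ ⌊x⌋₊) ∧ 0 < k ∧ k ≤ ⌊x⌋₊ / n) :
      (0 < n ∧ n ≤ ⌊x⌋₊ / k) ∧ 0 < k ∧ k ≤ ⌊x⌋₊ := by
    obtain ⟨⟨hn, -⟩, hk, hkn⟩ := h
    have hmul := (Nat.le_div_iff_mul_le hn).1 hkn
    exact ⟨⟨hn, (Nat.le_div_iff_mul_le hk).2 (by linarith)⟩, hk, by nlinarith⟩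
  refine sum_comm' fun n k => ?_
  simp only [mem_Ioc, Nat.floor_div_natCast]
  exact ⟨hswap, fun h => (hswap h.symm).symm⟩

lemma sum_mul_log_div_le (hf : ∀ n, 0 ≤ f n) (hM : ∀ y, 0 ≤ y → partialSum f y ≤ M * y)
    (hx : 0 ≤ x) :
    ∑ n ∈ Ioc 0 ⌊x⌋₊, f n * Real.log (x / n) ≤ M * (∑' k : ℕ, ((k : ℝ) ^ 2)⁻¹) * x := by
  have hM₀ : 0 ≤ M := by
    simpa using (sum_nonneg fun n _ => hf n).trans (hM 1 zero_le_one)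
  calc ∑ n ∈ Ioc 0 ⌊x⌋₊, f n * Real.log (x / n)
      ≤ ∑ n ∈ Ioc 0 ⌊x⌋₊, ∑ k ∈ Ioc 0 ⌊x / n⌋₊, f n * (k : ℝ)⁻¹ := by
        refine sum_le_sum fun n _ => ?_
        rw [← mul_sum]
        exact mul_le_mul_of_nonneg_left (log_le_sum_inv (by positivity)) (hf n)
    _ = ∑ k ∈ Ioc 0 ⌊x⌋₊, ∑ n ∈ Ioc 0 ⌊x / k⌋₊, f n * (k : ℝ)⁻¹ := sum_Ioc_floor_div_comm _ x
    _ ≤ ∑ k ∈ Ioc 0 ⌊x⌋₊, M * x * ((k : ℝ) ^ 2)⁻¹ := by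
        refine sum_le_sum fun k _ => ?_
        rw [← sum_mul]
        calc partialSum f (x / k) * (k : ℝ)⁻¹ ≤ M * (x / k) * (k : ℝ)⁻¹ := by
              gcongr
              exact hM _ (by positivity)
          _ = M * x * ((k : ℝ) ^ 2)⁻¹ := by ring
    _ = M * x * ∑ k ∈ Ioc 0 ⌊x⌋₊, ((k : ℝ) ^ 2)⁻¹ := by rw [mul_sum]
    _ ≤ M * x * ∑' k : ℕ, ((k : ℝ) ^ 2)⁻¹ := by
        gcongr
        exact (Real.summable_nat_pow_inv.2 one_lt_two).sum_le_tsum _ fun k _ => by positivity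
    _ = M * (∑' k : ℕ, ((k : ℝ) ^ 2)⁻¹) * x := by ring

lemma abs_partialSum_mul_log_sq_sub_le (ha : ∀ n, |a n| ≤ f n)
    (hM : ∀ y, 0 ≤ y → partialSum f y ≤ M * y) (hx : 1 ≤ x) :
    |partialSum a x * Real.log x ^ 2 - partialSum (fun n => a n * Real.log n ^ 2) x| ≤
      2 * Real.log x * (M * (∑' k : ℕ, ((k : ℝ) ^ 2)⁻¹) * x) := by
  have hlog : 0 ≤ Real.log x := Real.log_nonneg hx
  rw [partialSum, partialSum, sum_mul, ← sum_sub_distrib]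
  refine (abs_sum_le_sum_abs _ _).trans (le_trans ?_ (mul_le_mul_of_nonneg_left
    (sum_mul_log_div_le (fun n => (abs_nonneg _).trans (ha n)) hM (by linarith)) (by positivity)))
  rw [mul_sum]
  refine sum_le_sum fun n hn => ?_
  obtain ⟨hn₀, hnx⟩ := mem_Ioc.1 hn
  have hn_pos : (0 : ℝ) < n := by exact_mod_cast hn₀
  have hlogn : 0 ≤ Real.log n := Real.log_natCast_nonneg n
  have hle : Real.log n ≤ Real.log x :=
    Real.log_le_log hn_pos ((Nat.le_floor_iff (by linarith)).1 hnx)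
  have hfac : Real.log x ^ 2 - Real.log n ^ 2 ≤
      2 * Real.log x * (Real.log x - Real.log n) := by nlinarith
  rw [← mul_sub, abs_mul, Real.log_div (by linarith) hn_pos.ne',
    abs_of_nonneg (sub_nonneg.2 (pow_le_pow_left₀ hlogn hle 2))]
  calc |a n| * (Real.log x ^ 2 - Real.log n ^ 2)
      ≤ f n * (2 * Real.log x * (Real.log x - Real.log n)) :=
        mul_le_mul (ha n) hfac (sub_nonneg.2 (pow_le_pow_left₀ hlogn hle 2))
          ((abs_nonneg _).trans (ha n))
    _ = 2 * Real.log x * (f n * (Real.log x - Real.log n)) := by ring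

lemma partialSum_isBigO_div_log (ha : ∀ n, |a n| ≤ f n)
    (hM : ∀ y, 0 ≤ y → partialSum f y ≤ M * y)
    (hlog : partialSum (fun n => a n * Real.log n ^ 2) =O[atTop] fun x => x * Real.log x) :
    partialSum a =O[atTop] fun x => x / Real.log x := by
  have hsub : (fun x => partialSum a x * Real.log x ^ 2
      - partialSum (fun n => a n * Real.log n ^ 2) x) =O[atTop] fun x => x * Real.log x := by
    refine IsBigO.of_bound (2 * (M * ∑' k : ℕ, ((k : ℝ) ^ 2)⁻¹)) ?_
    filter_upwards [eventually_ge_atTop 1] with x hx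
    refine (abs_partialSum_mul_log_sq_sub_le ha hM hx).trans_eq ?_
    rw [Real.norm_of_nonneg (mul_nonneg (by linarith) (Real.log_nonneg hx))]
    ring
  refine ((hsub.add hlog).mul (isBigO_refl (fun x => (Real.log x ^ 2)⁻¹) atTop)).congr' ?_ ?_
  · filter_upwards [eventually_gt_atTop 1] with x hx
    rw [sub_add_cancel, mul_inv_cancel_right₀ (pow_pos (Real.log_pos hx) 2).ne']
  · filter_upwards [eventually_gt_atTop 1] with x hx
    have := (Real.log_pos hx).ne'
    field_simp

end RemoveLogWeights

section PrimesInResidueClass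

open ArithmeticFunction (vonMangoldt vonMangoldt_nonneg)
open ArithmeticFunction.vonMangoldt (residueClass residueClass_nonneg residueClass_le)

variable {q : ℕ} {b : ZMod q} {x : ℝ}

lemma neg_one_le_discrepancy (b : ZMod q) (n : ℕ) : -1 ≤ discrepancy b n := by
  rw [discrepancy]
  linarith [residueClass_nonneg b n, Nat.cast_inv_le_one (α := ℝ) q.totient]

lemma abs_discrepancy_le (b : ZMod q) (n : ℕ) : |discrepancy b n| ≤ vonMangoldt n + 1 := by
  have hle : discrepancy b n ≤ vonMangoldt n :=
    (sub_le_self _ (by positivity)).trans (residueClass_le b n)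
  exact abs_le.2 ⟨by linarith [neg_one_le_discrepancy b n, vonMangoldt_nonneg (n := n)],
    by linarith⟩

lemma partialSum_vonMangoldt_add_one_le (hx : 0 ≤ x) :
    partialSum (fun n => vonMangoldt n + 1) x ≤ (Real.log 4 + 5) * x := by
  rw [partialSum, sum_add_distrib, sum_const, Nat.card_Ioc, nsmul_one, tsub_zero]
  have hψ := Chebyshev.psi_le_const_mul_self hx
  rw [Chebyshev.psi] at hψ
  linarith [Nat.floor_le hx]

lemma partialSum_discrepancy_isBigO [NeZero q] (hb : IsUnit b) :
    partialSum (discrepancy b) =O[atTop] fun x => x / Real.log x := by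
  refine partialSum_isBigO_div_log (abs_discrepancy_le b)
    (fun _ => partialSum_vonMangoldt_add_one_le) (partialSum_isBigO_mul_log (fun n => ?_)
      (rieszSum_isBigO_sq one_half_lt_one (fun _ => LSeriesSummable_discrepancy_mul_log_sq)
        (LSeries_discrepancy_mul_log_sq_isBigO hb one_half_pos)))
  nlinarith [neg_one_le_discrepancy b n, sq_nonneg (Real.log n)]

lemma chebyshevThetaAP_val [NeZero q] (b : ZMod q) (x : ℝ) :
    chebyshevThetaAP x q b.val = ∑ p ∈ Ioc 0 ⌊x⌋₊ with Nat.Prime p, residueClass b p := by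
  have hfilter : (range (⌊x⌋₊ + 1)).filter (fun p => p.Prime ∧ p % q = b.val % q) =
      {p ∈ Ioc 0 ⌊x⌋₊ | p.Prime}.filter (fun p : ℕ => (p : ZMod q) = b) := by
    ext p
    have hres : p % q = b.val % q ↔ (p : ZMod q) = b := by
      rw [← ZMod.natCast_eq_natCast_iff', ZMod.natCast_zmod_val]
    simp only [mem_filter, mem_range, mem_Ioc, hres]
    have hpos : p.Prime → 0 < p := Nat.Prime.pos
    grind
  rw [chebyshevThetaAP, hfilter, sum_filter]
  refine sum_congr rfl fun p hp => ?_
  simp [residueClass, Set.indicator_apply,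
    ArithmeticFunction.vonMangoldt_apply_prime (mem_filter.1 hp).2]

lemma chebyshevThetaAP_val_nonneg [NeZero q] (b : ZMod q) (x : ℝ) :
    0 ≤ chebyshevThetaAP x q b.val := by
  rw [chebyshevThetaAP_val]
  exact sum_nonneg fun p _ => residueClass_nonneg b p

lemma chebyshevThetaAP_val_le [NeZero q] (b : ZMod q) (x : ℝ) :
    chebyshevThetaAP x q b.val ≤ Chebyshev.psi x := by
  rw [chebyshevThetaAP_val, Chebyshev.psi]
  exact (sum_le_sum fun p _ => residueClass_le b p).trans
    (sum_le_sum_of_subset_of_nonneg (filter_subset _ _) fun _ _ _ => vonMangoldt_nonneg)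

lemma abs_partialSum_residueClass_sub_chebyshevThetaAP_le [NeZero q] (b : ZMod q) (x : ℝ) :
    |partialSum (residueClass b) x - chebyshevThetaAP x q b.val| ≤
      Chebyshev.psi x - Chebyshev.theta x := by
  have hsplit : partialSum (residueClass b) x - chebyshevThetaAP x q b.val =
      ∑ n ∈ Ioc 0 ⌊x⌋₊ with ¬ n.Prime, residueClass b n := by
    rw [partialSum, ← sum_filter_add_sum_filter_not (Ioc 0 ⌊x⌋₊) Nat.Prime, chebyshevThetaAP_val,
      add_sub_cancel_left]
  rw [hsplit, abs_of_nonneg (sum_nonneg fun n _ => residueClass_nonneg b n),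
    Chebyshev.psi_sub_theta_eq_sum_not_prime]
  exact sum_le_sum fun n _ => residueClass_le b n

lemma log_isBigO_sqrt : Real.log =O[atTop] Real.sqrt :=
  (isLittleO_log_rpow_atTop one_half_pos).isBigO.congr_right fun x => (Real.sqrt_eq_rpow x).symm

lemma sqrt_isBigO_div_log : Real.sqrt =O[atTop] fun x => x / Real.log x := by
  refine (((isBigO_refl Real.sqrt atTop).mul log_isBigO_sqrt).mul
    (isBigO_refl (fun x => (Real.log x)⁻¹) atTop)).congr' ?_ ?_
  · filter_upwards [eventually_gt_atTop 1] with x hx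
    rw [mul_inv_cancel_right₀ (Real.log_pos hx).ne']
  · filter_upwards [eventually_ge_atTop 0] with x hx
    rw [Real.mul_self_sqrt hx, div_eq_mul_inv]

lemma one_isBigO_div_log : (fun _ => (1 : ℝ)) =O[atTop] fun x => x / Real.log x :=
  ((isLittleO_const_left.2 (Or.inr (tendsto_norm_atTop_atTop.comp Real.tendsto_sqrt_atTop))).isBigO
    ).trans sqrt_isBigO_div_log

lemma partialSum_discrepancy (b : ZMod q) (x : ℝ) :
    partialSum (discrepancy b) x = partialSum (residueClass b) x - ⌊x⌋₊ / q.totient := by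
  simp [partialSum, discrepancy, div_eq_mul_inv]

lemma floor_div_sub_div_isBigO_one (q : ℕ) :
    (fun x : ℝ => (⌊x⌋₊ / q.totient - x / q.totient : ℝ)) =O[atTop] fun _ => (1 : ℝ) := by
  refine IsBigO.of_bound 1 ?_
  filter_upwards [eventually_ge_atTop 0] with x hx
  have hfloor : |(⌊x⌋₊ : ℝ) - x| ≤ 1 :=
    abs_le.2 ⟨by linarith [Nat.lt_floor_add_one x], by linarith [Nat.floor_le hx]⟩
  rw [← sub_div, div_eq_mul_inv, norm_one, norm_mul, norm_inv, Real.norm_natCast]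
  exact mul_le_mul hfloor (Nat.cast_inv_le_one _) (by positivity) zero_le_one

lemma chebyshevThetaAP_sub_isBigO [NeZero q] (hb : IsUnit b) :
    (fun x => chebyshevThetaAP x q b.val - x / q.totient) =O[atTop] fun x => x / Real.log x := by
  have hprime : (fun x => partialSum (residueClass b) x - chebyshevThetaAP x q b.val)
      =O[atTop] Real.sqrt :=
    (IsBigO.of_norm_le (abs_partialSum_residueClass_sub_chebyshevThetaAP_le b)).trans
      Chebyshev.isBigO_psi_sub_theta_sqrt
  refine (((partialSum_discrepancy_isBigO hb).sub (hprime.trans sqrt_isBigO_div_log)).add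
    ((floor_div_sub_div_isBigO_one q).trans one_isBigO_div_log)).congr_left fun x => ?_
  rw [partialSum_discrepancy]
  ring

lemma abs_chebyshevThetaAP_sub_le [NeZero q] (b : ZMod q) (hx : 0 ≤ x) :
    |chebyshevThetaAP x q b.val - x / q.totient| ≤ (Real.log 4 + 5) * x := by
  have hdiv : x / q.totient ≤ x := by
    simpa [div_eq_mul_inv] using mul_le_mul_of_nonneg_left (Nat.cast_inv_le_one q.totient) hx
  have hdiv₀ : 0 ≤ x / q.totient := by positivity
  have hθ := (chebyshevThetaAP_val_le b x).trans (Chebyshev.psi_le_const_mul_self hx)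
  have hlog : 0 ≤ Real.log 4 * x := mul_nonneg (Real.log_nonneg (by norm_num)) hx
  exact abs_le.2 ⟨by linarith [chebyshevThetaAP_val_nonneg b x], by linarith⟩

lemma exists_forall_abs_le_div_log {f : ℝ → ℝ} {B : ℝ}
    (hf : f =O[atTop] fun x => x / Real.log x) (hB : ∀ x, 1 < x → |f x| ≤ B * x) :
    ∃ C, ∀ x, 1 < x → |f x| ≤ C * (x / Real.log x) := by
  obtain ⟨C, hC⟩ := hf.bound
  obtain ⟨M, hM⟩ := eventually_atTop.1 hC
  refine ⟨max C (B * Real.log M), fun x hx => ?_⟩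
  have hlog := Real.log_pos hx
  have hxlog : 0 ≤ x / Real.log x := by positivity
  rcases le_total M x with h | h
  · refine (hM x h).trans ?_
    rw [Real.norm_of_nonneg hxlog]
    gcongr
    exact le_max_left _ _
  · have hB₀ : 0 ≤ B := nonneg_of_mul_nonneg_left ((abs_nonneg _).trans (hB x hx)) (by linarith)
    calc |f x| ≤ B * x := hB x hx
      _ = B * Real.log x * (x / Real.log x) := by field_simp
      _ ≤ B * Real.log M * (x / Real.log x) := by gcongr
      _ ≤ max C (B * Real.log M) * (x / Real.log x) := by
        gcongr
        exact le_max_right _ _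

lemma exists_forall_abs_chebyshevThetaAP_sub_le [NeZero q] (hb : IsUnit b) :
    ∃ C, ∀ x, 1 < x → |chebyshevThetaAP x q b.val - x / q.totient| ≤ C * (x / Real.log x) :=
  exists_forall_abs_le_div_log (chebyshevThetaAP_sub_isBigO hb) fun _ hx =>
    abs_chebyshevThetaAP_sub_le b (by linarith)

lemma chebyshevThetaAP_mod (x : ℝ) (q n : ℕ) :
    chebyshevThetaAP x q (n % q) = chebyshevThetaAP x q n := by
  simp only [chebyshevThetaAP, Nat.mod_mod]

end PrimesInResidueClass

end PrimesInAP

theorem exists_theta_AP_bound_general (q : ℕ) [NeZero q] :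
    ∃ c : ℝ, 0 < c ∧ ∀ n : ℕ, n.Coprime q → ∀ x : ℝ, 1 < x →
      |chebyshevThetaAP x q n - x / q.totient| < c * x / Real.log x := by
  choose C hC using fun b : (ZMod q)ˣ =>
    PrimesInAP.exists_forall_abs_chebyshevThetaAP_sub_le b.isUnit
  obtain ⟨c, hc⟩ := Finite.exists_le C
  refine ⟨max c 0 + 1, by positivity, fun n hn x hx => ?_⟩
  have hxlog : 0 < x / Real.log x := div_pos (by linarith) (Real.log_pos hx)
  have hbound := hC (ZMod.unitOfCoprime n hn) x hx
  rw [ZMod.coe_unitOfCoprime, ZMod.val_natCast, PrimesInAP.chebyshevThetaAP_mod] at hbound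
  rw [mul_div_assoc]
  refine hbound.trans_lt (mul_lt_mul_of_pos_right ?_ hxlog)
  linarith [hc (ZMod.unitOfCoprime n hn), le_max_left c 0]

/-- For each integer `2 ≤ a ≤ 316` there exist constants `c > 0` and
`x₀ ≤ 4.81·10^9` such that for every integer `n` co-prime to `a` and every real
`x ≥ x₀`, `|θ(x; a², n) − x/φ(a²)| < c x / log x`. -/
theorem exists_theta_AP_bound (a : ℕ) (ha2 : 2 ≤ a) (ha : a ≤ 316) :
    ∃ c x₀ : ℝ, 0 < c ∧ x₀ ≤ 4.81 * 10 ^ 9 ∧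
      ∀ n : ℕ, Nat.gcd n a = 1 → ∀ x : ℝ, x₀ ≤ x →
        |chebyshevThetaAP x (a ^ 2) n - x / (Nat.totient (a ^ 2))| <
          c * x / Real.log x := by
  have : NeZero (a ^ 2) := ⟨by positivity⟩
  obtain ⟨c, hc, hbound⟩ := exists_theta_AP_bound_general (a ^ 2)
  exact ⟨c, 2, hc, by norm_num, fun n hn x hx =>
    hbound n (Nat.Coprime.pow_right 2 hn) x (by linarith)⟩
end
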